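/- arXiv:math/0303086 — 3 statements merged into one kernel-verified Lean document; each statement's English description precedes it below -/
import Mathlib

section
/- Let (R,m) be a non-Gorenstein Noetherian local ring containing its residue field k, with m³ = (0), m² ≠ (0), and type r, admitting a nonfree finitely generated module of G-dimension zero. Then R is a Koszul algebra under its induced graded structure, and the Betti numbers of k satisfy dim_k Tor_i^R(k,k) = 1 + r + r² + ⋯ + r^i for all i ≥ 0; equivalently the Poincaré series of R is 1/((1−t)(1−rt)). -/
open CategoryTheory

noncomputable abbrev ExtGrp (R : Type) [CommRing R] (M N : Type) [AddCommGroup M] [Module R M]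
    [AddCommGroup N] [Module R N] (i : ℕ) : Type :=
  ((Ext R (ModuleCat R) i).obj (Opposite.op (ModuleCat.of R M))).obj (ModuleCat.of R N)

/-- G-dimension zero. -/
def GDimZero (R : Type) [CommRing R] (M : Type) [AddCommGroup M] [Module R M] : Prop :=
  Function.Bijective (Module.Dual.eval R M) ∧
  (∀ i : ℕ, 0 < i → Subsingleton (ExtGrp R M R i)) ∧
  (∀ i : ℕ, 0 < i → Subsingleton (ExtGrp R (Module.Dual R M) R i))

/-- finite self-injective dimension -/
def HasFiniteSelfInjDim (R : Type) [CommRing R] : Prop :=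
  ∃ n : ℕ, ∀ (N : ModuleCat R) (i : ℕ), n < i →
    Subsingleton (((Ext R (ModuleCat R) i).obj (Opposite.op N)).obj (ModuleCat.of R R))

/-- Gorenstein local ring -/
def IsGorensteinLocalRing (R : Type) [CommRing R] : Prop :=
  IsNoetherianRing R ∧ IsLocalRing R ∧ HasFiniteSelfInjDim R

/-- length of a module, as Krull dimension of its submodule lattice -/
noncomputable def mlength (R : Type) [CommRing R] (M : Type) [AddCommGroup M] [Module R M] :
    WithBot ℕ∞ :=
  Order.krullDim (Submodule R M)

lemma ext_exact {R : Type} [CommRing R] {X : ModuleCat.{0} R} (P : ProjectiveResolution X)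
    (Y : ModuleCat.{0} R) (n : ℕ) :
    Subsingleton (((Ext R (ModuleCat.{0} R) (n+1)).obj (Opposite.op X)).obj Y) ↔
    ∀ f : P.complex.X (n+1) ⟶ Y, P.complex.d (n+2) (n+1) ≫ f = 0 →
      ∃ g : P.complex.X n ⟶ Y, P.complex.d (n+1) n ≫ g = f := by
  rw [← ModuleCat.isZero_iff_subsingleton, (P.isoExt (R := R) (n+1) Y).isZero_iff,
    ← HomologicalComplex.exactAt_iff_isZero_homology,
    HomologicalComplex.exactAt_iff' _ n (n+1) (n+2) (by simp) (by simp),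
    ShortComplex.moduleCat_exact_iff]
  rfl

lemma inj_finite {R : Type} [CommRing R] (h : Module.Injective R R) :
    ∃ n : ℕ, ∀ (N : ModuleCat R) (i : ℕ), n < i →
    Subsingleton (((Ext R (ModuleCat R) i).obj (Opposite.op N)).obj (ModuleCat.of R R)) := by
  refine ⟨0, fun N i hi => ?_⟩
  obtain ⟨i, rfl⟩ : ∃ j, i = j + 1 := ⟨i - 1, by omega⟩
  rw [ext_exact (projectiveResolution N)]
  intro f hf
  have := Module.injective_object_of_injective_module (R := R) (M := R)
  exact ⟨((projectiveResolution N).exact_succ i).descToInjective f hf,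
    ((projectiveResolution N).exact_succ i).comp_descToInjective f hf⟩

section
variable {R : Type} [CommRing R] (n : ℕ → ℕ)
  (d : ∀ i : ℕ, (Fin (n (i + 1)) → R) →ₗ[R] (Fin (n i) → R)) (M : ModuleCat.{0} R)
  (π : (Fin (n 0) → R) →ₗ[R] M)

noncomputable def resC (hd : ∀ i, LinearMap.range (d (i+1)) = LinearMap.ker (d i)) :
    ChainComplex (ModuleCat.{0} R) ℕ :=
  ChainComplex.of (fun i => ModuleCat.of R (Fin (n i) → R)) (fun i => ModuleCat.ofHom (d i))
    (fun i => ModuleCat.hom_ext (LinearMap.ext fun x => (hd i).le ⟨x, rfl⟩))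

lemma resC_d (hd : ∀ i, LinearMap.range (d (i+1)) = LinearMap.ker (d i)) (i : ℕ) :
    (resC n d hd).d (i+1) i = ModuleCat.ofHom (d i) :=
  ChainComplex.of_d (fun i => ModuleCat.of R (Fin (n i) → R)) (fun i => ModuleCat.ofHom (d i)) i

lemma resC_exact (hd : ∀ i, LinearMap.range (d (i+1)) = LinearMap.ker (d i)) (i : ℕ) :
    (resC n d hd).ExactAt (i+1) := by
  rw [HomologicalComplex.exactAt_iff' _ (i + 1 + 1) (i + 1) i (by simp) (by simp),
    ShortComplex.moduleCat_exact_iff]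
  intro x hx
  change (resC n d hd).d (i+1) i x = 0 at hx
  change ∃ y, (resC n d hd).d (i+2) (i+1) y = x
  rw [resC_d] at hx
  rw [resC_d n d hd (i+1)]
  exact (hd i).ge hx

lemma resC_w (hd : ∀ i, LinearMap.range (d (i+1)) = LinearMap.ker (d i))
    (h0 : LinearMap.range (d 0) = LinearMap.ker π) :
    (resC n d hd).d 1 0 ≫ (ModuleCat.ofHom π : (resC n d hd).X 0 ⟶ M) = 0 := by
  rw [resC_d n d hd 0]
  exact ModuleCat.hom_ext (LinearMap.ext fun x => h0.le ⟨x, rfl⟩)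

noncomputable def resP (hd : ∀ i, LinearMap.range (d (i+1)) = LinearMap.ker (d i)) 
    (h0 : LinearMap.range (d 0) = LinearMap.ker π) (hπ : Function.Surjective π) :
    ProjectiveResolution M where
  complex := resC n d hd
  projective i := by
    change Projective (ModuleCat.of R (Fin (n i) → R))
    infer_instance
  π := (ChainComplex.toSingle₀Equiv _ _).symm ⟨ModuleCat.ofHom π, resC_w n d M π hd h0⟩
  quasiIso := ⟨fun i => by
    have hw := resC_w n d M π hd h0
    cases i
    · rw [ChainComplex.quasiIsoAt₀_iff, ShortComplex.quasiIso_iff_of_zeros']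
      · constructor
        · rw [ShortComplex.moduleCat_exact_iff]
          intro x hx
          change ∃ y, (resC n d hd).d 1 0 y = x
          rw [resC_d n d hd 0]
          refine h0.ge ?_
          have e : ((ChainComplex.toSingle₀Equiv (resC n d hd) M).symm
            ⟨ModuleCat.ofHom π, hw⟩).f 0 = ModuleCat.ofHom π :=
            ChainComplex.toSingle₀Equiv_symm_apply_f_zero ..
          change (((ChainComplex.toSingle₀Equiv (resC n d hd) M).symm
            ⟨ModuleCat.ofHom π, hw⟩).f 0) x = 0 at hx
          rw [e] at hx
          exact hx
        · rw [ModuleCat.epi_iff_surjective]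
          have e : ((ChainComplex.toSingle₀Equiv (resC n d hd) M).symm
            ⟨ModuleCat.ofHom π, hw⟩).f 0 = ModuleCat.ofHom π :=
            ChainComplex.toSingle₀Equiv_symm_apply_f_zero ..
          change Function.Surjective (((ChainComplex.toSingle₀Equiv (resC n d hd) M).symm
            ⟨ModuleCat.ofHom π, hw⟩).f 0)
          rw [e]
          exact hπ
      all_goals rfl
    · rw [quasiIsoAt_iff_exactAt']
      · apply resC_exact
      · apply ChainComplex.exactAt_succ_single_obj⟩

lemma dual_exact (hd : ∀ i, LinearMap.range (d (i+1)) = LinearMap.ker (d i)) 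
    (h0 : LinearMap.range (d 0) = LinearMap.ker π) (hπ : Function.Surjective π)
    (hE : ∀ i : ℕ, 0 < i → Subsingleton
      (((Ext R (ModuleCat.{0} R) i).obj (Opposite.op M)).obj (ModuleCat.of R R)))
    (i : ℕ) (f : (Fin (n (i+1)) → R) →ₗ[R] R) (hf : f ∘ₗ d (i+1) = 0) :
    ∃ g : (Fin (n i) → R) →ₗ[R] R, g ∘ₗ d i = f := by
  have := hE (i+1) (by omega)
  rw [ext_exact (resP n d M π hd h0 hπ)] at this
  obtain ⟨g, hg⟩ := this (ModuleCat.ofHom f) (by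
    change (resC n d hd).d _ _ ≫ _ = 0
    rw [resC_d n d hd (i+1)]
    exact ModuleCat.hom_ext hf)
  change (resC n d hd).d _ _ ≫ _ = _ at hg
  rw [resC_d n d hd i] at hg
  exact ⟨g.hom, congrArg ModuleCat.Hom.hom hg⟩
end

section partB
variable {k R : Type} [Field k] [CommRing R] [IsLocalRing R] [Algebra k R]

local notation "𝔪" => IsLocalRing.maximalIdeal R

lemma dec_res (hres : Function.Bijective
      ((Ideal.Quotient.mk (IsLocalRing.maximalIdeal R)).comp (algebraMap k R))) (x : R) :
    ∃ c : k, x - algebraMap k R c ∈ 𝔪 := by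
  obtain ⟨c, hc⟩ := hres.2 (Ideal.Quotient.mk _ x)
  refine ⟨c, ?_⟩
  rw [← Ideal.Quotient.eq]
  exact hc.symm

lemma alg_mem_zero {c : k} (h : algebraMap k R c ∈ 𝔪) : c = 0 := by
  by_contra hc
  exact (IsLocalRing.mem_maximalIdeal _).1 h ((IsUnit.mk0 c hc).map (algebraMap k R))

lemma m3_zero (hm3 : (IsLocalRing.maximalIdeal R) ^ 3 = ⊥) {a b : R} (ha : a ∈ 𝔪)
    (hb : b ∈ 𝔪 ^ 2) : a * b = 0 := by
  have : a * b ∈ 𝔪 ^ 3 := by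
    rw [pow_succ' 𝔪 2]
    exact Ideal.mul_mem_mul ha hb
  rw [hm3] at this
  simpa using this

lemma m2_mem {a b : R} (ha : a ∈ 𝔪) (hb : b ∈ 𝔪) : a * b ∈ 𝔪 ^ 2 := by
  rw [pow_two]
  exact Ideal.mul_mem_mul ha hb

/-- a `k`-linear map killing and killed by the maximal ideal is `R`-linear -/
def toR (hres : Function.Bijective
      ((Ideal.Quotient.mk (IsLocalRing.maximalIdeal R)).comp (algebraMap k R)))
    {A B : Type} [AddCommGroup A] [AddCommGroup B] [Module k A] [Module k B] [Module R A]
    [Module R B] [IsScalarTower k R A] [IsScalarTower k R B] (f : A →ₗ[k] B)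
    (h1 : ∀ a ∈ 𝔪, ∀ x, f (a • x) = 0) (h2 : ∀ a ∈ 𝔪, ∀ x, a • f x = 0) : A →ₗ[R] B :=
  { f with
    map_smul' := by
      intro r x
      obtain ⟨c, hc⟩ := dec_res hres r
      have e : r = algebraMap k R c + (r - algebraMap k R c) := by ring
      change f (r • x) = r • f x
      rw [e, add_smul, add_smul, map_add, h1 _ hc, h2 _ hc, algebraMap_smul, algebraMap_smul,
        map_smul] }

lemma fg_step (hres : Function.Bijective
      ((Ideal.Quotient.mk (IsLocalRing.maximalIdeal R)).comp (algebraMap k R)))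
    (I : Ideal R) (hI : I.FG) (h : ((𝔪 * I).restrictScalars k).FG) :
    (I.restrictScalars k).FG := by
  obtain ⟨S, hS⟩ := hI
  have : I.restrictScalars k = Submodule.span k (S : Set R) ⊔ (𝔪 * I).restrictScalars k := by
    apply le_antisymm
    · intro x hx
      rw [Submodule.restrictScalars_mem, ← hS] at hx
      induction hx using Submodule.span_induction with
      | mem x h => exact Submodule.mem_sup_left (Submodule.subset_span h)
      | zero => exact zero_mem _
      | add x y _ _ hx hy => exact add_mem hx hy
      | smul a x hx' hx =>
        obtain ⟨c, hc⟩ := dec_res hres a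
        have e : a • x = c • x + (a - algebraMap k R c) * x := by
          rw [Algebra.smul_def c x, smul_eq_mul]; ring
        rw [e]
        refine add_mem (Submodule.smul_mem _ _ hx) (Submodule.mem_sup_right ?_)
        rw [← hS]
        exact Ideal.mul_mem_mul hc hx'
    · refine sup_le ?_ ?_
      · rw [Submodule.span_le]
        intro x hx
        have : x ∈ Ideal.span (S : Set R) := Ideal.subset_span hx
        rw [hS] at this
        exact this
      · intro x hx
        have hx' : x ∈ 𝔪 * I := hx
        exact (Ideal.mul_le_right (I := 𝔪) (J := I)) hx'
  rw [this]
  exact (Submodule.fg_span S.finite_toSet).sup h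

lemma finite_kR [IsNoetherianRing R] (hres : Function.Bijective
      ((Ideal.Quotient.mk (IsLocalRing.maximalIdeal R)).comp (algebraMap k R)))
    (hm3 : (IsLocalRing.maximalIdeal R) ^ 3 = ⊥) : Module.Finite k R := by
  have h3 : ((𝔪 ^ 3).restrictScalars k).FG := by
    rw [hm3, Submodule.restrictScalars_bot]; exact Submodule.fg_bot
  have h2 : ((𝔪 ^ 2).restrictScalars k).FG := by
    refine fg_step hres _ (IsNoetherian.noetherian _) ?_
    rwa [← pow_succ']
  have h1 : (Submodule.restrictScalars k 𝔪).FG := by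
    refine fg_step hres _ (IsNoetherian.noetherian _) ?_
    rwa [← pow_two]
  have h0 : ((⊤ : Ideal R).restrictScalars k).FG := by
    refine fg_step hres _ (IsNoetherian.noetherian _) ?_
    rwa [Ideal.mul_top]
  exact ⟨by simpa using h0⟩

lemma baer_of_ext [IsNoetherianRing R] (hm3 : (IsLocalRing.maximalIdeal R) ^ 3 = ⊥)
    (hQ : ∀ f : 𝔪 →ₗ[R] R, ∃ c, ∀ a : 𝔪, f a = a * c) : Module.Injective R R := by
  apply Module.Baer.injective
  intro I
  induction I using IsNoetherian.induction with
  | hgt I ih =>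
  intro g
  by_cases hI : I = ⊤
  · subst hI
    exact ⟨g ∘ₗ LinearMap.id.codRestrict ⊤ (fun _ => trivial), fun x hx => rfl⟩
  have hy : ∃ y, y ∉ I ∧ ∀ a ∈ 𝔪, a * y ∈ I := by
    by_cases h2 : 𝔪 ^ 2 ≤ I
    · by_cases h1 : 𝔪 ≤ I
      · refine ⟨1, fun h => hI ((Ideal.eq_top_iff_one _).2 h), fun a ha => by simpa using h1 ha⟩
      · obtain ⟨y, hy, hyI⟩ := SetLike.not_le_iff_exists.1 h1
        exact ⟨y, hyI, fun a ha => h2 (m2_mem ha hy)⟩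
    · obtain ⟨y, hy, hyI⟩ := SetLike.not_le_iff_exists.1 h2
      exact ⟨y, hyI, fun a ha => by rw [m3_zero hm3 ha hy]; exact zero_mem _⟩
  obtain ⟨y, hyI, hy⟩ := hy
  have hmem : ∀ a : R, a * y ∈ I → a ∈ 𝔪 := by
    intro a ha
    by_contra h
    have hu : IsUnit a := by simpa using h
    exact hyI ((Ideal.unit_mul_mem_iff_mem I hu).1 ha)
  obtain ⟨c, hc⟩ := hQ (g ∘ₗ ((LinearMap.mulRight R y).comp (Submodule.subtype 𝔪)).codRestrict I
    (fun a => hy a a.2))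
  have hc' : ∀ (a : R) (h : a * y ∈ I), g ⟨a * y, h⟩ = a * c := fun a h =>
    hc ⟨a, hmem a h⟩
  let p1 : R →ₗ.[R] R := ⟨I, g⟩
  let p2 : R →ₗ.[R] R := LinearPMap.mkSpanSingleton' y c (by
    intro a ha
    have h0 : a * y = 0 := ha
    have : a * y ∈ I := by rw [h0]; exact zero_mem _
    have := hc' a this
    change a * c = 0
    rw [← this]
    convert map_zero g
    exact h0)
  have hag : ∀ (x : p1.domain) (z : p2.domain), (x : R) = z → p1 x = p2 z := by
    rintro ⟨x, hx⟩ ⟨z, hz⟩ h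
    obtain ⟨a, rfl⟩ := Submodule.mem_span_singleton.1 hz
    simp only at h
    subst h
    rw [LinearPMap.mkSpanSingleton'_apply]
    exact hc' a hx
  have hlt : I < (p1.sup p2 hag).domain := by
    rw [LinearPMap.domain_sup]
    refine lt_of_le_of_ne le_sup_left ?_
    intro h
    apply hyI
    rw [h]
    exact Submodule.mem_sup_right (Submodule.mem_span_singleton_self y)
  obtain ⟨g', hg'⟩ := ih _ hlt (p1.sup p2 hag).toFun
  refine ⟨g', fun x hx => ?_⟩
  rw [hg' x (hlt.le hx)]
  have := (LinearPMap.left_le_sup p1 p2 hag).2 (x := ⟨x, hx⟩) (y := ⟨x, hlt.le hx⟩) rfl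
  exact this.symm

lemma ext_of_type_one [IsNoetherianRing R] (hres : Function.Bijective
      ((Ideal.Quotient.mk (IsLocalRing.maximalIdeal R)).comp (algebraMap k R)))
    (hm3 : (IsLocalRing.maximalIdeal R) ^ 3 = ⊥)
    (hsoc : ∀ x : R, (∀ a ∈ 𝔪, a * x = 0) → x ∈ 𝔪 ^ 2)
    (h1 : Module.finrank k ((𝔪 ^ 2 : Ideal R)) = 1) :
    ∀ f : 𝔪 →ₗ[R] R, ∃ c, ∀ a : 𝔪, f a = a * c := by
  have := finite_kR hres hm3
  obtain ⟨⟨s, hs⟩, hs0, hsp⟩ := finrank_eq_one_iff'.1 h1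
  have hs0' : s ≠ 0 := fun h => hs0 (by simpa using h)
  obtain ⟨l, hl⟩ : ∃ l : Module.Dual k R, l s ≠ 0 := by
    by_contra! h
    exact hs0' ((Module.forall_dual_apply_eq_zero_iff k s).1 h)
  have key : ∀ z : R, (∀ b, l (b * z) = 0) → z = 0 := by
    intro z hz
    by_contra hz0
    have : ∃ b, b * z ≠ 0 ∧ ∀ a ∈ 𝔪, a * (b * z) = 0 := by
      by_cases h : ∀ a ∈ 𝔪, a * z = 0
      · exact ⟨1, by simpa using hz0, by simpa using h⟩
      push Not at h
      obtain ⟨a, ha, haz⟩ := h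
      by_cases h : ∀ b ∈ 𝔪, b * (a * z) = 0
      · exact ⟨a, haz, h⟩
      push Not at h
      obtain ⟨b, hb, hbz⟩ := h
      refine ⟨b * a, by rwa [mul_assoc], fun c hc => ?_⟩
      rw [← mul_assoc, m3_zero hm3 hc (m2_mem hb ha), zero_mul]
    obtain ⟨b, hb0, hb⟩ := this
    obtain ⟨c, hc⟩ := hsp ⟨b * z, hsoc _ hb⟩
    have hc' : c • s = b * z := congrArg Subtype.val hc
    have := hz b
    rw [← hc', map_smul, smul_eq_mul, mul_eq_zero] at this
    rcases this with h | h
    · apply hb0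
      rw [← hc', h, zero_smul]
    · exact hl h
  let Φ : R →ₗ[k] Module.Dual k R := (LinearMap.mul k R).compr₂ l
  have hΦ : Function.Surjective Φ := by
    rw [← LinearMap.injective_iff_surjective_of_finrank_eq_finrank
      (Subspace.dual_finrank_eq (K := k) (V := R)).symm, injective_iff_map_eq_zero]
    intro z hz
    apply key
    intro b
    rw [mul_comm]
    exact LinearMap.congr_fun hz b
  intro f
  obtain ⟨μ, hμ⟩ := LinearMap.exists_extend (p := Submodule.restrictScalars k 𝔪)
    (l ∘ₗ (f.restrictScalars k))
  obtain ⟨c, hc⟩ := hΦ μ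
  refine ⟨c, fun a => ?_⟩
  rw [← sub_eq_zero]
  apply key
  intro b
  have e1 : b * (f a - a * c) = f (b • a) - c * (b * a) := by
    rw [map_smul, smul_eq_mul]; ring
  rw [e1, map_sub, sub_eq_zero]
  have e2 : μ (b * a) = l (f (b • a)) := LinearMap.congr_fun hμ (b • a)
  rw [← e2, ← hc]
  rfl
end partB

/-- every map from the maximal ideal to the ring is a multiplication -/
def QExt (R : Type) [CommRing R] [IsLocalRing R] : Prop :=
  ∀ f : (IsLocalRing.maximalIdeal R) →ₗ[R] R, ∃ c : R,
    ∀ a : (IsLocalRing.maximalIdeal R), f a = a * c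

section partC
variable {R : Type} [CommRing R]

/-- vectors with entries in an ideal -/
def PI (I : Ideal R) (ι : Type) : Submodule R (ι → R) := Submodule.pi Set.univ (fun _ => I)

lemma mem_PI {I : Ideal R} {ι : Type} {v : ι → R} : v ∈ PI I ι ↔ ∀ i, v i ∈ I := by
  simp [PI, Submodule.mem_pi]

lemma smul_PI {ι : Type} [Finite ι] (I J : Ideal R) : I • PI J ι = PI (I * J) ι := by
  classical
  have := Fintype.ofFinite ι
  apply le_antisymm
  · rw [Submodule.smul_le]
    intro a ha v hv
    rw [mem_PI] at *
    exact fun i => Ideal.mul_mem_mul ha (hv i)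
  · intro v hv
    rw [mem_PI] at hv
    rw [← Finset.univ_sum_single v]
    refine Submodule.sum_mem _ fun i _ => ?_
    have h : ∀ x ∈ I * J, (Pi.single i x : ι → R) ∈ I • PI J ι := by
      intro x hx
      induction hx using Submodule.mul_induction_on' with
      | mem_mul_mem a ha b hb =>
        have : (Pi.single i (a * b) : ι → R) = a • Pi.single i b := by
          rw [← Pi.single_smul]; rfl
        rw [this]
        refine Submodule.smul_mem_smul ha (mem_PI.2 fun j => ?_)
        by_cases hj : j = i
        · subst hj; simpa using hb
        · simp [hj]
      | add x _ y _ hx hy => rw [Pi.single_add]; exact add_mem hx hy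
    exact h _ (hv i)

lemma PI_top {ι : Type} : PI (⊤ : Ideal R) ι = ⊤ := by
  ext; simp [mem_PI]

lemma smul_top_PI {ι : Type} [Finite ι] (I : Ideal R) :
    I • (⊤ : Submodule R (ι → R)) = PI I ι := by
  rw [← PI_top, smul_PI, Ideal.mul_top]

lemma map_PI {ι κ : Type} [Finite ι] [Finite κ] (f : (ι → R) →ₗ[R] (κ → R)) (I : Ideal R) :
    (PI I ι).map f = I • LinearMap.range f := by
  rw [← smul_top_PI, Submodule.map_smul'', Submodule.map_top]

lemma apply_mem_PI {ι κ : Type} [Finite ι] [Finite κ] (f : (ι → R) →ₗ[R] (κ → R)) {I J : Ideal R}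
    (hf : LinearMap.range f ≤ PI J κ) {v : ι → R} (hv : v ∈ PI I ι) : f v ∈ PI (I * J) κ := by
  rw [← smul_PI]
  refine Submodule.smul_mono (le_refl I) hf ?_
  rw [← map_PI]
  exact ⟨v, hv, rfl⟩

lemma finrank_PI (k : Type) [Field k] [Algebra k R] (I : Ideal R) (b : ℕ) [Module.Finite k R] :
    Module.finrank k (PI I (Fin b)) = b * Module.finrank k I := by
  let e : PI I (Fin b) ≃ₗ[k] (Fin b → I) :=
    { toFun := fun v i => ⟨v.1 i, mem_PI.1 v.2 i⟩
      invFun := fun w => ⟨fun i => w i, mem_PI.2 fun i => (w i).2⟩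
      map_add' := fun _ _ => rfl
      map_smul' := fun _ _ => rfl
      left_inv := fun _ => rfl
      right_inv := fun _ => rfl }
  have : Module.Finite k I :=
    inferInstanceAs (Module.Finite k (Submodule.restrictScalars k I))
  rw [e.finrank_eq, Module.finrank_pi_fintype]
  simp

variable [IsLocalRing R]
local notation "𝔪" => IsLocalRing.maximalIdeal R

lemma exists_phi {X : Type} [AddCommGroup X] [Module R X] (x : X)
    (hx : x ∉ 𝔪 • (⊤ : Submodule R X)) : ∃ φ : X →ₗ[R] R ⧸ 𝔪, φ x = 1 := by
  let := Ideal.Quotient.field 𝔪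
  have h0 : (Submodule.Quotient.mk x : X ⧸ (𝔪 • (⊤ : Submodule R X))) ≠ 0 := by
    rwa [Ne, Submodule.Quotient.mk_eq_zero]
  obtain ⟨l, hl⟩ : ∃ l : Module.Dual (R ⧸ 𝔪) (X ⧸ (𝔪 • (⊤ : Submodule R X))),
      l (Submodule.Quotient.mk x) ≠ 0 := by
    by_contra! h
    exact h0 ((Module.forall_dual_apply_eq_zero_iff (R ⧸ 𝔪) _).1 h)
  refine ⟨(((l (Submodule.Quotient.mk x))⁻¹ • l).restrictScalars R) ∘ₗ Submodule.mkQ _, ?_⟩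
  change (l (Submodule.Quotient.mk x))⁻¹ * l (Submodule.Quotient.mk x) = 1
  exact inv_mul_cancel₀ hl

lemma soc_general {F X : Type} [AddCommGroup F] [Module R F] [AddCommGroup X] [Module R X]
    [Module.Projective R F] (p : F →ₗ[R] X) (hp : Function.Surjective p)
    (hext : ∀ f : LinearMap.ker p →ₗ[R] R, ∃ g : F →ₗ[R] R, ∀ y : LinearMap.ker p, g y = f y)
    (x : X) (hx : ∀ a ∈ 𝔪, a • x = 0) (hx' : x ∉ 𝔪 • (⊤ : Submodule R X)) :
    QExt R := by
  intro f
  obtain ⟨φ, hφ⟩ := exists_phi x hx'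
  obtain ⟨ψ, hψ⟩ := Module.projective_lifting_property (Submodule.mkQ 𝔪) (φ ∘ₗ p)
    (Submodule.mkQ_surjective _)
  obtain ⟨z, rfl⟩ := hp x
  have hψ' : ∀ y, Ideal.Quotient.mk 𝔪 (ψ y) = φ (p y) := fun y => LinearMap.congr_fun hψ y
  have hu : IsUnit (ψ z) := by
    by_contra h
    have h1 := hψ' z
    rw [Ideal.Quotient.eq_zero_iff_mem.2 ((IsLocalRing.mem_maximalIdeal _).2 h), hφ] at h1
    exact zero_ne_one h1
  obtain ⟨g, hg⟩ := hext (f ∘ₗ (ψ ∘ₗ (LinearMap.ker p).subtype).codRestrict 𝔪 (by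
    intro y
    apply Ideal.Quotient.eq_zero_iff_mem.1
    have h1 := hψ' y
    rw [LinearMap.mem_ker.1 y.2, map_zero] at h1
    exact h1))
  obtain ⟨u, hu⟩ := hu
  refine ⟨g z * ↑u⁻¹, fun a => ?_⟩
  have hk : (a : R) • z ∈ LinearMap.ker p := by
    rw [LinearMap.mem_ker, map_smul]; exact hx a a.2
  have h2 : g ((a : R) • z) = f (ψ z • a) := by
    rw [hg ⟨_, hk⟩]
    change f _ = f _
    congr 1
    apply Subtype.ext
    change ψ ((a : R) • z) = ψ z * a
    rw [map_smul, smul_eq_mul, mul_comm]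
  rw [map_smul, map_smul, smul_eq_mul, smul_eq_mul, ← hu] at h2
  rw [← mul_assoc, h2]
  rw [mul_comm (u : R), mul_assoc, Units.mul_inv, mul_one]
end partC

/-- A minimal complex of free modules which is exact, with exact dual. -/
structure Tower (R : Type) [CommRing R] [IsLocalRing R] where
  n : ℕ → ℕ
  d : ∀ i, (Fin (n (i+1)) → R) →ₗ[R] (Fin (n i) → R)
  D : ∀ i, (Fin (n i) → R) →ₗ[R] (Fin (n (i+1)) → R)
  hd : ∀ i, LinearMap.range (d (i+1)) = LinearMap.ker (d i)
  hD : ∀ i, LinearMap.range (D i) = LinearMap.ker (D (i+1))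
  adj : ∀ i w v, w ⬝ᵥ d i v = D i w ⬝ᵥ v
  hdm : ∀ i, LinearMap.range (d i) ≤ PI (IsLocalRing.maximalIdeal R) _
  hDm : ∀ i, LinearMap.range (D i) ≤ PI (IsLocalRing.maximalIdeal R) _
  hpos : 0 < n 1

namespace Tower
variable {R : Type} [CommRing R] [IsLocalRing R] (T : Tower R)
local notation "𝔪" => IsLocalRing.maximalIdeal R

/-- the cover of the kernel -/
def cov (i : ℕ) : (Fin (T.n (i+2)) → R) →ₗ[R] LinearMap.ker (T.d i) :=
  (T.d (i+1)).codRestrict _ (fun v => (T.hd i).le ⟨v, rfl⟩)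

lemma cov_surj (i : ℕ) : Function.Surjective (T.cov i) := by
  rintro ⟨x, hx⟩
  obtain ⟨v, hv⟩ := (T.hd i).ge hx
  exact ⟨v, Subtype.ext hv⟩

lemma ker_cov (i : ℕ) : LinearMap.ker (T.cov i) = LinearMap.ker (T.d (i+1)) :=
  LinearMap.ker_codRestrict _ _ _

lemma dot_ext {ι : Type} [Fintype ι] (f : (ι → R) →ₗ[R] R) : ∃ w : ι → R, ∀ v, f v = w ⬝ᵥ v := by
  classical
  refine ⟨fun i => f (Pi.single i 1), fun v => ?_⟩
  rw [LinearMap.pi_apply_eq_sum_univ f v]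
  simp only [dotProduct, smul_eq_mul]
  refine Finset.sum_congr rfl fun i _ => ?_
  rw [mul_comm]
  congr 2
  funext j
  simp [Pi.single_apply, eq_comm]

lemma dot_eq {ι : Type} [Fintype ι] {v w : ι → R} (h : ∀ u, v ⬝ᵥ u = w ⬝ᵥ u) : v = w :=
  dotProduct_eq v w h

lemma ext_prop (i : ℕ) (f : LinearMap.ker (T.cov i) →ₗ[R] R) :
    ∃ g : (Fin (T.n (i+2)) → R) →ₗ[R] R, ∀ y : LinearMap.ker (T.cov i), g y = f y := by
  let q : (Fin (T.n (i+3)) → R) →ₗ[R] LinearMap.ker (T.cov i) :=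
    (T.d (i+2)).codRestrict _ (fun v => by rw [ker_cov]; exact (T.hd (i+1)).le ⟨v, rfl⟩)
  obtain ⟨w, hw⟩ := dot_ext (f ∘ₗ q)
  have hker : w ∈ LinearMap.ker (T.D (i+3)) := by
    rw [LinearMap.mem_ker]
    apply dot_eq
    intro u
    rw [← T.adj, ← hw, zero_dotProduct]
    change f (q _) = 0
    have : q (T.d (i+3) u) = 0 := Subtype.ext ((T.hd (i+2)).le ⟨u, rfl⟩)
    rw [this, map_zero]
  rw [← T.hD] at hker
  obtain ⟨g, rfl⟩ := hker
  refine ⟨LinearMap.mk ⟨fun v => g ⬝ᵥ v, fun a b => dotProduct_add g a b⟩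
    (fun c v => dotProduct_smul c g v), ?_⟩
  rintro ⟨y, hy⟩
  rw [ker_cov, ← T.hd] at hy
  obtain ⟨v, rfl⟩ := hy
  change g ⬝ᵥ _ = _
  rw [T.adj, ← hw]
  rfl

lemma soc (hQ : ¬ QExt R) (i : ℕ) (x : LinearMap.ker (T.d i)) (hx : ∀ a ∈ 𝔪, a • x = 0) :
    x ∈ 𝔪 • (⊤ : Submodule R (LinearMap.ker (T.d i))) := by
  by_contra h
  exact hQ (soc_general (T.cov i) (T.cov_surj i) (T.ext_prop i) x hx h)

lemma mem_smul_sub {M : Type} [AddCommGroup M] [Module R M] (N : Submodule R M) (I : Ideal R)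
    (x : N) : x ∈ I • (⊤ : Submodule R N) ↔ (x : M) ∈ I • N := by
  have : (I • (⊤ : Submodule R N)).map N.subtype = I • N := by
    rw [Submodule.map_smul'', Submodule.map_top, Submodule.range_subtype]
  rw [← this]
  constructor
  · intro h; exact ⟨x, h, rfl⟩
  · rintro ⟨y, hy, h⟩
    rwa [← Subtype.ext h]

lemma soc_R (T : Tower R) (hQ : ¬ QExt R) (x : R) (hx : ∀ a ∈ 𝔪, a * x = 0) : x ∈ 𝔪 ^ 2 := by
  classical
  let j : Fin (T.n 1) := ⟨0, T.hpos⟩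
  let v : Fin (T.n 1) → R := x • Pi.single j 1
  have hv : v ∈ LinearMap.ker (T.d 0) := by
    rw [LinearMap.mem_ker, map_smul]
    have := T.hdm 0 ⟨Pi.single j 1, rfl⟩
    rw [mem_PI] at this
    funext i
    change x * _ = 0
    rw [mul_comm]
    exact hx _ (this i)
  have h1 := T.soc hQ 0 ⟨v, hv⟩ (by
    intro a ha
    apply Subtype.ext
    change a • x • _ = 0
    rw [smul_smul, hx a ha, zero_smul])
  rw [mem_smul_sub] at h1
  change v ∈ _ at h1
  rw [← T.hd] at h1
  have h2 := Submodule.smul_mono (le_refl 𝔪) (T.hdm 1) h1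
  rw [smul_PI, mem_PI] at h2
  have := h2 j
  simpa [v, pow_two] using this

lemma smul_ker (hQ : ¬ QExt R) (hm3 : (IsLocalRing.maximalIdeal R) ^ 3 = ⊥) 
    (i : ℕ) : 𝔪 • LinearMap.ker (T.d i) = PI (𝔪 ^ 2) _ := by
  apply le_antisymm
  · rw [← T.hd, pow_two, ← smul_PI]
    exact Submodule.smul_mono le_rfl (T.hdm _)
  · intro v hv
    have hk : v ∈ LinearMap.ker (T.d i) := by
      have := apply_mem_PI (T.d i) (T.hdm i) hv
      rw [← pow_succ, hm3, mem_PI] at this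
      rw [LinearMap.mem_ker]
      funext j
      simpa using this j
    refine (mem_smul_sub _ _ ⟨v, hk⟩).1 (T.soc hQ i ⟨v, hk⟩ ?_)
    intro a ha
    apply Subtype.ext
    funext j
    exact m3_zero hm3 ha (mem_PI.1 hv j)

lemma smul_rangeD (hQ : ¬ QExt R) (hm3 : (IsLocalRing.maximalIdeal R) ^ 3 = ⊥) 
    (hm2 : (IsLocalRing.maximalIdeal R) ^ 2 ≠ ⊥) (i : ℕ) :
    𝔪 • LinearMap.range (T.D (i+1)) = PI (𝔪 ^ 2) _ := by
  apply le_antisymm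
  · rw [pow_two, ← smul_PI]
    exact Submodule.smul_mono le_rfl (T.hDm _)
  · intro g hg
    by_contra hgn
    have hk : g ∈ LinearMap.range (T.D (i+1)) := by
      rw [T.hD]
      have := apply_mem_PI (T.D (i+2)) (T.hDm (i+2)) hg
      rw [← pow_succ, hm3, mem_PI] at this
      rw [LinearMap.mem_ker]
      funext j
      simpa using this j
    obtain ⟨φ, hφ⟩ := exists_phi (X := LinearMap.range (T.D (i+1))) ⟨g, hk⟩
      (fun h => hgn ((mem_smul_sub _ _ _).1 h))
    obtain ⟨s, hs, hs0⟩ := Submodule.exists_mem_ne_zero_of_ne_bot hm2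
    apply hs0
    let σ : (R ⧸ 𝔪) →ₗ[R] R := Submodule.liftQ 𝔪 (LinearMap.toSpanSingleton R R s) (by
      intro a ha
      exact m3_zero hm3 ha hs)
    have hσ : ∀ y, σ y ∈ 𝔪 ^ 2 := by
      intro y
      obtain ⟨y, rfl⟩ := Ideal.Quotient.mk_surjective y
      exact Ideal.mul_mem_left _ y hs
    obtain ⟨w, hw⟩ := dot_ext (σ ∘ₗ φ ∘ₗ (T.D (i+1)).rangeRestrict)
    have hw2 : w ∈ PI (𝔪 ^ 2) _ := by
      rw [mem_PI]
      intro j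
      classical
      have := hw (Pi.single j 1)
      rw [dotProduct_single, mul_one] at this
      rw [← this]
      exact hσ _
    rw [← T.smul_ker hQ hm3 i, ← T.hd, ← map_PI] at hw2
    obtain ⟨v, hv, rfl⟩ := hw2
    obtain ⟨h, rfl⟩ := hk
    have e1 := hw h
    have e2 : (σ ∘ₗ φ ∘ₗ (T.D (i+1)).rangeRestrict) h = s := by
      change σ (φ _) = s
      have : (T.D (i+1)).rangeRestrict h = ⟨T.D (i+1) h, ⟨h, rfl⟩⟩ := rfl
      rw [this, hφ]
      change 1 * s = s
      rw [one_mul]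
    rw [e2, dotProduct_comm, T.adj, dotProduct] at e1
    rw [e1]
    refine Finset.sum_eq_zero fun j _ => ?_
    rw [mul_comm]
    exact m3_zero hm3 (mem_PI.1 hv j) (mem_PI.1 hg j)

end Tower

section partD
variable {k R : Type} [Field k] [CommRing R] [IsLocalRing R] [Algebra k R]
local notation "𝔪" => IsLocalRing.maximalIdeal R

lemma finrank_R_eq [Module.Finite k R] (hres : Function.Bijective
      ((Ideal.Quotient.mk (IsLocalRing.maximalIdeal R)).comp (algebraMap k R))) :
    Module.finrank k R = 1 + Module.finrank k 𝔪 := by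
  have e : k ≃ₗ[k] (R ⧸ 𝔪) := LinearEquiv.ofBijective
    ((Ideal.Quotient.mkₐ k 𝔪).toLinearMap ∘ₗ Algebra.linearMap k R) hres
  have h := Submodule.finrank_quotient_add_finrank (Submodule.restrictScalars k 𝔪)
  rw [← h]
  congr 1
  rw [← Module.finrank_self k, e.finrank_eq]
  rfl

lemma len_ker_range [Module.Finite k R] {a b : ℕ} (f : (Fin a → R) →ₗ[R] (Fin b → R)) :
    a * Module.finrank k R = Module.finrank k (LinearMap.range f) +
      Module.finrank k (LinearMap.ker f) := by
  have h := LinearMap.finrank_range_add_finrank_ker (f.restrictScalars k)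
  rw [Module.finrank_pi_fintype] at h
  simp only [Finset.sum_const, Finset.card_univ, Fintype.card_fin, smul_eq_mul] at h
  rw [← h]
  rfl

lemma len_mker [Module.Finite k R] {a b : ℕ} (f : (Fin a → R) →ₗ[R] (Fin b → R))
    (hk : LinearMap.ker f ≤ PI 𝔪 _) (hr : 𝔪 • LinearMap.range f = PI (𝔪 ^ 2) _) :
    a * Module.finrank k 𝔪 = b * Module.finrank k ((𝔪 ^ 2 : Ideal R)) +
      Module.finrank k (LinearMap.ker f) := by
  rw [← map_PI] at hr
  let g : PI 𝔪 (Fin a) →ₗ[R] (Fin b → R) := f ∘ₗ (PI 𝔪 (Fin a)).subtype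
  have : Module.Finite k (PI 𝔪 (Fin a)) :=
    inferInstanceAs (Module.Finite k (Submodule.restrictScalars k (PI 𝔪 (Fin a))))
  have h := LinearMap.finrank_range_add_finrank_ker (g.restrictScalars k)
  have e1 : LinearMap.range (g.restrictScalars k) =
      (PI (𝔪 ^ 2) (Fin b)).restrictScalars k := by
    rw [← hr]
    ext x
    simp [g]
  have e2 : Module.finrank k (LinearMap.ker (g.restrictScalars k)) =
      Module.finrank k (LinearMap.ker f) := by
    let e : LinearMap.ker (g.restrictScalars k) ≃ₗ[k] LinearMap.ker f :=
      { toFun := fun v => ⟨v.1.1, v.2⟩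
        invFun := fun w => ⟨⟨w.1, hk w.2⟩, w.2⟩
        map_add' := fun _ _ => rfl
        map_smul' := fun _ _ => rfl
        left_inv := fun _ => rfl
        right_inv := fun _ => rfl }
    exact e.finrank_eq
  rw [e1, e2] at h
  have h' : Module.finrank k (PI (𝔪 ^ 2) (Fin b)) + Module.finrank k (LinearMap.ker f) =
    Module.finrank k (PI 𝔪 (Fin a)) := h
  rw [finrank_PI, finrank_PI] at h'
  exact h'.symm

namespace Tower
lemma numerics [IsNoetherianRing R] (T : Tower R) (hQ : ¬ QExt R)
    (hres : Function.Bijective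
      ((Ideal.Quotient.mk (IsLocalRing.maximalIdeal R)).comp (algebraMap k R)))
    (hm3 : (IsLocalRing.maximalIdeal R) ^ 3 = ⊥)
    (hm2 : (IsLocalRing.maximalIdeal R) ^ 2 ≠ ⊥) :
    ∀ i, T.n (i+1) = T.n 1 := by
  have := finite_kR hres hm3
  set μ := Module.finrank k 𝔪 with hμ
  set r := Module.finrank k ((𝔪 ^ 2 : Ideal R)) with hr
  have hr1 : r ≠ 1 := fun h => hQ (ext_of_type_one hres hm3 (T.soc_R hQ) h)
  have hr0 : r ≠ 0 := by
    intro h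
    have : Module.Finite k ((𝔪 ^ 2 : Ideal R)) :=
      inferInstanceAs (Module.Finite k (Submodule.restrictScalars k (𝔪 ^ 2 : Ideal R)))
    have hs := Module.finrank_zero_iff.1 h
    apply hm2
    rw [eq_bot_iff]
    intro x hx
    have : (⟨x, hx⟩ : (𝔪 ^ 2 : Ideal R)) = 0 := Subsingleton.elim _ _
    simpa using congrArg Subtype.val this
  have hR := finrank_R_eq hres
  rw [← hμ] at hR
  have k1 : ∀ i, LinearMap.ker (T.d i) ≤ PI 𝔪 _ := fun i => by rw [← T.hd]; exact T.hdm _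
  have k2 : ∀ i, LinearMap.ker (T.D (i+1)) ≤ PI 𝔪 _ := fun i => by rw [← T.hD]; exact T.hDm _
  have a1 : ∀ i, T.n (i+2) * μ = T.n (i+1) * r + T.n (i+3) + T.n (i+2) * r := by
    intro i
    have h1 := len_mker (k := k) (T.d (i+1)) (k1 _) (by rw [T.hd]; exact T.smul_ker hQ hm3 i)
    have h2 := len_mker (k := k) (T.d (i+2)) (k1 _) (by rw [T.hd]; exact T.smul_ker hQ hm3 (i+1))
    have h3 := len_ker_range (k := k) (T.d (i+2))
    rw [T.hd] at h3
    rw [hR] at h3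
    rw [← hμ, ← hr] at h1 h2
    have e1 : i + 1 + 1 = i + 2 := rfl
    have e2 : i + 2 + 1 = i + 3 := rfl
    simp only [e1, e2] at *
    nlinarith
  have a2 : ∀ i, T.n (i+2) * μ = T.n (i+3) * r + T.n (i+1) + T.n (i+2) * r := by
    intro i
    have h1 := len_mker (k := k) (T.D (i+1)) (k2 _) (T.smul_rangeD hQ hm3 hm2 i)
    have h2 := len_mker (k := k) (T.D (i+2)) (k2 _) (T.smul_rangeD hQ hm3 hm2 (i+1))
    have h3 := len_ker_range (k := k) (T.D (i+1))
    rw [T.hD] at h3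
    rw [hR] at h3
    rw [← hμ, ← hr] at h1 h2
    have e1 : i + 1 + 1 = i + 2 := rfl
    have e2 : i + 2 + 1 = i + 3 := rfl
    simp only [e1, e2] at *
    nlinarith
  have a3 : ∀ i, T.n (i+3) = T.n (i+1) := by
    intro i
    have h1 := a1 i
    have h2 := a2 i
    have h3 : ((r : ℤ) - 1) * ((T.n (i+3) : ℤ) - T.n (i+1)) = 0 := by
      zify at h1 h2
      linarith
    rcases mul_eq_zero.1 h3 with h | h
    · omega
    · omega
  intro i
  induction i with
  | zero => rfl
  | succ i ih =>
    have hp : 0 < T.n (i+1) := ih ▸ T.hpos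
    rw [← ih]
    have b1 := a1 i
    have b2 := a1 (i+1)
    have b3 := a3 i
    have b4 := a3 (i+1)
    have e1 : i + 1 + 1 = i + 2 := rfl
    have e2 : i + 1 + 2 = i + 3 := rfl
    have e3 : i + 1 + 3 = i + 4 := rfl
    simp only [e1, e2, e3] at *
    rw [b3] at b1 b2
    rw [b4] at b2
    zify at *
    set x : ℤ := ((T.n (i+1) : ℕ) : ℤ) with hx
    set y : ℤ := ((T.n (i+2) : ℕ) : ℤ) with hy0
    have c1 : y * (μ - r) = (1 + r) * x := by linarith
    have c2 : x * (μ - r) = (1 + r) * y := by linarith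
    have c3 : ((μ : ℤ) - r) ≠ 0 := by
      intro h
      rw [h] at c1
      have : 0 < (1 + (r:ℤ)) * x := by positivity
      linarith
    have hy : 0 ≤ y := by positivity
    have c4 : ((μ : ℤ) - r) * ((y - x) * (y + x)) = 0 := by
      linear_combination y * c1 - x * c2
    rcases mul_eq_zero.1 c4 with h | h
    · exact absurd h c3
    rcases mul_eq_zero.1 h with h | h <;> linarith
end Tower
end partD

section partE
variable {R : Type} [CommRing R] [IsLocalRing R]
local notation "𝔪" => IsLocalRing.maximalIdeal R

/-- minimal cover -/
def IsCover {F X : Type} [AddCommGroup F] [Module R F] [AddCommGroup X] [Module R X]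
    (p : F →ₗ[R] X) : Prop :=
  Function.Surjective p ∧ LinearMap.ker p ≤ 𝔪 • (⊤ : Submodule R F)

lemma smul_top_map {F X : Type} [AddCommGroup F] [Module R F] [AddCommGroup X] [Module R X]
    (p : F →ₗ[R] X) (I : Ideal R) {x : F} (hx : x ∈ I • (⊤ : Submodule R F)) :
    p x ∈ I • (⊤ : Submodule R X) := by
  have : p x ∈ (I • (⊤ : Submodule R F)).map p := ⟨x, hx, rfl⟩
  rw [Submodule.map_smul''] at this
  exact Submodule.smul_mono le_rfl le_top this

lemma smul_top_lift {F X : Type} [AddCommGroup F] [Module R F] [AddCommGroup X] [Module R X]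
    (p : F →ₗ[R] X) (hp : Function.Surjective p) (I : Ideal R) {y : X}
    (hy : y ∈ I • (⊤ : Submodule R X)) : ∃ x ∈ I • (⊤ : Submodule R F), p x = y := by
  have : (I • (⊤ : Submodule R F)).map p = I • (⊤ : Submodule R X) := by
    rw [Submodule.map_smul'', Submodule.map_top, LinearMap.range_eq_top.2 hp]
  rw [← this] at hy
  exact hy

lemma nak_surj {A B : Type} [AddCommGroup A] [Module R A] [AddCommGroup B] [Module R B]
    [Module.Finite R B] (f : A →ₗ[R] B)
    (h : ∀ y, ∃ x, y - f x ∈ 𝔪 • (⊤ : Submodule R B)) : Function.Surjective f := by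
  rw [← LinearMap.range_eq_top, eq_top_iff]
  refine Submodule.le_of_le_smul_of_le_jacobson_bot (I := 𝔪) Module.Finite.fg_top
    (IsLocalRing.maximalIdeal_le_jacobson _) ?_
  intro y _
  obtain ⟨x, hx⟩ := h y
  rw [← sub_add_cancel y (f x), add_comm]
  exact Submodule.add_mem_sup ⟨x, rfl⟩ hx

lemma cover_surj {F F' X : Type} [AddCommGroup F] [Module R F] [AddCommGroup F'] [Module R F']
    [AddCommGroup X] [Module R X] [Module.Finite R F'] (p : F →ₗ[R] X) (p' : F' →ₗ[R] X)
    (hp : Function.Surjective p) (hp' : IsCover p') (φ : F →ₗ[R] F') (hφ : p' ∘ₗ φ = p) :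
    Function.Surjective φ := by
  apply nak_surj
  intro y
  obtain ⟨x, hx⟩ := hp (p' y)
  refine ⟨x, hp'.2 ?_⟩
  rw [LinearMap.mem_ker, map_sub, ← LinearMap.comp_apply, hφ, hx, sub_self]

lemma cover_unique {F F' X : Type} [AddCommGroup F] [Module R F] [AddCommGroup F'] [Module R F']
    [AddCommGroup X] [Module R X] [Module.Finite R F'] [Module.Finite R F]
    [Module.Free R F] [Module.Free R F'] (p : F →ₗ[R] X) (p' : F' →ₗ[R] X)
    (hp : IsCover p) (hp' : IsCover p') : ∃ e : F ≃ₗ[R] F', ∀ x, p' (e x) = p x := by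
  obtain ⟨φ, hφ⟩ := Module.projective_lifting_property p' p hp'.1
  obtain ⟨ψ, hψ⟩ := Module.projective_lifting_property p p' hp.1
  have h1 := cover_surj p p' hp.1 hp' φ hφ
  have h2 := cover_surj p' p hp'.1 hp ψ hψ
  have h3 : Function.Injective (ψ ∘ₗ φ) :=
    OrzechProperty.injective_of_surjective_endomorphism _ (h2.comp h1)
  have h4 : Function.Injective φ := by
    have : Function.Injective (ψ ∘ φ) := h3
    exact this.of_comp
  exact ⟨LinearEquiv.ofBijective φ ⟨h4, h1⟩, fun x => LinearMap.congr_fun hφ x⟩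

lemma cover_step [IsNoetherianRing R] {X N N' G G' : Type} [AddCommGroup X] [Module R X]
    [AddCommGroup N] [Module R N] [AddCommGroup N'] [Module R N']
    [AddCommGroup G] [Module R G] [AddCommGroup G'] [Module R G']
    [Module.Finite R G] [Module.Free R G] [Module.Finite R G'] [Module.Free R G']
    (ι : X →ₗ[R] N) (q : N →ₗ[R] N') (hι : Function.Injective ι) (hq : Function.Surjective q)
    (hex : ∀ y, q y = 0 ↔ ∃ x, ι x = y)
    (hm : ∀ x, ι x ∈ 𝔪 • (⊤ : Submodule R N) → x ∈ 𝔪 • (⊤ : Submodule R X))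
    (p : G →ₗ[R] N) (p' : G' →ₗ[R] N') (hp : IsCover p) (hp' : IsCover p') :
    ∃ h : G →ₗ[R] G', Function.Surjective h ∧
      (∀ (I : Ideal R) (f : LinearMap.ker h), (f : G) ∈ I • (⊤ : Submodule R G) →
        f ∈ I • (⊤ : Submodule R (LinearMap.ker h))) ∧
      Module.Free R (LinearMap.ker h) ∧
      Module.finrank R G = Module.finrank R G' + Module.finrank R (LinearMap.ker h) ∧
      (∀ g, p g = 0 → p' (h g) = 0) ∧
      (∀ z, p' z = 0 → ∃ g, p g = 0 ∧ h g = z) ∧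
      ∃ pF : LinearMap.ker h →ₗ[R] X, (∀ f, ι (pF f) = p f) ∧ IsCover pF := by
  obtain ⟨h, hh⟩ := Module.projective_lifting_property p' (q ∘ₗ p) hp'.1
  have hh' : ∀ g, p' (h g) = q (p g) := fun g => LinearMap.congr_fun hh g
  have hs := cover_surj (q ∘ₗ p) p' (hq.comp hp.1) hp' h hh
  obtain ⟨s, hs'⟩ := Module.projective_lifting_property h LinearMap.id hs
  have hs'' : ∀ g, h (s g) = g := fun g => LinearMap.congr_fun hs' g
  let ρ : G →ₗ[R] LinearMap.ker h := (LinearMap.id - s ∘ₗ h).codRestrict _ (fun g => by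
    rw [LinearMap.mem_ker]
    simp [hs''])
  have hρ : ∀ f : LinearMap.ker h, ρ f = f := fun f => Subtype.ext (by
    change (f : G) - s (h f) = f
    rw [LinearMap.mem_ker.1 f.2, map_zero, sub_zero])
  have : Module.Projective R (LinearMap.ker h) :=
    Module.Projective.of_split (LinearMap.ker h).subtype ρ (LinearMap.ext hρ)
  have hfree : Module.Free R (LinearMap.ker h) := Module.free_of_flat_of_isLocalRing
  let e : G ≃ₗ[R] G' × LinearMap.ker h :=
    { toFun := fun g => (h g, ρ g)
      invFun := fun y => s y.1 + y.2
      map_add' := fun a b => by simp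
      map_smul' := fun a b => by simp
      left_inv := fun g => by
        change s (h g) + (g - s (h g)) = g
        abel
      right_inv := fun y => by
        ext
        · simp [hs'']
        · change ((s y.1 + y.2 : G) - s (h (s y.1 + y.2)) : G) = y.2
          rw [map_add, hs'', LinearMap.mem_ker.1 y.2.2, add_zero]
          abel }
  have hI : ∀ (I : Ideal R) (f : LinearMap.ker h), (f : G) ∈ I • (⊤ : Submodule R G) →
        f ∈ I • (⊤ : Submodule R (LinearMap.ker h)) := by
    intro I f hf
    rw [← hρ f]
    exact smul_top_map ρ I hf
  let eX : X ≃ₗ[R] LinearMap.range ι := LinearEquiv.ofInjective ι hι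
  have hNfin : Module.Finite R N := Module.Finite.of_surjective p hp.1
  have hXfin : Module.Finite R X := Module.Finite.of_injective ι hι
  let pF : LinearMap.ker h →ₗ[R] X := eX.symm.toLinearMap ∘ₗ
    (p ∘ₗ (LinearMap.ker h).subtype).codRestrict (LinearMap.range ι) (fun f => by
      apply (hex _).1
      change q (p f) = 0
      rw [← hh', LinearMap.mem_ker.1 f.2, map_zero])
  have hpF : ∀ f, ι (pF f) = p f := by
    intro f
    have : (eX (pF f) : N) = p f := by
      simp only [pF, LinearMap.comp_apply, LinearEquiv.coe_coe, LinearEquiv.apply_symm_apply]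
      rfl
    exact this
  have hpFs : Function.Surjective pF := by
    apply nak_surj
    intro x
    obtain ⟨g, hg⟩ := hp.1 (ι x)
    have h1 : h g ∈ 𝔪 • (⊤ : Submodule R G') := by
      apply hp'.2
      rw [LinearMap.mem_ker, hh', hg]
      exact (hex _).2 ⟨x, rfl⟩
    obtain ⟨g1, hg1, hg2⟩ := smul_top_lift h hs 𝔪 h1
    refine ⟨⟨g - g1, by rw [LinearMap.mem_ker, map_sub, hg2, sub_self]⟩, hm _ ?_⟩
    rw [map_sub, hpF]
    change ι x - p (g - g1) ∈ _
    rw [map_sub, hg, sub_sub_cancel]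
    exact smul_top_map p 𝔪 hg1
  refine ⟨h, hs, hI, hfree, ?_, ?_, ?_, pF, hpF, hpFs, ?_⟩
  · rw [e.finrank_eq, Module.finrank_prod]
  · intro g hg
    rw [hh', hg, map_zero]
  · intro z hz
    obtain ⟨g, rfl⟩ := hs z
    rw [hh'] at hz
    obtain ⟨x, hx⟩ := (hex _).1 hz
    obtain ⟨f, rfl⟩ := hpFs x
    refine ⟨g - f, ?_, ?_⟩
    · rw [map_sub, ← hx, hpF, sub_self]
    · rw [map_sub, LinearMap.mem_ker.1 f.2, sub_zero]
  · intro f hf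
    apply hI
    apply hp.2
    rw [LinearMap.mem_ker, ← hpF, LinearMap.mem_ker.1 hf, map_zero]

namespace Tower
/-- the class of syzygies -/
def IsSyz (T : Tower R) (X : Type) [AddCommGroup X] [Module R X] : Prop :=
  ∃ i, Nonempty (X ≃ₗ[R] LinearMap.ker (T.d i))

variable {T : Tower R} {X : Type} [AddCommGroup X] [Module R X]

lemma IsSyz.sq (hX : T.IsSyz X) (hm3 : (IsLocalRing.maximalIdeal R) ^ 3 = ⊥)
    {a : R} (ha : a ∈ 𝔪 ^ 2) (x : X) : a • x = 0 := by
  obtain ⟨i, ⟨e⟩⟩ := hX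
  apply e.injective
  rw [map_smul, map_zero]
  apply Subtype.ext
  funext j
  change a * (e x).1 j = 0
  have : (e x).1 ∈ PI 𝔪 _ := T.hdm _ ((T.hd i).ge (e x).2)
  rw [mul_comm]
  exact m3_zero hm3 (mem_PI.1 this j) ha

lemma IsSyz.soc (hX : T.IsSyz X) (hQ : ¬ QExt R) (x : X) (hx : ∀ a ∈ 𝔪, a • x = 0) :
    x ∈ 𝔪 • (⊤ : Submodule R X) := by
  obtain ⟨i, ⟨e⟩⟩ := hX
  have := T.soc hQ i (e x) (fun a ha => by rw [← map_smul, hx a ha, map_zero])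
  have := smul_top_map e.symm.toLinearMap 𝔪 this
  simpa using this

lemma IsSyz.cover (hX : T.IsSyz X) (hn : ∀ i, T.n (i+1) = T.n 1) {F : Type} [AddCommGroup F]
    [Module R F] [Module.Finite R F] [Module.Free R F] (p : F →ₗ[R] X) (hp : IsCover p) :
    Module.finrank R F = T.n 1 ∧ T.IsSyz (LinearMap.ker p) := by
  obtain ⟨i, ⟨e⟩⟩ := hX
  have hp' : IsCover (e.symm.toLinearMap ∘ₗ T.cov i) := by
    refine ⟨e.symm.surjective.comp (T.cov_surj i), ?_⟩
    rw [smul_top_PI, LinearEquiv.ker_comp, ker_cov, ← T.hd]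
    exact T.hdm _
  obtain ⟨f, hf⟩ := cover_unique p _ hp hp'
  constructor
  · rw [f.finrank_eq]
    simpa using hn (i+1)
  · have hk : LinearMap.ker (e.symm.toLinearMap ∘ₗ T.cov i) = LinearMap.ker (T.d (i+1)) := by
      rw [LinearEquiv.ker_comp, ker_cov]
    refine ⟨i+1, ⟨f.submoduleMap (LinearMap.ker p) ≪≫ₗ LinearEquiv.ofEq _ _ ?_⟩⟩
    rw [← hk]
    ext x
    constructor
    · rintro ⟨y, hy, rfl⟩
      exact (hf y).trans hy
    · intro hx
      refine ⟨f.symm x, ?_, f.apply_symm_apply x⟩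
      have := hf (f.symm x)
      rw [f.apply_symm_apply] at this
      exact this.symm.trans hx
end Tower
end partE

section partF
variable {k R : Type} [Field k] [CommRing R] [IsLocalRing R] [Algebra k R]
local notation "𝔪" => IsLocalRing.maximalIdeal R

/-- vectors with entries in a submodule -/
def PS {M : Type} [AddCommGroup M] [Module R M] (Z : Submodule R M) (ι : Type) :
    Submodule R (ι → M) := Submodule.pi Set.univ (fun _ => Z)

lemma mem_PS {M : Type} [AddCommGroup M] [Module R M] {Z : Submodule R M} {ι : Type}
    {v : ι → M} : v ∈ PS Z ι ↔ ∀ i, v i ∈ Z := by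
  simp [PS, Submodule.mem_pi]

lemma smul_PS {M : Type} [AddCommGroup M] [Module R M] {ι : Type} [Finite ι] (I : Ideal R)
    (Z : Submodule R M) : I • PS Z ι = PS (I • Z) ι := by
  classical
  have := Fintype.ofFinite ι
  apply le_antisymm
  · rw [Submodule.smul_le]
    intro a ha v hv
    rw [mem_PS] at *
    exact fun i => Submodule.smul_mem_smul ha (hv i)
  · intro v hv
    rw [mem_PS] at hv
    rw [← Finset.univ_sum_single v]
    refine Submodule.sum_mem _ fun i _ => ?_
    have h : (I • Z).map (LinearMap.single R (fun _ : ι => M) i) ≤ I • PS Z ι := by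
      rw [Submodule.map_smul'']
      refine Submodule.smul_mono le_rfl ?_
      rintro _ ⟨z, hz, rfl⟩
      rw [mem_PS]
      intro j
      by_cases hj : j = i
      · subst hj; simpa using hz
      · simp [hj]
    exact h ⟨v i, hv i, rfl⟩

lemma smul_top_PS {M : Type} [AddCommGroup M] [Module R M] {ι : Type} [Finite ι] (I : Ideal R) :
    I • (⊤ : Submodule R (ι → M)) = PS (I • (⊤ : Submodule R M)) ι := by
  rw [← smul_PS]
  congr 1
  ext; simp [mem_PS]

/-- linear part data for the maximal ideal -/
structure LinPart (k R : Type) [Field k] [CommRing R] [IsLocalRing R] [Algebra k R] where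
  V : Submodule k R
  le : ∀ x ∈ V, x ∈ IsLocalRing.maximalIdeal R
  disj : ∀ x ∈ V, x ∈ (IsLocalRing.maximalIdeal R) ^ 2 → x = 0
  sup : ∀ x ∈ IsLocalRing.maximalIdeal R, ∃ v ∈ V, x - v ∈ (IsLocalRing.maximalIdeal R) ^ 2

lemma linear_cover [IsNoetherianRing R] (hres : Function.Bijective
      ((Ideal.Quotient.mk (IsLocalRing.maximalIdeal R)).comp (algebraMap k R)))
    (hm3 : (IsLocalRing.maximalIdeal R) ^ 3 = ⊥) (L : LinPart k R) {b : ℕ}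
    (Z : Submodule R (Fin b → R)) (hZ : Z ≤ PI 𝔪 _) (hmZ : 𝔪 • Z = PI (𝔪 ^ 2) _) :
    ∃ (c : ℕ) (p : (Fin c → R) →ₗ[R] Z), IsCover p ∧
      ∀ j l, (p (Pi.single j 1) : Fin b → R) l ∈ L.V := by
  have := finite_kR hres hm3
  let U : Submodule k (Fin b → R) :=
    Z.restrictScalars k ⊓ Submodule.pi Set.univ (fun _ => L.V)
  have hUV : ∀ u ∈ U, ∀ l, u l ∈ L.V := fun u hu l => hu.2 l (Set.mem_univ _)
  let B := Module.finBasis k U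
  let p : (Fin (Module.finrank k U) → R) →ₗ[R] Z :=
    Fintype.linearCombination R (fun j => (⟨B j, (B j).2.1⟩ : Z))
  have hp : ∀ a, ((p a : Z) : Fin b → R) = ∑ j, a j • (B j : Fin b → R) := by
    intro a
    simp [p, Fintype.linearCombination_apply]
  have hpk : ∀ a : Fin (Module.finrank k U) → k,
      ((p (fun j => algebraMap k R (a j)) : Z) : Fin b → R) = ((∑ j, a j • B j : U) : Fin b → R) := by
    intro a
    rw [hp]
    simp [algebraMap_smul]
  refine ⟨_, p, ⟨?_, ?_⟩, ?_⟩
  · apply nak_surj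
    rintro ⟨y, hy⟩
    choose v hv hs using fun l => L.sup (y l) (mem_PI.1 (hZ hy) l)
    have hs' : y - v ∈ 𝔪 • Z := by
      rw [hmZ, mem_PI]
      exact hs
    have hvU : v ∈ U := by
      refine ⟨?_, fun l _ => hv l⟩
      have := Z.sub_mem hy (Submodule.smul_le_right hs')
      rwa [sub_sub_cancel] at this
    refine ⟨fun j => algebraMap k R (B.repr ⟨v, hvU⟩ j), ?_⟩
    rw [Tower.mem_smul_sub]
    change y - _ ∈ _
    rw [hpk, B.sum_repr]
    exact hs'
  · intro a ha
    rw [smul_top_PI, mem_PI]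
    choose c hc using fun j => dec_res hres (a j)
    have h1 : ((p (fun j => algebraMap k R (c j)) : Z) : Fin b → R) =
        - ((p (fun j => a j - algebraMap k R (c j)) : Z) : Fin b → R) := by
      have : p (fun j => a j - algebraMap k R (c j)) =
        p a - p (fun j => algebraMap k R (c j)) := by rw [← map_sub]; rfl
      rw [this, LinearMap.mem_ker.1 ha]
      simp
    have h2 : (∑ j, c j • B j) = 0 := by
      apply Subtype.ext
      funext l
      apply L.disj
      · exact hUV _ (∑ j, c j • B j : U).2 l
      · rw [← hpk, h1, hp]
        rw [Pi.neg_apply, Finset.sum_apply]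
        refine neg_mem (Ideal.sum_mem _ fun j _ => ?_)
        exact m2_mem (hc j) (L.le _ (hUV _ (B j).2 l))
    have h3 := Fintype.linearIndependent_iff.1 B.linearIndependent c h2
    intro j
    have := hc j
    rwa [h3 j, map_zero, sub_zero] at this
  · intro j l
    have : ((p (Pi.single j 1) : Z) : Fin b → R) = B j := by
      rw [hp, Finset.sum_eq_single j]
      · simp
      · intro i _ hi
        simp [hi]
      · simp
    rw [this]
    exact hUV _ (B j).2 l

/-- the induction invariant -/
def KInv (T : Tower R) (m : ℕ) (b : ℕ) (Z : Submodule R (Fin b → R)) : Prop :=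
  Z ≤ PI 𝔪 _ ∧ 𝔪 • Z = PI (𝔪 ^ 2) _ ∧
  ∃ (X : Type) (_ : AddCommGroup X) (_ : Module R X) (ι : X →ₗ[R] (Fin (T.n 2) → Z))
    (q : (Fin (T.n 2) → Z) →ₗ[R] (Fin m → ((Fin b → R) ⧸ Z))),
    T.IsSyz X ∧ Function.Injective ι ∧ Function.Surjective q ∧ ∀ y, q y = 0 ↔ ∃ x, ι x = y

lemma cover_pi {F X : Type} [AddCommGroup F] [Module R F] [AddCommGroup X] [Module R X]
    (p : F →ₗ[R] X) (hp : IsCover p) (a : ℕ) : IsCover (p.compLeft (Fin a)) := by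
  refine ⟨fun y => ?_, fun x hx => ?_⟩
  · choose x hx using fun i => hp.1 (y i)
    exact ⟨x, funext hx⟩
  · rw [smul_top_PS, mem_PS]
    intro i
    exact hp.2 (congrFun hx i)

lemma inv_step [IsNoetherianRing R] (T : Tower R) (hQ : ¬ QExt R)
    (hm3 : (IsLocalRing.maximalIdeal R) ^ 3 = ⊥)
    (hn : ∀ i, T.n (i+1) = T.n 1) {m b c : ℕ}
    (Z : Submodule R (Fin b → R)) (hI : KInv T m b Z) (p : (Fin c → R) →ₗ[R] Z) (hp : IsCover p) :
    T.n 1 * c = m * b + T.n 1 ∧ KInv T m c (LinearMap.ker p) := by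
  obtain ⟨hZ, hmZ, X, _, _, ι, q, hX, hι, hq, hex⟩ := hI
  have hc2 : IsCover (Submodule.mkQ Z) := by
    refine ⟨Submodule.mkQ_surjective _, ?_⟩
    rw [Submodule.ker_mkQ, smul_top_PI]
    exact hZ
  obtain ⟨h, hs, hIF, hfree, hrk, h1, h2, pF, hpF, hcF⟩ := cover_step ι q hι hq hex (by
    intro x hx
    apply hX.soc hQ
    intro a ha
    apply hι
    rw [map_smul, map_zero]
    funext i
    rw [smul_top_PS, mem_PS] at hx
    have := hx i
    rw [Tower.mem_smul_sub, hmZ, mem_PI] at this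
    apply Subtype.ext
    funext j
    exact m3_zero hm3 ha (this j)) (p.compLeft (Fin (T.n 2))) (Z.mkQ.compLeft (Fin m))
    (cover_pi p hp _) (cover_pi _ hc2 _)
  obtain ⟨hF1, hF2⟩ := hX.cover hn pF hcF
  have h2n : T.n 2 = T.n 1 := hn 1
  have hker : LinearMap.ker p ≤ PI 𝔪 _ := by
    have := hp.2
    rwa [smul_top_PI] at this
  refine ⟨?_, hker, ?_, ?_⟩
  · rw [hF1, Module.finrank_pi_fintype] at hrk
    have e9 : Module.finrank R (Fin m → Fin b → R) = m * b := by
      rw [Module.finrank_pi_fintype]; simp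
    rw [← e9]
    simpa [h2n] using hrk
  · apply le_antisymm
    · rw [pow_two, ← smul_PI]
      exact Submodule.smul_mono le_rfl hker
    · intro u hu
      let ut : Fin (T.n 2) → (Fin c → R) := fun _ => u
      have hut : ut ∈ 𝔪 ^ 2 • (⊤ : Submodule R (Fin (T.n 2) → (Fin c → R))) := by
        rw [smul_top_PS, mem_PS]
        intro _
        rw [smul_top_PI]
        exact hu
      have e1 := smul_top_map h (𝔪 ^ 2) hut
      rw [smul_top_PS, smul_top_PI, ← hmZ, ← smul_PS] at e1
      have e2 : PS Z (Fin m) ≤ (PS (LinearMap.ker p) (Fin (T.n 2))).map h := by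
        intro z hz
        obtain ⟨g, hg, hg'⟩ := h2 z (by
          funext i
          exact (Submodule.Quotient.mk_eq_zero _).2 (mem_PS.1 hz i))
        exact ⟨g, mem_PS.2 fun i => congrFun hg i, hg'⟩
      have e3 := Submodule.smul_mono (le_refl 𝔪) e2 e1
      rw [← Submodule.map_smul''] at e3
      obtain ⟨v, hv, hv'⟩ := e3
      have hv2 : v ∈ 𝔪 ^ 2 • (⊤ : Submodule R (Fin (T.n 2) → (Fin c → R))) := by
        have : v ∈ 𝔪 • PS (PI 𝔪 (Fin c)) (Fin (T.n 2)) := by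
          refine Submodule.smul_mono (le_refl 𝔪) ?_ hv
          intro w hw
          exact mem_PS.2 fun i => hker (mem_PS.1 hw i)
        rw [smul_PS, smul_PI, ← pow_two] at this
        rw [smul_top_PS, smul_top_PI]
        exact this
      let f : LinearMap.ker h := ⟨ut - v, by rw [LinearMap.mem_ker, map_sub, hv', sub_self]⟩
      have hf2 : f ∈ 𝔪 ^ 2 • (⊤ : Submodule R (LinearMap.ker h)) :=
        hIF _ f (Submodule.sub_mem _ hut hv2)
      have hf0 : pF f = 0 := by
        have := smul_top_map pF _ hf2
        have hbot : 𝔪 ^ 2 • (⊤ : Submodule R X) = ⊥ := by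
          rw [eq_bot_iff, Submodule.smul_le]
          intro a ha x _
          rw [hX.sq hm3 ha x]
          exact zero_mem _
        rw [hbot] at this
        simpa using this
      have hf3 := hF2.soc hQ ⟨f, hf0⟩ (by
        intro a ha
        apply Subtype.ext
        change a • f = 0
        have : a • f ∈ 𝔪 • 𝔪 ^ 2 • (⊤ : Submodule R (LinearMap.ker h)) :=
          Submodule.smul_mem_smul ha hf2
        rw [← Submodule.mul_smul, ← pow_succ', hm3, Submodule.bot_smul] at this
        simpa using this)
      let inc : LinearMap.ker pF →ₗ[R] (Fin (T.n 2) → (Fin c → R)) :=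
        (LinearMap.ker h).subtype ∘ₗ (LinearMap.ker pF).subtype
      have hinc : LinearMap.range inc ≤ PS (LinearMap.ker p) (Fin (T.n 2)) := by
        rintro _ ⟨w, rfl⟩
        rw [mem_PS]
        intro i
        have e5 := hpF w.1
        rw [LinearMap.mem_ker.1 w.2, map_zero] at e5
        exact (congrFun e5 i).symm
      have hf4 : ut - v ∈ 𝔪 • PS (LinearMap.ker p) (Fin (T.n 2)) := by
        refine Submodule.smul_mono (le_refl 𝔪) hinc ?_
        rw [LinearMap.range_eq_map, ← Submodule.map_smul'']
        exact ⟨_, hf3, rfl⟩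
      have hf5 := Submodule.add_mem _ hf4 hv
      rw [sub_add_cancel, smul_PS, mem_PS] at hf5
      exact hf5 ⟨0, by rw [h2n]; exact T.hpos⟩
  · let e : ((Fin c → R) ⧸ LinearMap.ker p) ≃ₗ[R] Z := p.quotKerEquivOfSurjective hp.1
    let inc : (Fin (T.n 2) → LinearMap.ker p) →ₗ[R] (Fin (T.n 2) → (Fin c → R)) :=
      (LinearMap.ker p).subtype.compLeft _
    let q0 : (Fin (T.n 2) → LinearMap.ker p) →ₗ[R] (Fin m → Z) :=
      LinearMap.pi fun j => ((LinearMap.proj j ∘ₗ h) ∘ₗ inc).codRestrict Z (by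
        intro y
        have := h1 (inc y) (by
          funext i
          exact (y i).2)
        exact (Submodule.Quotient.mk_eq_zero _).1 (congrFun this j))
    have hq0 : ∀ y j, ((q0 y j : Z) : Fin b → R) = h (inc y) j := fun _ _ => rfl
    refine ⟨LinearMap.ker pF, inferInstance, inferInstance,
      LinearMap.pi fun i => ((LinearMap.proj i ∘ₗ (LinearMap.ker h).subtype) ∘ₗ
        (LinearMap.ker pF).subtype).codRestrict (LinearMap.ker p) ?_,
      e.symm.toLinearMap.compLeft _ ∘ₗ q0, hF2, ?_, ?_, ?_⟩
    · intro w
      have e5 := hpF w.1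
      rw [LinearMap.mem_ker.1 w.2, map_zero] at e5
      exact (congrFun e5 i).symm
    · intro w w' hw
      apply Subtype.ext
      apply Subtype.ext
      funext i
      exact congrArg Subtype.val (congrFun hw i)
    · intro z
      obtain ⟨g, hg, hg'⟩ := h2 (fun j => (e (z j) : Fin b → R)) (by
        funext i
        exact (Submodule.Quotient.mk_eq_zero _).2 (e (z i)).2)
      refine ⟨fun i => ⟨g i, congrFun hg i⟩, ?_⟩
      funext j
      change e.symm (q0 _ j) = z j
      rw [LinearEquiv.symm_apply_eq]
      apply Subtype.ext
      rw [hq0]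
      exact congrFun hg' j
    · intro y
      constructor
      · intro hy
        have hy0 : h (inc y) = 0 := by
          funext j
          rw [← hq0]
          have : e.symm (q0 y j) = 0 := congrFun hy j
          rw [LinearEquiv.map_eq_zero_iff] at this
          rw [this]
          rfl
        refine ⟨⟨⟨inc y, hy0⟩, ?_⟩, ?_⟩
        · rw [LinearMap.mem_ker]
          apply hι
          rw [hpF, map_zero]
          funext i
          exact (y i).2
        · rfl
      · rintro ⟨w, rfl⟩
        funext j
        change e.symm (q0 _ j) = 0
        rw [LinearEquiv.map_eq_zero_iff]
        apply Subtype.ext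
        rw [hq0]
        exact congrFun w.1.2 j
end partF

section partG
variable {k R : Type} [Field k] [CommRing R] [IsLocalRing R] [Algebra k R]
local notation "𝔪" => IsLocalRing.maximalIdeal R

lemma equivR (hres : Function.Bijective
      ((Ideal.Quotient.mk (IsLocalRing.maximalIdeal R)).comp (algebraMap k R)))
    {A B : Type} [AddCommGroup A] [AddCommGroup B] [Module k A] [Module k B] [Module R A]
    [Module R B] [IsScalarTower k R A] [IsScalarTower k R B] [Module.Finite k A]
    [Module.Finite k B] (hA : ∀ a ∈ 𝔪, ∀ x : A, a • x = 0) (hB : ∀ a ∈ 𝔪, ∀ x : B, a • x = 0)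
    (h : Module.finrank k A = Module.finrank k B) : Nonempty (A ≃ₗ[R] B) := by
  let e := LinearEquiv.ofFinrankEq A B h
  refine ⟨LinearEquiv.ofBijective (toR hres e.toLinearMap (fun a ha x => ?_) fun a ha x => ?_)
    ⟨e.injective, e.surjective⟩⟩
  · rw [hA a ha, map_zero]
  · exact hB a ha _

lemma finrank_res (hres : Function.Bijective
      ((Ideal.Quotient.mk (IsLocalRing.maximalIdeal R)).comp (algebraMap k R))) :
    Module.finrank k (R ⧸ 𝔪) = 1 := by
  have e : k ≃ₗ[k] (R ⧸ 𝔪) := LinearEquiv.ofBijective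
    ((Ideal.Quotient.mkₐ k 𝔪).toLinearMap ∘ₗ Algebra.linearMap k R) hres
  rw [← e.finrank_eq, Module.finrank_self]

lemma length_hom [IsNoetherianRing R] (hres : Function.Bijective
      ((Ideal.Quotient.mk (IsLocalRing.maximalIdeal R)).comp (algebraMap k R)))
    (hm3 : (IsLocalRing.maximalIdeal R) ^ 3 = ⊥)
    (hsoc : ∀ x : R, (∀ a ∈ 𝔪, a * x = 0) → x ∈ 𝔪 ^ 2) :
    Module.length R ((R ⧸ 𝔪) →ₗ[R] R) = (Module.finrank k ((𝔪 ^ 2 : Ideal R)) : ℕ∞) := by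
  have := finite_kR hres hm3
  have : Module.Finite k ((𝔪 ^ 2 : Ideal R)) :=
    inferInstanceAs (Module.Finite k (Submodule.restrictScalars k (𝔪 ^ 2 : Ideal R)))
  let f : ((R ⧸ 𝔪) →ₗ[R] R) →ₗ[R] (𝔪 ^ 2 : Ideal R) :=
    (LinearMap.applyₗ (1 : R ⧸ 𝔪)).codRestrict _ (by
      intro φ
      apply hsoc
      intro a ha
      change a • φ 1 = 0
      rw [← map_smul]
      have : a • (1 : R ⧸ 𝔪) = 0 := by
        rw [Algebra.smul_def, mul_one]
        exact Ideal.Quotient.eq_zero_iff_mem.2 ha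
      rw [this, map_zero])
  have hf : Function.Bijective f := by
    constructor
    · intro φ ψ h
      have h1 : φ 1 = ψ 1 := congrArg Subtype.val h
      ext
      simpa using h1
    · rintro ⟨s, hs⟩
      refine ⟨Submodule.liftQ 𝔪 (LinearMap.toSpanSingleton R R s)
        (fun a ha => m3_zero hm3 ha hs), Subtype.ext ?_⟩
      change 1 * s = s
      rw [one_mul]
  obtain ⟨e⟩ := equivR (k := k) hres (A := (𝔪 ^ 2 : Ideal R))
    (B := Fin (Module.finrank k ((𝔪 ^ 2 : Ideal R))) → (R ⧸ 𝔪))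
    (fun a ha x => Subtype.ext (m3_zero hm3 ha x.2))
    (fun a ha x => by
      funext i
      change a • x i = 0
      rw [Algebra.smul_def]
      have : algebraMap R (R ⧸ 𝔪) a = 0 := Ideal.Quotient.eq_zero_iff_mem.2 ha
      rw [this, zero_mul])
    (by rw [Module.finrank_pi_fintype]; simp [finrank_res hres])
  rw [((LinearEquiv.ofBijective f hf).trans e).length_eq, Module.length_pi_of_fintype]
  have : IsSimpleModule R (R ⧸ 𝔪) := by
    rw [isSimpleModule_iff_isCoatom, ← Ideal.isMaximal_def]
    infer_instance
  simp [Module.length_eq_one]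

lemma exists_linPart : Nonempty (LinPart k R) := by
  obtain ⟨W, hW⟩ := Submodule.exists_isCompl (Submodule.restrictScalars k (𝔪 ^ 2 : Ideal R))
  refine ⟨⟨W ⊓ Submodule.restrictScalars k 𝔪, fun x hx => hx.2, fun x hx h2 => ?_, fun x hx => ?_⟩⟩
  · have := hW.disjoint.le_bot ⟨h2, hx.1⟩
    simpa using this
  · have : x ∈ Submodule.restrictScalars k (𝔪 ^ 2 : Ideal R) ⊔ W := by
      rw [hW.sup_eq_top]; trivial
    obtain ⟨s, hs, w, hw, rfl⟩ := Submodule.mem_sup.1 this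
    have hs' : s ∈ 𝔪 := Ideal.pow_le_self two_ne_zero hs
    refine ⟨w, ⟨hw, ?_⟩, ?_⟩
    · exact (Ideal.add_mem_iff_right _ hs').1 hx
    · rw [add_sub_cancel_right]; exact hs

/-- the grading -/
def gr (L : LinPart k R) : ℕ → Submodule k R
  | 0 => 1
  | 1 => L.V
  | 2 => Submodule.restrictScalars k (𝔪 ^ 2 : Ideal R)
  | _ => ⊥

lemma gr_pos (L : LinPart k R) : ∀ i x, x ∈ gr L (i+1) → x ∈ 𝔪
  | 0, x, h => L.le x h
  | 1, x, h => Ideal.pow_le_self two_ne_zero (show x ∈ 𝔪 ^ 2 from h)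
  | (i+2), x, h => by
    have : x = 0 := h
    rw [this]; exact zero_mem _

lemma gr_two (L : LinPart k R) : ∀ i x, x ∈ gr L (i+2) → x ∈ 𝔪 ^ 2
  | 0, x, h => h
  | (i+1), x, h => by
    have : x = 0 := h
    rw [this]; exact zero_mem _

lemma gr_monoid (L : LinPart k R) (hm3 : (IsLocalRing.maximalIdeal R) ^ 3 = ⊥) :
    SetLike.GradedMonoid (gr L) where
  one_mem := Submodule.mem_one.2 ⟨1, map_one _⟩
  mul_mem := by
    intro i j a b ha hb
    rcases i with _ | i
    · obtain ⟨c, rfl⟩ := Submodule.mem_one.1 ha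
      rw [zero_add, ← Algebra.smul_def]
      exact Submodule.smul_mem _ _ hb
    rcases j with _ | j
    · obtain ⟨c, rfl⟩ := Submodule.mem_one.1 hb
      rw [add_zero, mul_comm, ← Algebra.smul_def]
      exact Submodule.smul_mem _ _ ha
    have ha' := gr_pos L _ _ ha
    have hb' := gr_pos L _ _ hb
    rcases i with _ | i
    · rcases j with _ | j
      · exact m2_mem ha' hb'
      · rw [m3_zero hm3 ha' (gr_two L _ _ hb)]
        exact zero_mem _
    · rw [mul_comm, m3_zero hm3 hb' (gr_two L _ _ ha)]
      exact zero_mem _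

lemma gr_internal (L : LinPart k R) (hres : Function.Bijective
      ((Ideal.Quotient.mk (IsLocalRing.maximalIdeal R)).comp (algebraMap k R))) :
    DirectSum.IsInternal (gr L) := by
  constructor
  · rw [injective_iff_map_eq_zero]
    intro f hf
    have h3 : ∀ i, ((f (i+3) : gr L (i+3)) : R) = 0 := fun i => (f (i+3)).2
    have e : f = DirectSum.of (fun i => gr L i) 0 (f 0) + DirectSum.of (fun i => gr L i) 1 (f 1)
        + DirectSum.of (fun i => gr L i) 2 (f 2) := by
      refine DFinsupp.ext fun i => ?_
      rcases i with _ | _ | _ | i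
      · simp [DirectSum.add_apply, DirectSum.of_eq_of_ne]
      · simp [DirectSum.add_apply, DirectSum.of_eq_of_ne]
      · simp [DirectSum.add_apply, DirectSum.of_eq_of_ne]
      · apply Subtype.ext
        rw [h3]
        simp [DirectSum.add_apply, DirectSum.of_eq_of_ne]
    have hsum : ((f 0 : gr L 0) : R) + ((f 1 : gr L 1) : R) + ((f 2 : gr L 2) : R) = 0 := by
      rw [e] at hf
      simpa [map_add, DirectSum.coeAddMonoidHom_of] using hf
    obtain ⟨c, hc⟩ := Submodule.mem_one.1 (f 0).2
    have m1 := gr_pos L _ _ (f 1).2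
    have m2 := gr_pos L _ _ (f 2).2
    have z0 : ((f 0 : gr L 0) : R) = 0 := by
      have : algebraMap k R c ∈ 𝔪 := by
        rw [hc]
        rw [add_assoc] at hsum
        rw [eq_neg_of_add_eq_zero_left hsum]
        exact neg_mem (add_mem m1 m2)
      rw [← hc, alg_mem_zero this, map_zero]
    rw [z0, zero_add] at hsum
    have z1 : ((f 1 : gr L 1) : R) = 0 := by
      apply L.disj _ (f 1).2
      rw [eq_neg_of_add_eq_zero_left hsum]
      exact neg_mem (gr_two L _ _ (f 2).2)
    rw [z1, zero_add] at hsum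
    have y0 : f 0 = 0 := Subtype.ext z0
    have y1 : f 1 = 0 := Subtype.ext z1
    have y2 : f 2 = 0 := Subtype.ext hsum
    rw [e, y0, y1, y2]
    simp
  · intro x
    obtain ⟨c, hc⟩ := dec_res hres x
    obtain ⟨v, hv, hs⟩ := L.sup _ hc
    refine ⟨DirectSum.of (fun i => gr L i) 0 ⟨algebraMap k R c, Submodule.mem_one.2 ⟨c, rfl⟩⟩ +
      DirectSum.of (fun i => gr L i) 1 ⟨v, hv⟩ +
      DirectSum.of (fun i => gr L i) 2 ⟨_, hs⟩, ?_⟩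
    rw [map_add, map_add, DirectSum.coeAddMonoidHom_of, DirectSum.coeAddMonoidHom_of,
      DirectSum.coeAddMonoidHom_of]
    change algebraMap k R c + v + (x - algebraMap k R c - v) = x
    ring

lemma inv_base [IsNoetherianRing R] (T : Tower R) (hQ : ¬ QExt R)
    (hres : Function.Bijective
      ((Ideal.Quotient.mk (IsLocalRing.maximalIdeal R)).comp (algebraMap k R)))
    (hm3 : (IsLocalRing.maximalIdeal R) ^ 3 = ⊥) :
    KInv T (T.n 1 * Module.finrank k ((𝔪 ^ 2 : Ideal R))) 1 (PI 𝔪 (Fin 1)) := by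
  have := finite_kR hres hm3
  have hsm : 𝔪 • PI 𝔪 (Fin 1) = PI (𝔪 ^ 2) _ := by rw [smul_PI, pow_two]
  refine ⟨le_rfl, hsm, ?_⟩
  set m := T.n 1 * Module.finrank k ((𝔪 ^ 2 : Ideal R)) with hm
  have hfr : Module.finrank k ((Fin 1 → R) ⧸ PI 𝔪 (Fin 1)) = 1 := by
    have h1 := Submodule.finrank_quotient_add_finrank
      (Submodule.restrictScalars k (PI 𝔪 (Fin 1)))
    have h2 : Module.finrank k (Submodule.restrictScalars k (PI 𝔪 (Fin 1))) = _ :=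
      finrank_PI k 𝔪 1
    rw [h2, Module.finrank_pi_fintype] at h1
    simp only [Finset.sum_const, Finset.card_univ, Fintype.card_fin, smul_eq_mul, one_mul] at h1
    rw [finrank_R_eq hres] at h1
    exact Nat.add_right_cancel h1
  have : Module.Finite k (PI (𝔪 ^ 2) (Fin (T.n 1))) :=
    inferInstanceAs (Module.Finite k (Submodule.restrictScalars k (PI (𝔪 ^ 2) (Fin (T.n 1)))))
  have : Module.Finite k ((Fin 1 → R) ⧸ PI 𝔪 (Fin 1)) :=
    inferInstanceAs (Module.Finite k
      ((Fin 1 → R) ⧸ (Submodule.restrictScalars k (PI 𝔪 (Fin 1)))))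
  obtain ⟨e⟩ := equivR (k := k) hres (A := PI (𝔪 ^ 2) (Fin (T.n 1)))
    (B := Fin m → ((Fin 1 → R) ⧸ PI 𝔪 (Fin 1)))
    (fun a ha x => Subtype.ext (funext fun i => m3_zero hm3 ha (mem_PI.1 x.2 i)))
    (fun a ha x => by
      funext i
      change a • x i = 0
      obtain ⟨y, hy⟩ := Submodule.Quotient.mk_surjective _ (x i)
      rw [← hy, ← Submodule.Quotient.mk_smul, Submodule.Quotient.mk_eq_zero, mem_PI]
      intro j
      exact Ideal.mul_mem_right _ _ ha)
    (by rw [finrank_PI, Module.finrank_pi_fintype]; simp [hfr, hm])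
  have hmap : (PI 𝔪 (Fin (T.n 2))).map (T.d 1) = PI (𝔪 ^ 2) _ := by
    rw [map_PI, T.hd, T.smul_ker hQ hm3]
  have hk : ∀ x : LinearMap.ker (T.d 1), ∀ i, x.1 i ∈ 𝔪 := fun x =>
    mem_PI.1 (T.hdm _ ((T.hd 1).ge x.2))
  let fl : (Fin (T.n 2) → PI 𝔪 (Fin 1)) →ₗ[R] (Fin (T.n 2) → R) :=
    (LinearMap.proj (0 : Fin 1) ∘ₗ (PI 𝔪 (Fin 1)).subtype).compLeft _
  let q0 : (Fin (T.n 2) → PI 𝔪 (Fin 1)) →ₗ[R] PI (𝔪 ^ 2) (Fin (T.n 1)) :=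
    (T.d 1 ∘ₗ fl).codRestrict _ (fun y => by
      rw [← hmap]
      exact ⟨fl y, mem_PI.2 fun i => mem_PI.1 (y i).2 0, rfl⟩)
  refine ⟨LinearMap.ker (T.d 1), inferInstance, inferInstance,
    LinearMap.pi fun i => LinearMap.codRestrict (PI 𝔪 (Fin 1))
      (LinearMap.pi fun _ => (LinearMap.proj i : (Fin (T.n 2) → R) →ₗ[R] R) ∘ₗ
        (LinearMap.ker (T.d 1)).subtype)
      (fun x => mem_PI.2 fun _ => hk x i),
    e.toLinearMap ∘ₗ q0, ⟨1, ⟨LinearEquiv.refl _ _⟩⟩, ?_, ?_, ?_⟩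
  · intro x y hxy
    apply Subtype.ext
    funext i
    exact congrFun (congrArg Subtype.val (congrFun hxy i)) 0
  · refine e.surjective.comp ?_
    rintro ⟨s, hs⟩
    have hs' := hs
    rw [← hmap] at hs'
    obtain ⟨v, hv, hv'⟩ := hs'
    exact ⟨fun i => ⟨fun _ => v i, mem_PI.2 fun _ => mem_PI.1 hv i⟩, Subtype.ext hv'⟩
  · intro y
    have e1 : (e.toLinearMap ∘ₗ q0) y = 0 ↔ T.d 1 (fl y) = 0 := by
      change e (q0 y) = 0 ↔ _
      rw [LinearEquiv.map_eq_zero_iff, ← Subtype.coe_inj]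
      rfl
    rw [e1]
    constructor
    · intro hy
      refine ⟨⟨fl y, hy⟩, ?_⟩
      funext i
      apply Subtype.ext
      funext j
      rw [Subsingleton.elim j 0]
      rfl
    · rintro ⟨x, rfl⟩
      exact x.2
end partG

section partH
variable {R : Type} [CommRing R] [IsLocalRing R]
local notation "𝔪" => IsLocalRing.maximalIdeal R

lemma min_cover {N : Type} [AddCommGroup N] [Module R N] [Module.Finite R N] :
    ∃ (n : ℕ) (p : (Fin n → R) →ₗ[R] N), IsCover p := by
  let := Ideal.Quotient.field 𝔪
  have : Module.Finite (R ⧸ 𝔪) (N ⧸ (𝔪 • (⊤ : Submodule R N))) :=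
    Module.Finite.of_restrictScalars_finite R _ _
  let B := Module.finBasis (R ⧸ 𝔪) (N ⧸ (𝔪 • (⊤ : Submodule R N)))
  choose x hx using fun j => Submodule.Quotient.mk_surjective _ (B j)
  let p := Fintype.linearCombination R x
  have hp : ∀ a, Submodule.Quotient.mk (p a) =
      ∑ j, (Ideal.Quotient.mk 𝔪 (a j)) • B j := by
    intro a
    change Submodule.mkQ _ (p a) = _
    simp only [p, Fintype.linearCombination_apply, map_sum, map_smul]
    refine Finset.sum_congr rfl fun j _ => ?_
    rw [← hx]
    rfl
  refine ⟨_, p, ?_, ?_⟩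
  · apply nak_surj
    intro y
    choose a ha using fun j => Ideal.Quotient.mk_surjective
      (B.repr (Submodule.Quotient.mk y) j)
    refine ⟨a, ?_⟩
    rw [← Submodule.Quotient.mk_eq_zero, Submodule.Quotient.mk_sub, hp]
    simp only [ha]
    rw [B.sum_repr, sub_self]
  · intro a ha
    rw [smul_top_PI, mem_PI]
    intro j
    have h := hp a
    rw [LinearMap.mem_ker.1 ha, Submodule.Quotient.mk_zero] at h
    exact Ideal.Quotient.eq_zero_iff_mem.1
      (Fintype.linearIndependent_iff.1 B.linearIndependent _ h.symm j)

lemma build_res (P : ∀ b : ℕ, Submodule R (Fin b → R) → Prop)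
    (Q : ∀ c b : ℕ, ((Fin c → R) →ₗ[R] (Fin b → R)) → Prop)
    (step : ∀ b Z, P b Z → ∃ (c : ℕ) (d : (Fin c → R) →ₗ[R] (Fin b → R)),
      LinearMap.range d = Z ∧ P c (LinearMap.ker d) ∧ Q c b d)
    {N : Type} [AddCommGroup N] [Module R N] (b0 : ℕ) (π0 : (Fin b0 → R) →ₗ[R] N)
    (hπ0 : Function.Surjective π0) (h0 : P b0 (LinearMap.ker π0)) :
    ∃ (β : ℕ → ℕ) (d : ∀ i : ℕ, (Fin (β (i + 1)) → R) →ₗ[R] (Fin (β i) → R))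
      (π : (Fin (β 0) → R) →ₗ[R] N), β 0 = b0 ∧ Function.Surjective π ∧
      LinearMap.range (d 0) = LinearMap.ker π ∧
      (∀ i, LinearMap.range (d (i + 1)) = LinearMap.ker (d i)) ∧
      P (β 0) (LinearMap.ker π) ∧ (∀ i, P (β (i+1)) (LinearMap.ker (d i))) ∧
      ∀ i, Q (β (i+1)) (β i) (d i) := by
  choose c d h1 h2 h3 using step
  let s : ℕ → {x : Σ b : ℕ, Submodule R (Fin b → R) // P x.1 x.2} := fun i =>
    Nat.rec ⟨⟨b0, LinearMap.ker π0⟩, h0⟩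
      (fun _ s => ⟨⟨c s.1.1 s.1.2 s.2, LinearMap.ker (d s.1.1 s.1.2 s.2)⟩, h2 _ _ _⟩) i
  exact ⟨fun i => (s i).1.1, fun i => d (s i).1.1 (s i).1.2 (s i).2, π0, rfl, hπ0,
    h1 _ _ _, fun i => h1 _ _ _, h0, fun i => h2 _ _ _, fun i => h3 _ _ _⟩

lemma exists_tower [IsNoetherianRing R] (M : ModuleCat.{0} R) (hfin : Module.Finite R M)
    (hE : ∀ i : ℕ, 0 < i → Subsingleton
      (((Ext R (ModuleCat.{0} R) i).obj (Opposite.op M)).obj (ModuleCat.of R R)))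
    (hfree : ¬ Module.Free R M) : Nonempty (Tower R) := by
  obtain ⟨b0, π0, hπ0⟩ := min_cover (R := R) (N := M)
  obtain ⟨n, d, π, -, hπ, h0, hd, hk0, hk, -⟩ := build_res (R := R)
    (fun b Z => Z ≤ PI 𝔪 (Fin b)) (fun _ _ _ => True) (by
      intro b Z _
      obtain ⟨c, p, hp⟩ := min_cover (R := R) (N := Z)
      refine ⟨c, Z.subtype ∘ₗ p, ?_, ?_, trivial⟩
      · rw [LinearMap.range_comp, LinearMap.range_eq_top.2 hp.1, Submodule.map_top,
          Submodule.range_subtype]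
      · rw [LinearMap.ker_comp, Submodule.ker_subtype, ← LinearMap.ker, ← smul_top_PI]
        exact hp.2) b0 π0 hπ0.1 (by
      rw [← smul_top_PI]
      exact hπ0.2)
  have hdm : ∀ i, LinearMap.range (d i) ≤ PI 𝔪 _ := by
    intro i
    rcases i with _ | i
    · rw [h0]; exact hk0
    · rw [hd]; exact hk i
  let D : ∀ i, (Fin (n i) → R) →ₗ[R] (Fin (n (i+1)) → R) := fun i =>
    (LinearMap.toMatrix' (d i)).transpose.mulVecLin
  have adj : ∀ i w v, w ⬝ᵥ d i v = D i w ⬝ᵥ v := by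
    intro i w v
    change _ = (LinearMap.toMatrix' (d i)).transpose.mulVec w ⬝ᵥ v
    rw [Matrix.mulVec_transpose, ← Matrix.dotProduct_mulVec, LinearMap.toMatrix'_mulVec]
  refine ⟨⟨n, d, D, hd, ?_, adj, hdm, ?_, ?_⟩⟩
  · intro i
    apply le_antisymm
    · rintro _ ⟨w, rfl⟩
      rw [LinearMap.mem_ker]
      apply Tower.dot_eq
      intro u
      have : d i (d (i+1) u) = 0 := (hd i).le ⟨u, rfl⟩
      rw [← adj, ← adj, this, dotProduct_zero, zero_dotProduct]
    · intro w hw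
      let f : (Fin (n (i+1)) → R) →ₗ[R] R :=
        LinearMap.mk ⟨fun v => w ⬝ᵥ v, fun a b => dotProduct_add w a b⟩
          (fun c v => dotProduct_smul c w v)
      obtain ⟨g, hg⟩ := dual_exact n d M π hd h0 hπ hE i f (by
        refine LinearMap.ext fun u => ?_
        change w ⬝ᵥ d (i+1) u = 0
        rw [adj, LinearMap.mem_ker.1 hw, zero_dotProduct])
      obtain ⟨w', hw'⟩ := Tower.dot_ext g
      refine ⟨w', Tower.dot_eq fun u => ?_⟩
      rw [← adj, ← hw']
      exact LinearMap.congr_fun hg u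
  · rintro i _ ⟨w, rfl⟩
    rw [mem_PI]
    intro j
    have := adj i w (Pi.single j 1)
    rw [dotProduct_single, mul_one] at this
    rw [← this]
    refine Ideal.sum_mem _ fun l _ => Ideal.mul_mem_left _ _ ?_
    exact mem_PI.1 (hdm i ⟨_, rfl⟩) l
  · by_contra hn
    have hn : n 1 = 0 := by omega
    apply hfree
    have hker : LinearMap.ker π = ⊥ := by
      rw [← h0, eq_bot_iff]
      rintro _ ⟨v, rfl⟩
      have : IsEmpty (Fin (n (0+1))) := by
        rw [zero_add, hn]; infer_instance
      have : v = 0 := Subsingleton.elim _ _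
      rw [this, map_zero]
      exact zero_mem _
    exact Module.Free.of_equiv
      (LinearEquiv.ofBijective π ⟨LinearMap.ker_eq_bot.1 hker, hπ⟩)

end partH

theorem stmt_aux (k : Type) [Field k] (R : Type) [CommRing R] [IsNoetherianRing R]
    [IsLocalRing R] [Algebra k R]
    (hres : Function.Bijective
      ((Ideal.Quotient.mk (IsLocalRing.maximalIdeal R)).comp (algebraMap k R)))
    (hQ : ¬ QExt R)
    (hm3 : (IsLocalRing.maximalIdeal R) ^ 3 = ⊥)
    (hm2 : (IsLocalRing.maximalIdeal R) ^ 2 ≠ ⊥)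
    (T : Tower R) :
    ∃ (r : ℕ) (𝒜 : ℕ → Submodule k R) (_ : GradedAlgebra 𝒜),
      Order.krullDim (Submodule R ((R ⧸ IsLocalRing.maximalIdeal R) →ₗ[R] R)) = (r : ℕ∞) ∧
      𝒜 0 = (1 : Submodule k R) ∧ (∀ n, 3 ≤ n → 𝒜 n = ⊥) ∧
      (∀ x, x ∈ 𝒜 1 → x ∈ IsLocalRing.maximalIdeal R) ∧
      ∃ (β : ℕ → ℕ) (d : ∀ i : ℕ, (Fin (β (i + 1)) → R) →ₗ[R] (Fin (β i) → R))
        (π : (Fin (β 0) → R) →ₗ[R] (R ⧸ IsLocalRing.maximalIdeal R)),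
        (∀ i, β i = ∑ j ∈ Finset.range (i + 1), r ^ j) ∧
        Function.Surjective π ∧
        LinearMap.range (d 0) = LinearMap.ker π ∧
        (∀ i, LinearMap.range (d (i + 1)) = LinearMap.ker (d i)) ∧
        (∀ (i : ℕ) (j : Fin (β (i + 1))) (l : Fin (β i)),
          d i (Pi.single j 1) l ∈ 𝒜 1) := by
  obtain ⟨L⟩ := exists_linPart (k := k) (R := R)
  have hn := T.numerics hQ hres hm3 hm2
  have hlen := length_hom hres hm3 (T.soc_R hQ)
  set r := Module.finrank k ((IsLocalRing.maximalIdeal R ^ 2 : Ideal R)) with hr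
  have hbase := inv_base T hQ hres hm3
  rw [← hr] at hbase
  let π0 : (Fin 1 → R) →ₗ[R] (R ⧸ IsLocalRing.maximalIdeal R) :=
    Submodule.mkQ (IsLocalRing.maximalIdeal R) ∘ₗ LinearMap.proj 0
  have hπ0 : Function.Surjective π0 := by
    intro y
    obtain ⟨x, rfl⟩ := Submodule.mkQ_surjective _ y
    exact ⟨fun _ => x, rfl⟩
  have hk0 : LinearMap.ker π0 = PI (IsLocalRing.maximalIdeal R) (Fin 1) := by
    ext v
    rw [LinearMap.mem_ker, mem_PI]
    change Submodule.Quotient.mk (v 0) = 0 ↔ _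
    rw [Submodule.Quotient.mk_eq_zero]
    constructor
    · intro h i
      rw [Subsingleton.elim i 0]
      exact h
    · intro h
      exact h 0
  obtain ⟨β, d, π, hβ0, hπ, h0, hd, -, -, hQs⟩ := build_res (R := R)
    (fun b Z => KInv T (T.n 1 * r) b Z)
    (fun c b d => c = 1 + r * b ∧ ∀ j l, d (Pi.single j 1) l ∈ L.V) (by
      intro b Z hI
      obtain ⟨c, p, hp, hpV⟩ := linear_cover hres hm3 L Z hI.1 hI.2.1
      obtain ⟨h1, h2⟩ := inv_step T hQ hm3 hn Z hI p hp
      refine ⟨c, Z.subtype ∘ₗ p, ?_, ?_, ?_, hpV⟩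
      · rw [LinearMap.range_comp, LinearMap.range_eq_top.2 hp.1, Submodule.map_top,
          Submodule.range_subtype]
      · rw [LinearMap.ker_comp, Submodule.ker_subtype, ← LinearMap.ker]
        exact h2
      · have hpos := T.hpos
        apply Nat.eq_of_mul_eq_mul_left hpos
        rw [h1]
        ring) 1 π0 hπ0 (by rw [hk0]; exact hbase)
  have := gr_monoid L hm3
  let := (gr_internal L hres).chooseDecomposition
  refine ⟨r, gr L, GradedRing.mk, ?_, rfl, ?_, fun x hx => L.le x hx, β, d, π, ?_, hπ, h0, hd,
    fun i j l => (hQs i).2 j l⟩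
  · rw [← Module.coe_length, hlen]
  · intro i hi
    obtain ⟨i, rfl⟩ := Nat.exists_eq_add_of_le' hi
    rfl
  · intro i
    induction i with
    | zero => simp [hβ0]
    | succ i ih =>
      rw [(hQs i).1, ih, Finset.sum_range_succ' _ (i+1), Finset.mul_sum, add_comm]
      congr 1
      refine Finset.sum_congr rfl fun j _ => ?_
      rw [pow_succ']

/-- such a ring is Koszul under its induced graded structure, with
Poincaré series 1/((1-t)(1-rt)); Koszulness is expressed by the existence of a
minimal graded free resolution of the residue field whose matrices have entries
of degree one, with i-th Betti number 1 + r + ⋯ + rⁱ. -/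
theorem stmt_11 (k : Type) [Field k] (R : Type) [CommRing R] [IsNoetherianRing R]
    [IsLocalRing R] [Algebra k R]
    (hres : Function.Bijective
      ((Ideal.Quotient.mk (IsLocalRing.maximalIdeal R)).comp (algebraMap k R)))
    (hng : ¬ IsGorensteinLocalRing R)
    (hm3 : (IsLocalRing.maximalIdeal R) ^ 3 = ⊥)
    (hm2 : (IsLocalRing.maximalIdeal R) ^ 2 ≠ ⊥)
    (hex : ∃ M : ModuleCat R, Module.Finite R M ∧ GDimZero R M ∧ ¬ Module.Free R M) :
    ∃ (r : ℕ) (𝒜 : ℕ → Submodule k R) (_ : GradedAlgebra 𝒜),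
      mlength R ((R ⧸ IsLocalRing.maximalIdeal R) →ₗ[R] R) = (r : ℕ∞) ∧
      𝒜 0 = (1 : Submodule k R) ∧ (∀ n, 3 ≤ n → 𝒜 n = ⊥) ∧
      (∀ x, x ∈ 𝒜 1 → x ∈ IsLocalRing.maximalIdeal R) ∧
      ∃ (β : ℕ → ℕ) (d : ∀ i : ℕ, (Fin (β (i + 1)) → R) →ₗ[R] (Fin (β i) → R))
        (π : (Fin (β 0) → R) →ₗ[R] (R ⧸ IsLocalRing.maximalIdeal R)),
        (∀ i, β i = ∑ j ∈ Finset.range (i + 1), r ^ j) ∧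
        Function.Surjective π ∧
        LinearMap.range (d 0) = LinearMap.ker π ∧
        (∀ i, LinearMap.range (d (i + 1)) = LinearMap.ker (d i)) ∧
        (∀ (i : ℕ) (j : Fin (β (i + 1))) (l : Fin (β i)),
          d i (Pi.single j 1) l ∈ 𝒜 1) := by
  have hQ : ¬ QExt R := fun hQ => hng
    ⟨inferInstance, inferInstance, inj_finite (baer_of_ext hm3 hQ)⟩
  obtain ⟨M, hfin, hG, hfree⟩ := hex
  obtain ⟨T⟩ := exists_tower M hfin hG.2.1 hfree
  exact stmt_aux k R hres hQ hm3 hm2 T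
end

section
/- Let R be a non-Gorenstein homogeneous graded Artinian ring over a field k which admits a nontrivial deformation. If the Hilbert series of R equals (1+t)(1+rt) for some integer r ≥ 2, then there exist a one-dimensional Cohen-Macaulay homogeneous graded ring S with minimal multiplicity and a homogeneous non-zerodivisor f of degree 2 in S such that R ≅ S/fS. -/
open CategoryTheory

/-- A standard graded (homogeneous) algebra over a field: the degree-0 part is k,
the algebra is generated in degree 1, and all graded pieces are finite dimensional. -/
def IsStandardGraded (k S : Type) [Field k] [CommRing S] [Algebra k S]
    (𝒮 : ℕ → Submodule k S) [GradedAlgebra 𝒮] : Prop :=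
  𝒮 0 = (1 : Submodule k S) ∧ Algebra.adjoin k ((𝒮 1 : Set S)) = ⊤ ∧
    ∀ n, FiniteDimensional k ↥(𝒮 n)

/-- `GDimLE R n M` : the G-dimension of `M` over `R` is at most `n`,
i.e. an `n`-th syzygy of `M` has G-dimension zero. -/
def GDimLE (R : Type) [CommRing R] : ℕ → ∀ (M : Type) [AddCommGroup M] [Module R M], Prop
  | 0, M, _, _ => GDimZero R M
  | n + 1, M, _, _ => ∃ (b : ℕ) (π : (Fin b → R) →ₗ[R] M),
      Function.Surjective π ∧ GDimLE R n ↥(LinearMap.ker π)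

/-- `ProjDimLE S n M` : the projective dimension of `M` over `S` is at most `n`. -/
def ProjDimLE (S : Type) [CommRing S] : ℕ → ∀ (M : Type) [AddCommGroup M] [Module S M], Prop
  | 0, M, _, _ => Module.Projective S M
  | n + 1, M, _, _ => ∃ (b : ℕ) (π : (Fin b → S) →ₗ[S] M),
      Function.Surjective π ∧ ProjDimLE S n ↥(LinearMap.ker π)

/-- A bundled graded algebra over a field `k`. -/
structure GradedAlgebraOver (k : Type) [Field k] where
  S : Type
  [ring : CommRing S]
  [alg : Algebra k S]
  grading : ℕ → Submodule k S
  [graded : GradedAlgebra grading]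

attribute [instance] GradedAlgebraOver.ring GradedAlgebraOver.alg GradedAlgebraOver.graded


theorem core_unit {k L : Type} [Field k] [CommRing L] [Algebra k L] (f : Lˣ)
    (T1 T2 : Submodule k L) [FiniteDimensional k T2] (hf : (f : L) ∈ T2) (h11 : T1 * T1 = T2)
    (h12 : ∀ a ∈ T1, ∀ b ∈ T2, ∃ c ∈ T1, a * b = f * c)
    (h22 : ∀ a ∈ T2, ∀ b ∈ T2, ∃ c ∈ T2, a * b = f * c) :
    ∃ x ∈ T1, ∀ t ∈ T2, ∃ y ∈ T1, x * y = t := by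
  let B : Subalgebra k L :=
    { carrier := {z | (f : L) * z ∈ T2}
      mul_mem' := by
        intro a b ha hb
        obtain ⟨c, hc, h⟩ := h22 _ ha _ hb
        have : (f : L) * (a * b) = c := by
          apply f.isUnit.mul_left_cancel
          rw [← h]; ring
        simpa [this] using hc
      add_mem' := by
        intro a b ha hb
        simp only [Set.mem_ofPred_eq, mul_add] at *
        exact add_mem ha hb
      algebraMap_mem' := by
        intro r
        have : (f : L) * algebraMap k L r = r • (f : L) := by rw [Algebra.smul_def, mul_comm]
        simp only [Set.mem_ofPred_eq, this]
        exact T2.smul_mem _ hf }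
  have memB : ∀ z, z ∈ B ↔ (f : L) * z ∈ T2 := fun z => Iff.rfl
  have hfin : FiniteDimensional k B := by
    let φ : B →ₗ[k] T2 :=
      { toFun := fun z => ⟨(f : L) * z, z.2⟩
        map_add' := by intro a b; ext; simp [mul_add]
        map_smul' := by intro a b; ext; simp }
    apply FiniteDimensional.of_injective φ
    intro a b h
    have := congrArg Subtype.val h
    exact Subtype.ext (f.isUnit.mul_left_cancel this)
  have hart : IsArtinianRing B := IsArtinianRing.of_finite k B
  let M : Submodule B L :=
    { carrier := T1
      add_mem' := fun ha hb => add_mem ha hb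
      zero_mem' := T1.zero_mem
      smul_mem' := by
        intro c x hx
        obtain ⟨y, hy, h⟩ := h12 x hx _ c.2
        have : c • x = y := by
          apply f.isUnit.mul_left_cancel
          rw [← h, Algebra.smul_def]
          change (f : L) * ((c : L) * x) = _
          ring
        rw [this]; exact hy }
  have memM : ∀ z, z ∈ M ↔ z ∈ T1 := fun z => Iff.rfl
  let M' : Submodule B L := Submodule.span B {((f⁻¹ : Lˣ) : L)} * M
  have hMM : M * M' = 1 := by
    apply le_antisymm
    · rw [Submodule.mul_le]
      intro m hm n hn
      obtain ⟨z, hz, rfl⟩ := Submodule.mem_span_singleton_mul.1 hn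
      rw [Submodule.mem_one]
      refine ⟨⟨m * (((f⁻¹ : Lˣ) : L) * z), ?_⟩, rfl⟩
      rw [memB, ← h11]
      have : (f : L) * (m * (((f⁻¹ : Lˣ) : L) * z)) = m * z := by
        rw [show (f : L) * (m * (((f⁻¹ : Lˣ) : L) * z)) = (f * ((f⁻¹ : Lˣ) : L)) * (m * z) by ring]
        simp
      rw [this]
      exact Submodule.mul_mem_mul hm hz
    · rw [Submodule.one_le]
      have key : ∀ t ∈ T1 * T1, ((f⁻¹ : Lˣ) : L) * t ∈ M * M' := by
        intro t ht
        induction ht using Submodule.mul_induction_on' with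
        | mem_mul_mem m hm n hn =>
          rw [show ((f⁻¹ : Lˣ) : L) * (m * n) = m * (((f⁻¹ : Lˣ) : L) * n) by ring]
          exact Submodule.mul_mem_mul hm
            (Submodule.mul_mem_mul (Submodule.mem_span_singleton_self _) hn)
        | add x _ y _ hx hy => rw [mul_add]; exact add_mem hx hy
      simpa using key f (h11 ▸ hf)
  let I : (Submodule B L)ˣ := ⟨M, M', hMM, by rw [mul_comm]; exact hMM⟩
  have hfaith : FaithfulSMul B L :=
    (faithfulSMul_iff_algebraMap_injective B L).2 Subtype.val_injective
  have hinv : Module.Invertible B M := 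
    Module.Invertible.left (Submodule.tensorInvEquiv I)
  obtain ⟨e⟩ := Module.Invertible.free_iff_linearEquiv.1 (inferInstance : Module.Free B M)
  let x : M := e.symm 1
  have hx : ∀ m ∈ T1, ∃ b : B, m = (b : L) * x := by
    intro m hm
    refine ⟨e ⟨m, hm⟩, ?_⟩
    have : (e ⟨m, hm⟩) • x = ⟨m, hm⟩ := by
      apply e.injective
      simp [x]
    have := congrArg Subtype.val this
    simpa [Algebra.smul_def] using this.symm
  refine ⟨x, x.2, ?_⟩
  intro t ht
  rw [← h11] at ht
  induction ht using Submodule.mul_induction_on' with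
  | mem_mul_mem m hm n hn =>
    obtain ⟨b, rfl⟩ := hx m hm
    refine ⟨(b : L) * n, ?_, by ring⟩
    exact M.smul_mem b hn
  | add s _ t _ hs ht =>
    obtain ⟨y, hy, rfl⟩ := hs
    obtain ⟨z, hz, rfl⟩ := ht
    exact ⟨y + z, add_mem hy hz, by ring⟩

theorem core_nzd {k T : Type} [Field k] [CommRing T] [Algebra k T] (f : T)
    (hnz : f ∈ nonZeroDivisors T)
    (T1 T2 : Submodule k T) [FiniteDimensional k T2] (hf : f ∈ T2) (h11 : T1 * T1 = T2)
    (h12 : ∀ a ∈ T1, ∀ b ∈ T2, ∃ c ∈ T1, a * b = f * c)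
    (h22 : ∀ a ∈ T2, ∀ b ∈ T2, ∃ c ∈ T2, a * b = f * c) :
    ∃ x ∈ T1, ∀ t ∈ T2, ∃ y ∈ T1, x * y = t := by
  let L := FractionRing T
  let φ : T →ₐ[k] L := IsScalarTower.toAlgHom k T L
  have hφ : Function.Injective φ := IsFractionRing.injective T L
  have hu : IsUnit (φ f) := IsLocalization.map_units L (⟨f, hnz⟩ : nonZeroDivisors T)
  obtain ⟨u, hu⟩ := hu
  have hfd : FiniteDimensional k (T2.map φ.toLinearMap) := inferInstance
  obtain ⟨x, ⟨x', hx', rfl⟩, h⟩ := core_unit u (T1.map φ.toLinearMap) (T2.map φ.toLinearMap)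
    ⟨f, hf, hu.symm⟩ (by rw [← h11, Submodule.map_mul])
    (by
      rintro _ ⟨a, ha, rfl⟩ _ ⟨b, hb, rfl⟩
      obtain ⟨c, hc, h⟩ := h12 a ha b hb
      refine ⟨_, ⟨c, hc, rfl⟩, ?_⟩
      rw [hu]
      simp only [AlgHom.toLinearMap_apply, ← map_mul, h])
    (by
      rintro _ ⟨a, ha, rfl⟩ _ ⟨b, hb, rfl⟩
      obtain ⟨c, hc, h⟩ := h22 a ha b hb
      refine ⟨_, ⟨c, hc, rfl⟩, ?_⟩
      rw [hu]
      simp only [AlgHom.toLinearMap_apply, ← map_mul, h])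
  refine ⟨x', hx', fun t ht => ?_⟩
  obtain ⟨_, ⟨y, hy, rfl⟩, hxy⟩ := h _ ⟨t, ht, rfl⟩
  refine ⟨y, hy, hφ ?_⟩
  simpa using hxy

section graded

variable {k S : Type} [Field k] [CommRing S] [Algebra k S] {𝒮 : ℕ → Submodule k S}
  [GradedAlgebra 𝒮]

open DirectSum

theorem std_le_pow (n : ℕ) : (𝒮 1) ^ n ≤ 𝒮 n := by
  induction n with
  | zero =>
    rw [pow_zero, Submodule.one_le]
    exact SetLike.GradedOne.one_mem
  | succ n ih =>
    rw [pow_succ, Submodule.mul_le]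
    intro a ha b hb
    exact SetLike.GradedMul.mul_mem (ih ha) hb

theorem std_pow (h : IsStandardGraded k S 𝒮) (n : ℕ) : 𝒮 n = (𝒮 1) ^ n := by
  refine le_antisymm ?_ (std_le_pow n)
  have key : ∀ s : S, ∀ n, (decompose 𝒮 s n : S) ∈ (𝒮 1) ^ n := by
    intro s
    have hs : s ∈ Algebra.adjoin k ((𝒮 1 : Set S)) := by rw [h.2.1]; trivial
    induction hs using Algebra.adjoin_induction with
    | mem x hx =>
      intro n
      by_cases hn : n = 1
      · subst hn
        rw [decompose_of_mem_same 𝒮 hx, pow_one]; exact hx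
      · rw [decompose_of_mem_ne 𝒮 hx (Ne.symm hn)]; exact zero_mem _
    | algebraMap r =>
      intro n
      have hr : algebraMap k S r ∈ 𝒮 0 := SetLike.algebraMap_mem_graded 𝒮 r
      by_cases hn : n = 0
      · subst hn
        rw [decompose_of_mem_same 𝒮 hr, pow_zero]
        exact Submodule.algebraMap_mem r
      · rw [decompose_of_mem_ne 𝒮 hr (Ne.symm hn)]; exact zero_mem _
    | add x y _ _ hx hy =>
      intro n
      simp only [decompose_add, DirectSum.add_apply, Submodule.coe_add]
      exact add_mem (hx n) (hy n)
    | mul x y _ _ hx hy =>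
      intro n
      classical
      rw [decompose_mul, DirectSum.coe_mul_apply]
      refine sum_mem fun ij hij => ?_
      have : ij.1 + ij.2 = n := (Finset.mem_filter.1 hij).2
      rw [← this, pow_add]
      exact Submodule.mul_mem_mul (hx _) (hy _)
  intro s hs
  have := key s n
  rwa [decompose_of_mem_same 𝒮 hs] at this

theorem std_add (h : IsStandardGraded k S 𝒮) (m n : ℕ) : 𝒮 (m + n) = 𝒮 m * 𝒮 n := by
  rw [std_pow h (m + n), std_pow h m, std_pow h n, pow_add]

theorem grdiv {J : Ideal S} (hJ : J.IsHomogeneous 𝒮) {g s : S} {c n : ℕ} (hg : g ∈ 𝒮 c)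
    (hs : s ∈ 𝒮 n) (h : s ∈ J ⊔ Ideal.span {g}) :
    (c ≤ n → ∃ u ∈ 𝒮 (n - c), s - g * u ∈ J) ∧ (n < c → s ∈ J) := by
  obtain ⟨j, hj, z, hz, rfl⟩ := Submodule.mem_sup.1 h
  obtain ⟨u, rfl⟩ := Ideal.mem_span_singleton'.1 hz
  have hd := decompose_of_mem_same 𝒮 hs
  rw [decompose_add, DirectSum.add_apply, Submodule.coe_add] at hd
  constructor
  · intro hcn
    refine ⟨_, (decompose 𝒮 u (n - c)).2, ?_⟩
    rw [coe_decompose_mul_of_right_mem_of_le 𝒮 hg hcn] at hd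
    rw [← hd, mul_comm g, add_sub_cancel_right]
    exact hJ n hj
  · intro hcn
    rw [coe_decompose_mul_of_right_mem_of_not_le 𝒮 hg (not_le.2 hcn), add_zero] at hd
    rw [← hd]
    exact hJ n hj

theorem std_zero (h : IsStandardGraded k S 𝒮) {u : S} (hu : u ∈ 𝒮 0) :
    ∃ α : k, u = algebraMap k S α := by
  rw [h.1] at hu
  obtain ⟨α, hα⟩ := Submodule.mem_one.1 hu
  exact ⟨α, hα.symm⟩

theorem lemC (hst : IsStandardGraded k S 𝒮) {K : Ideal S} (hK : K.IsHomogeneous 𝒮) (hK1 : K ≠ ⊤)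
    {g : S} {c : ℕ} (hg : g ∈ 𝒮 c) (hnz : ∀ u, g * u ∈ K → u ∈ K) {n : ℕ} (hn : n + 1 ≤ c)
    (hS : ∀ s ∈ 𝒮 (n + 1), s ∈ K ⊔ Ideal.span {g}) :
    ∃ a ∈ 𝒮 1, ∀ s ∈ 𝒮 1, ∃ γ : k, s - γ • a ∈ K := by
  have hgK : g ∉ K := by
    intro h
    apply hK1
    rw [Ideal.eq_top_iff_one]
    exact hnz 1 (by simpa using h)
  have hnot : ¬ ∀ s ∈ 𝒮 (n + 1), s ∈ K := by
    intro h
    apply hgK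
    have hg' := hg
    rw [show c = (n + 1) + (c - (n + 1)) by omega, std_add hst] at hg'
    clear hgK hS hnz hg
    induction hg' using Submodule.mul_induction_on' with
    | mem_mul_mem x hx y hy => exact K.mul_mem_right _ (h x hx)
    | add x _ y _ hx hy => exact add_mem hx hy
  have hc : c = n + 1 := by
    by_contra hne
    apply hnot
    intro s hs
    exact (grdiv hK hg hs (hS s hs)).2 (by omega)
  subst hc
  have hS' : ∀ s ∈ 𝒮 (n + 1), ∃ α : k, s - α • g ∈ K := by
    intro s hs
    obtain ⟨u, hu, h⟩ := (grdiv hK hg hs (hS s hs)).1 le_rfl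
    rw [Nat.sub_self] at hu
    obtain ⟨α, rfl⟩ := std_zero hst hu
    refine ⟨α, ?_⟩
    rwa [Algebra.smul_def, mul_comm]
  have hex : ∃ q ∈ 𝒮 n, ∃ a ∈ 𝒮 1, q * a ∉ K := by
    by_contra hcon
    push Not at hcon
    apply hnot
    intro s hs
    rw [std_add hst] at hs
    induction hs using Submodule.mul_induction_on' with
    | mem_mul_mem x hx y hy => exact hcon x hx y hy
    | add x _ y _ hx hy => exact add_mem hx hy
  obtain ⟨q, hq, a, ha, hqa⟩ := hex
  refine ⟨a, ha, fun s hs => ?_⟩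
  obtain ⟨α, hα⟩ := hS' (q * a) (SetLike.GradedMul.mul_mem hq ha)
  obtain ⟨β, hβ⟩ := hS' (q * s) (SetLike.GradedMul.mul_mem hq hs)
  have hα0 : α ≠ 0 := by
    rintro rfl
    apply hqa
    simpa using hα
  have h1 : g * (α • s - β • a) ∈ K := by
    have : g * (α • s - β • a) = (q * s - β • g) * a - (q * a - α • g) * s := by
      simp only [Algebra.smul_def]; ring
    rw [this]
    exact sub_mem (K.mul_mem_right _ hβ) (K.mul_mem_right _ hα)
  have h2 := hnz _ h1
  refine ⟨α⁻¹ * β, ?_⟩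
  have : s - (α⁻¹ * β) • a = algebraMap k S α⁻¹ * (α • s - β • a) := by
    rw [← Algebra.smul_def, smul_sub, smul_smul, smul_smul, inv_mul_cancel₀ hα0, one_smul]
  rw [this]
  exact K.mul_mem_left _ h2

theorem lemA (hst : IsStandardGraded k S 𝒮) {J : Ideal S} (hJ : J.IsHomogeneous 𝒮) (hJ1 : J ≠ ⊤)
    {f : S} {c : ℕ} (hc : 2 ≤ c) (hf : f ∈ 𝒮 c) (hnz : ∀ u, f * u ∈ J → u ∈ J)
    (hS : ∀ n, 3 ≤ n → ∀ s ∈ 𝒮 n, s ∈ J ⊔ Ideal.span {f})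
    (hdim : ¬ ∃ a ∈ 𝒮 1, ∀ s ∈ 𝒮 1, ∃ γ : k, s - γ • a ∈ J) :
    c = 2 ∧ ∃ x ∈ 𝒮 1, (∀ u, x * u ∈ J → u ∈ J) ∧ ∀ s ∈ 𝒮 2, ∃ y ∈ 𝒮 1, s - x * y ∈ J := by
  have hc2 : c = 2 := by
    by_contra hne
    exact hdim (lemC hst hJ hJ1 hf hnz (n := 2) (by omega) (hS 3 le_rfl))
  subst hc2
  refine ⟨rfl, ?_⟩
  let π : S →ₐ[k] S ⧸ J := Ideal.Quotient.mkₐ k J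
  have hπ : ∀ s t, π s = π t ↔ s - t ∈ J := fun s t => Ideal.Quotient.mk_eq_mk_iff_sub_mem s t
  have hfd := hst.2.2 2
  have hmul : ∀ i j, ∀ a ∈ (𝒮 i).map π.toLinearMap, ∀ b ∈ (𝒮 j).map π.toLinearMap, 3 ≤ i + j →
      ∃ c ∈ (𝒮 (i + j - 2)).map π.toLinearMap, a * b = π f * c := by
    rintro i j _ ⟨a, ha, rfl⟩ _ ⟨b, hb, rfl⟩ hij
    have hab : a * b ∈ 𝒮 (i + j) := SetLike.GradedMul.mul_mem ha hb
    obtain ⟨u, hu, h⟩ := (grdiv hJ hf hab (hS _ hij _ hab)).1 (by omega)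
    refine ⟨_, ⟨u, hu, rfl⟩, ?_⟩
    simp only [AlgHom.toLinearMap_apply, ← map_mul]
    exact (hπ _ _).2 h
  have hπnz : π f ∈ nonZeroDivisors (S ⧸ J) := by
    rw [mem_nonZeroDivisors_iff_right]
    intro z hz
    obtain ⟨u, rfl⟩ := Ideal.Quotient.mk_surjective z
    have : f * u ∈ J := by
      rw [← Ideal.Quotient.eq_zero_iff_mem, map_mul, mul_comm]; exact hz
    exact Ideal.Quotient.eq_zero_iff_mem.2 (hnz u this)
  obtain ⟨_, ⟨x, hx, rfl⟩, h⟩ := core_nzd (π f) hπnz ((𝒮 1).map π.toLinearMap)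
    ((𝒮 2).map π.toLinearMap) ⟨f, hf, rfl⟩ (by rw [← Submodule.map_mul, ← std_add hst])
    (fun a ha b hb => hmul 1 2 a ha b hb (by norm_num))
    (fun a ha b hb => hmul 2 2 a ha b hb (by norm_num))
  have hxs : ∀ s ∈ 𝒮 2, ∃ y ∈ 𝒮 1, s - x * y ∈ J := by
    intro s hs
    obtain ⟨_, ⟨y, hy, rfl⟩, hxy⟩ := h _ ⟨s, hs, rfl⟩
    refine ⟨y, hy, ?_⟩
    rw [← hπ]
    simpa using hxy.symm
  refine ⟨x, hx, fun u hu => ?_, hxs⟩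
  obtain ⟨y, hy, hxy⟩ := hxs f hf
  apply hnz
  have : f * u = (f - x * y) * u + y * (x * u) := by ring
  rw [this]
  exact add_mem (J.mul_mem_right _ hxy) (J.mul_mem_left _ hu)

theorem lemB (hst : IsStandardGraded k S 𝒮) [Nontrivial S] {J : Ideal S} (hJ : J.IsHomogeneous 𝒮)
    (hJm : J ≤ (HomogeneousIdeal.irrelevant 𝒮).toIdeal)
    {g : S} {c : ℕ} (hc : 2 ≤ c) (hg : g ∈ 𝒮 c) (hnz : ∀ u, g * u ∈ J → u ∈ J)
    {x : S} (hx : x ∈ 𝒮 1)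
    (hxnz : ∀ u, x * u ∈ J ⊔ Ideal.span {g} → u ∈ J ⊔ Ideal.span {g})
    (hS : ∀ s ∈ 𝒮 2, ∃ y ∈ 𝒮 1, s - x * y ∈ J ⊔ Ideal.span {g})
    (hdim : ¬ ∃ a ∈ 𝒮 1, ∃ b ∈ 𝒮 1, ∀ s ∈ 𝒮 1, ∃ γ δ : k, s - γ • a - δ • b ∈ J) : False := by
  have hK : (J ⊔ Ideal.span {x}).IsHomogeneous 𝒮 := by
    refine hJ.sup (Ideal.homogeneous_span 𝒮 _ ?_)
    intro y hy
    rw [Set.mem_singleton_iff] at hy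
    exact ⟨1, hy ▸ hx⟩
  have hK1 : J ⊔ Ideal.span {x} ≠ ⊤ := by
    intro h
    have h1 : (1 : S) ∈ (HomogeneousIdeal.irrelevant 𝒮).toIdeal := by
      have : J ⊔ Ideal.span {x} ≤ (HomogeneousIdeal.irrelevant 𝒮).toIdeal := by
        refine sup_le hJm ?_
        rw [Ideal.span_singleton_le_iff_mem]
        exact HomogeneousIdeal.mem_irrelevant_of_mem 𝒮 Nat.one_pos hx
      exact this (h ▸ Submodule.mem_top)
    have h2 : (decompose 𝒮 (1 : S) 0 : S) = 0 := h1
    rw [decompose_of_mem_same 𝒮 SetLike.GradedOne.one_mem] at h2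
    exact one_ne_zero h2
  obtain ⟨a, ha, h⟩ := lemC hst hK hK1 hg (by
      intro u hu
      obtain ⟨j, hj, z, hz, hjz⟩ := Submodule.mem_sup.1 hu
      obtain ⟨v, rfl⟩ := Ideal.mem_span_singleton'.1 hz
      have hv : v ∈ J ⊔ Ideal.span {g} := by
        apply hxnz
        rw [show x * v = - j + u * g by linear_combination hjz]
        exact Submodule.add_mem_sup (neg_mem hj)
          (Ideal.mul_mem_left _ _ (Ideal.mem_span_singleton_self g))
      obtain ⟨j', hj', z', hz', hjz'⟩ := Submodule.mem_sup.1 hv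
      obtain ⟨w, rfl⟩ := Ideal.mem_span_singleton'.1 hz'
      have : u - w * x ∈ J := by
        apply hnz
        rw [show g * (u - w * x) = j + j' * x by rw [← hjz'] at hjz; linear_combination -hjz]
        exact add_mem hj (J.mul_mem_right _ hj')
      rw [show u = (u - w * x) + w * x by ring]
      exact Submodule.add_mem_sup this
        (Ideal.mul_mem_left _ _ (Ideal.mem_span_singleton_self x))) (n := 1) (by omega) (by
      intro s hs
      obtain ⟨y, hy, h⟩ := hS s hs
      have h1 : J ⊔ Ideal.span {g} ≤ J ⊔ Ideal.span {x} ⊔ Ideal.span {g} :=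
        sup_le_sup_right le_sup_left _
      rw [show s = (s - x * y) + x * y by ring]
      refine add_mem (h1 h) (Ideal.mul_mem_right _ _ ?_)
      exact (le_sup_right.trans le_sup_left : Ideal.span {x} ≤ _) (Ideal.mem_span_singleton_self x))
  apply hdim
  refine ⟨a, ha, x, hx, fun s hs => ?_⟩
  obtain ⟨γ, hγ⟩ := h s hs
  obtain ⟨u, hu, h'⟩ := (grdiv hJ hx (sub_mem hs ((𝒮 1).smul_mem γ ha)) hγ).1 le_rfl
  obtain ⟨δ, rfl⟩ := std_zero hst hu
  refine ⟨γ, δ, ?_⟩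
  rwa [Algebra.smul_def δ, mul_comm _ x]

theorem irr_le (hst : IsStandardGraded k S 𝒮) :
    (HomogeneousIdeal.irrelevant 𝒮).toIdeal = Ideal.span (𝒮 1 : Set S) := by
  apply le_antisymm
  · intro s hs
    classical
    have hs0 : (decompose 𝒮 s 0 : S) = 0 := hs
    rw [← DirectSum.sum_support_decompose 𝒮 s]
    refine sum_mem fun j hj => ?_
    rcases Nat.eq_zero_or_pos j with rfl | hj0
    · rw [hs0]; exact zero_mem _
    · have hm := (decompose 𝒮 s j).2
      generalize ((decompose 𝒮 s j : 𝒮 j) : S) = t at hm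
      rw [show 𝒮 j = 𝒮 1 * 𝒮 (j - 1) by rw [← std_add hst]; congr 1; omega] at hm
      induction hm using Submodule.mul_induction_on' with
      | mem_mul_mem x hx y hy => exact Ideal.mul_mem_right _ _ (Ideal.subset_span hx)
      | add x _ y _ hx hy => exact add_mem hx hy
  · rw [Ideal.span_le]
    intro s hs
    exact HomogeneousIdeal.mem_irrelevant_of_mem 𝒮 Nat.one_pos hs

theorem minmult (hst : IsStandardGraded k S 𝒮) {x : S} (hx : x ∈ 𝒮 1)
    (h : ∀ s ∈ 𝒮 2, ∃ y ∈ 𝒮 1, s = x * y) :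
    Ideal.span {x} * (HomogeneousIdeal.irrelevant 𝒮).toIdeal =
          (HomogeneousIdeal.irrelevant 𝒮).toIdeal ^ 2 := by
  rw [irr_le hst, sq]
  apply le_antisymm
  · apply Ideal.mul_mono_left
    rw [Ideal.span_singleton_le_iff_mem]
    exact Ideal.subset_span hx
  · rw [Ideal.span_mul_span', Ideal.span_le]
    rintro _ ⟨a, ha, b, hb, rfl⟩
    obtain ⟨y, hy, hxy⟩ := h (a * b) (SetLike.GradedMul.mul_mem (i := 1) (j := 1) ha hb)
    change a * b ∈ _
    rw [hxy]
    exact Ideal.mul_mem_mul (Ideal.mem_span_singleton_self x) (Ideal.subset_span hy)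

end graded

/-- the ideal generated by the first `i` elements -/
def initIdeal {S : Type} [CommRing S] {d : ℕ} (fs : Fin d → S) (i : ℕ) : Ideal S :=
  Ideal.span {x | ∃ j : Fin d, j.1 < i ∧ fs j = x}

theorem initIdeal_succ {S : Type} [CommRing S] {d : ℕ} (fs : Fin d → S) (i : ℕ) (hi : i < d) :
    initIdeal fs (i + 1) = initIdeal fs i ⊔ Ideal.span {fs ⟨i, hi⟩} := by
  rw [initIdeal, initIdeal, ← Ideal.span_union]
  congr 1
  ext x
  simp only [Set.mem_ofPred_eq, Set.mem_union, Set.mem_singleton_iff]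
  constructor
  · rintro ⟨j, hj, rfl⟩
    rcases Nat.lt_succ_iff_lt_or_eq.1 hj with h | h
    · exact Or.inl ⟨j, h, rfl⟩
    · right; congr 1; ext; exact h
  · rintro (⟨j, hj, rfl⟩ | rfl)
    · exact ⟨j, by omega, rfl⟩
    · exact ⟨⟨i, hi⟩, Nat.lt_succ_self i, rfl⟩

theorem initIdeal_zero {S : Type} [CommRing S] {d : ℕ} (fs : Fin d → S) : initIdeal fs 0 = ⊥ := by
  simp [initIdeal]

theorem initIdeal_all {S : Type} [CommRing S] {d : ℕ} (fs : Fin d → S) :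
    initIdeal fs d = Ideal.span (Set.range fs) := by
  rw [initIdeal]
  congr 1
  ext x
  simp

theorem initIdeal_mono {S : Type} [CommRing S] {d : ℕ} (fs : Fin d → S) (i : ℕ) :
    initIdeal fs i ≤ Ideal.span (Set.range fs) := by
  apply Ideal.span_mono
  rintro _ ⟨j, -, rfl⟩
  exact ⟨j, rfl⟩

theorem ofList_take {S : Type} [CommRing S] {d : ℕ} (fs : Fin d → S) (i : ℕ) :
    Ideal.ofList ((List.ofFn fs).take i) = initIdeal fs i := by
  rw [initIdeal, Ideal.ofList]
  congr 1
  ext x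
  simp only [Set.mem_ofPred_eq, List.mem_take_iff_getElem, List.getElem_ofFn, List.length_ofFn]
  constructor
  · rintro ⟨j, hj, rfl⟩
    exact ⟨⟨j, by omega⟩, by simp; omega, rfl⟩
  · rintro ⟨j, hj, rfl⟩
    exact ⟨j.1, by omega, rfl⟩

theorem reg_nzd {S : Type} [CommRing S] {d : ℕ} {fs : Fin d → S}
    (h : RingTheory.Sequence.IsRegular S (List.ofFn fs)) (i : ℕ) (hi : i < d) (u : S)
    (hu : fs ⟨i, hi⟩ * u ∈ initIdeal fs i) : u ∈ initIdeal fs i := by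
  have h1 := (RingTheory.Sequence.isWeaklyRegular_iff S (List.ofFn fs)).1 h.1 i (by simpa using hi)
  rw [ofList_take, List.getElem_ofFn] at h1
  have hI : (initIdeal fs i • ⊤ : Submodule S S) = initIdeal fs i := by simp
  rw [hI] at h1
  have : (Submodule.Quotient.mk u : S ⧸ initIdeal fs i) = 0 := by
    apply h1
    change fs ⟨i, hi⟩ • (Submodule.Quotient.mk u : S ⧸ initIdeal fs i) = fs ⟨i, hi⟩ • 0
    rw [smul_zero, ← Submodule.Quotient.mk_smul, Submodule.Quotient.mk_eq_zero]
    exact hu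
  rwa [Submodule.Quotient.mk_eq_zero] at this

/-- a non-Gorenstein homogeneous graded Artinian k-algebra with a
nontrivial deformation whose Hilbert series is (1+t)(1+rt) with r ≥ 2 is isomorphic
(as a graded algebra) to S/fS for a one-dimensional CM standard graded algebra S with
minimal multiplicity and a degree-2 homogeneous nonzerodivisor f. -/
theorem stmt_13 (k R : Type) [Field k] [CommRing R] [Algebra k R] [IsArtinianRing R]
    (𝒜 : ℕ → Submodule k R) [GradedAlgebra 𝒜] (hRG : IsStandardGraded k R 𝒜)
    (hng : ¬ HasFiniteSelfInjDim R)
    (r : ℕ) (hr : 2 ≤ r)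
    (h0 : Module.finrank k ↥(𝒜 0) = 1) (h1 : Module.finrank k ↥(𝒜 1) = r + 1)
    (h2 : Module.finrank k ↥(𝒜 2) = r) (h3 : ∀ n, 3 ≤ n → 𝒜 n = ⊥)
    (hdef : ∃ (G : GradedAlgebraOver k) (d : ℕ) (fs : Fin d → G.S),
      IsStandardGraded k G.S G.grading ∧ 0 < d ∧ ringKrullDim G.S = d ∧
      (∀ i, ∃ c, 2 ≤ c ∧ fs i ∈ G.grading c) ∧
      RingTheory.Sequence.IsRegular G.S (List.ofFn fs) ∧
      ∃ e : (G.S ⧸ Ideal.span (Set.range fs)) ≃ₐ[k] R,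
        ∀ (n : ℕ) (s : G.S), s ∈ G.grading n →
          e (Ideal.Quotient.mk (Ideal.span (Set.range fs)) s) ∈ 𝒜 n) :
    ∃ (G : GradedAlgebraOver k) (f : G.S),
      IsStandardGraded k G.S G.grading ∧ ringKrullDim G.S = 1 ∧
      (∃ x ∈ G.grading 1, x ∈ nonZeroDivisors G.S ∧
        Ideal.span {x} * (HomogeneousIdeal.irrelevant G.grading).toIdeal =
          (HomogeneousIdeal.irrelevant G.grading).toIdeal ^ 2) ∧
      f ∈ G.grading 2 ∧ f ∈ nonZeroDivisors G.S ∧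
      ∃ e : (G.S ⧸ Ideal.span {f}) ≃ₐ[k] R,
        ∀ (n : ℕ) (s : G.S), s ∈ G.grading n →
          e (Ideal.Quotient.mk (Ideal.span {f}) s) ∈ 𝒜 n := by
  obtain ⟨G, d, fs, hst, hd, hkd, hdeg, hreg, e, he⟩ := hdef
  have hI1 : Ideal.span (Set.range fs) ≠ ⊤ := by
    intro h
    have h1 := hreg.top_ne_smul
    have h2 := ofList_take fs d
    rw [List.take_of_length_le (by simp), initIdeal_all, h] at h2
    apply h1
    rw [h2]; simp
  have hnt : Nontrivial G.S := by
    by_contra hcon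
    rw [not_nontrivial_iff_subsingleton] at hcon
    exact hI1 (Subsingleton.elim _ _)
  have hhom : ∀ i, (initIdeal fs i).IsHomogeneous G.grading := by
    intro i
    refine Ideal.homogeneous_span _ _ ?_
    rintro _ ⟨j, -, rfl⟩
    obtain ⟨c, -, hc⟩ := hdeg j
    exact ⟨c, hc⟩
  have hirr : ∀ i, initIdeal fs i ≤ (HomogeneousIdeal.irrelevant G.grading).toIdeal := by
    intro i
    refine Ideal.span_le.2 ?_
    rintro _ ⟨j, -, rfl⟩
    obtain ⟨c, hc2, hc⟩ := hdeg j
    exact HomogeneousIdeal.mem_irrelevant_of_mem _ (by omega) hc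
  have hbig : ∀ n, 3 ≤ n → ∀ s ∈ G.grading n, s ∈ Ideal.span (Set.range fs) := by
    intro n hn s hs
    have := he n s hs
    rw [h3 n hn, Submodule.mem_bot] at this
    rw [← Ideal.Quotient.eq_zero_iff_mem]
    exact (map_eq_zero_iff e e.injective).1 this
  have hsurj : ∀ n, ∀ z ∈ 𝒜 n, ∃ s ∈ G.grading n,
      e (Ideal.Quotient.mk (Ideal.span (Set.range fs)) s) = z := by
    intro n z hz
    obtain ⟨w, rfl⟩ := e.surjective z
    obtain ⟨s, rfl⟩ := Ideal.Quotient.mk_surjective w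
    refine ⟨_, (DirectSum.decompose G.grading s n).2, ?_⟩
    have key : ∀ t : G.S,
        (DirectSum.decompose 𝒜 (e (Ideal.Quotient.mk (Ideal.span (Set.range fs)) t)) n : R) =
        e (Ideal.Quotient.mk (Ideal.span (Set.range fs)) (DirectSum.decompose G.grading t n)) := by
      intro t
      induction t using DirectSum.Decomposition.inductionOn G.grading with
      | zero => simp
      | @homogeneous i m =>
        by_cases hin : i = n
        · subst hin
          rw [DirectSum.decompose_of_mem_same 𝒜 (he _ _ m.2),
            DirectSum.decompose_of_mem_same G.grading m.2]
        · rw [DirectSum.decompose_of_mem_ne 𝒜 (he _ _ m.2) hin,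
            DirectSum.decompose_of_mem_ne G.grading m.2 hin]
          simp
      | add a b ha hb =>
        simp only [map_add, DirectSum.decompose_add, DirectSum.add_apply, Submodule.coe_add, ha, hb]
    rw [← key, DirectSum.decompose_of_mem_same 𝒜 hz]
  have hdimI : ¬ ∃ a ∈ G.grading 1, ∃ b ∈ G.grading 1, ∀ s ∈ G.grading 1, ∃ γ δ : k,
      s - γ • a - δ • b ∈ Ideal.span (Set.range fs) := by
    rintro ⟨a, ha, b, hb, h⟩
    let ψ : G.S →ₐ[k] R := (e : _ →ₐ[k] R).comp (Ideal.Quotient.mkₐ k (Ideal.span (Set.range fs)))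
    have hψ : ∀ s ∈ Ideal.span (Set.range fs), ψ s = 0 := by
      intro s hs
      have : Ideal.Quotient.mk (Ideal.span (Set.range fs)) s = 0 :=
        Ideal.Quotient.eq_zero_iff_mem.2 hs
      change e (Ideal.Quotient.mk _ s) = 0
      rw [this, map_zero]
    have hle : 𝒜 1 ≤ Submodule.span k (Set.range ![ψ a, ψ b]) := by
      intro z hz
      obtain ⟨s, hs, rfl⟩ := hsurj 1 z hz
      obtain ⟨γ, δ, hγ⟩ := h s hs
      have h0 := hψ _ hγ
      simp only [map_sub, map_smul] at h0
      have : ψ s = γ • ψ a + δ • ψ b := by linear_combination h0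
      change ψ s ∈ _
      rw [this]
      exact add_mem (Submodule.smul_mem _ _ (Submodule.subset_span ⟨0, rfl⟩))
        (Submodule.smul_mem _ _ (Submodule.subset_span ⟨1, rfl⟩))
    have hfin : FiniteDimensional k (Submodule.span k (Set.range ![ψ a, ψ b])) :=
      FiniteDimensional.span_of_finite k (Set.finite_range _)
    have hb1 := Submodule.finrank_mono hle
    have hb2 := finrank_range_le_card (R := k) ![ψ a, ψ b]
    rw [Set.finrank, Fintype.card_fin] at hb2
    omega
  have hdimJ : ∀ i, ¬ ∃ a ∈ G.grading 1, ∃ b ∈ G.grading 1, ∀ s ∈ G.grading 1, ∃ γ δ : k,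
      s - γ • a - δ • b ∈ initIdeal fs i := by
    rintro i ⟨a, ha, b, hb, h⟩
    refine hdimI ⟨a, ha, b, hb, fun s hs => ?_⟩
    obtain ⟨γ, δ, hh⟩ := h s hs
    exact ⟨γ, δ, initIdeal_mono fs i hh⟩
  obtain ⟨m, rfl⟩ : ∃ m, d = m + 1 := ⟨d - 1, by omega⟩
  obtain ⟨c, hc2, hc⟩ := hdeg ⟨m, by omega⟩
  obtain ⟨hcc, x, hx, hxnz, hx2⟩ := lemA hst (hhom m)
    (fun h => hI1 (top_le_iff.1 (h ▸ initIdeal_mono fs m))) hc2 hc (reg_nzd hreg m (by omega))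
    (by rw [← initIdeal_succ, initIdeal_all]; exact hbig)
    (by
      rintro ⟨a, ha, h⟩
      refine hdimJ m ⟨a, ha, 0, zero_mem _, fun s hs => ?_⟩
      obtain ⟨γ, hγ⟩ := h s hs
      exact ⟨γ, 0, by simpa using hγ⟩)
  subst hcc
  rcases Nat.eq_zero_or_pos m with rfl | hm
  · have hr0 : Set.range fs = {fs 0} := by
      ext z
      simp [Fin.exists_fin_one, eq_comm]
    have hnz0 := reg_nzd hreg 0 (by omega)
    rw [initIdeal_zero] at hxnz hx2 hnz0
    simp only [Ideal.mem_bot] at hxnz hx2 hnz0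
    refine ⟨G, fs 0, hst, by simpa using hkd, ⟨x, hx, ?_, minmult hst hx ?_⟩, hc, ?_, ?_⟩
    · rw [mem_nonZeroDivisors_iff_right]
      intro z hz
      exact hxnz z (by rw [mul_comm]; exact hz)
    · intro s hs
      obtain ⟨y, hy, h⟩ := hx2 s hs
      exact ⟨y, hy, sub_eq_zero.1 h⟩
    · rw [mem_nonZeroDivisors_iff_right]
      intro z hz
      exact hnz0 z (by rw [mul_comm]; exact hz)
    · rw [← hr0]
      exact ⟨e, he⟩
  · exfalso
    obtain ⟨n, rfl⟩ : ∃ n, m = n + 1 := ⟨m - 1, by omega⟩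
    obtain ⟨c', hc2', hc'⟩ := hdeg ⟨n, by omega⟩
    rw [initIdeal_succ fs n (by omega)] at hxnz hx2
    exact lemB hst (hhom n) (hirr n) hc2' hc' (reg_nzd hreg n (by omega)) hx hxnz hx2 (hdimJ n)
end

section
/- Let S be a one-dimensional Cohen-Macaulay homogeneous graded ring with minimal multiplicity over an algebraically closed field k, f a homogeneous non-zerodivisor of degree 2, R = S/fS, x a degree-one element with xn = n², and z a degree-one element of R linearly independent from x. For n ≥ 1 let M([x],n) be the R-module presented by the n×n upper bidiagonal matrix with x on the diagonal and z on the superdiagonal. Then M([x],n) is an indecomposable R-module of G-dimension zero, minimally generated by n elements, and M([x],n) has a filtration 0 = M₀ ⊂ M₁ ⊂ ⋯ ⊂ M_n = M([x],n) with M_i/M_{i−1} ≅ R/xR. -/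
open CategoryTheory

/-- An indecomposable (nonzero) module: it is not a direct sum of two proper submodules. -/
def IsIndecomposableModule (R : Type) [CommRing R] (M : Type) [AddCommGroup M]
    [Module R M] : Prop :=
  (⊥ : Submodule R M) ≠ ⊤ ∧
    ∀ N₁ N₂ : Submodule R M, IsCompl N₁ N₂ → N₁ = ⊥ ∨ N₂ = ⊥

section
variable {R : Type} [CommRing R] {F : Type} [AddCommGroup F] [Module R F]
    {M : Type} [AddCommGroup M] [Module R M]

noncomputable def perCx (φ ψ : F →ₗ[R] F) (h1 : φ ∘ₗ ψ = 0) (h2 : ψ ∘ₗ φ = 0) :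
    ChainComplex (ModuleCat R) ℕ :=
  HomologicalComplex.alternatingConst (ModuleCat.of R F) (φ := ModuleCat.ofHom ψ)
    (ψ := ModuleCat.ofHom φ)
    (by rw [← ModuleCat.ofHom_comp, h1]; rfl) (by rw [← ModuleCat.ofHom_comp, h2]; rfl)
    (fun _ _ => ComplexShape.down_nat_odd_add)

lemma perCx_d_even (φ ψ : F →ₗ[R] F) (h1 : φ ∘ₗ ψ = 0) (h2 : ψ ∘ₗ φ = 0) (i : ℕ) (hi : Even i) :
    (perCx φ ψ h1 h2).d (i+1) i = ModuleCat.ofHom φ := by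
  have : ¬ Even (i+1) := by simpa [Nat.even_add_one] using hi
  exact (dif_pos (by simp)).trans (dif_neg this)

lemma perCx_d_odd (φ ψ : F →ₗ[R] F) (h1 : φ ∘ₗ ψ = 0) (h2 : ψ ∘ₗ φ = 0) (i : ℕ) (hi : ¬ Even i) :
    (perCx φ ψ h1 h2).d (i+1) i = ModuleCat.ofHom ψ := by
  have : Even (i+1) := by simpa [Nat.even_add_one] using hi
  exact (dif_pos (by simp)).trans (dif_pos this)

lemma ext_vanish [Module.Projective R F] (φ ψ : F →ₗ[R] F) (h1 : Function.Exact φ ψ)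
    (h2 : Function.Exact ψ φ) (π : F →ₗ[R] M) (hπ : Function.Surjective π)
    (hφπ : Function.Exact φ π)
    (d1 : ∀ g : F →ₗ[R] R, g ∘ₗ φ = 0 → ∃ h : F →ₗ[R] R, h ∘ₗ ψ = g)
    (d2 : ∀ g : F →ₗ[R] R, g ∘ₗ ψ = 0 → ∃ h : F →ₗ[R] R, h ∘ₗ φ = g)
    (i : ℕ) (hi : 0 < i) : Subsingleton (ExtGrp R M R i) := by
  have c1 : φ ∘ₗ ψ = 0 := h2.linearMap_comp_eq_zero
  have c2 : ψ ∘ₗ φ = 0 := h1.linearMap_comp_eq_zero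
  let K := perCx φ ψ c1 c2
  have hK1 : K.d 1 0 = ModuleCat.ofHom φ := perCx_d_even φ ψ c1 c2 0 (by simp)
  let p : K ⟶ (ChainComplex.single₀ (ModuleCat R)).obj (ModuleCat.of R M) :=
    (K.toSingle₀Equiv _).symm ⟨ModuleCat.ofHom π, by
      rw [hK1]
      exact (ModuleCat.ofHom_comp _ _).symm.trans (by rw [hφπ.linearMap_comp_eq_zero]; rfl)⟩
  have hq : QuasiIso p := ⟨fun m => by
    cases m with
    | zero =>
      rw [ChainComplex.quasiIsoAt₀_iff, ShortComplex.quasiIso_iff_of_zeros' _ rfl rfl rfl]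
      have hp0 : p.f 0 = ModuleCat.ofHom π := 
        ChainComplex.toSingle₀Equiv_symm_apply_f_zero _ _
      constructor
      · rw [ShortComplex.moduleCat_exact_iff]
        intro v hv
        change (p.f 0) v = 0 at hv
        change ∃ w, (K.d 1 0) w = v
        rw [hp0] at hv
        rw [hK1]
        exact (hφπ v).1 hv
      · change Epi (p.f 0)
        rw [hp0]
        exact (ModuleCat.epi_iff_surjective _).2 hπ
    | succ m =>
      rw [quasiIsoAt_iff_exactAt' (hL := ChainComplex.exactAt_succ_single_obj ..),
          HomologicalComplex.exactAt_iff' _ (m + 2) (m + 1) m (by simp) (by simp),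
          ShortComplex.moduleCat_exact_iff]
      intro v hv
      change (K.d (m+1) m) v = 0 at hv
      change ∃ w, (K.d (m+1+1) (m+1)) w = v
      by_cases hm : Even m
      · rw [perCx_d_even _ _ _ _ _ hm] at hv
        rw [perCx_d_odd _ _ _ _ _ (by simpa [Nat.even_add_one] using hm)]
        exact (h2 v).1 hv
      · rw [perCx_d_odd _ _ _ _ _ hm] at hv
        rw [perCx_d_even _ _ _ _ _ (by simpa [Nat.even_add_one] using hm)]
        exact (h1 v).1 hv⟩
  let P : ProjectiveResolution (ModuleCat.of R M) :=
    { complex := K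
      projective := fun _ => inferInstanceAs (Projective (ModuleCat.of R F))
      π := p
      quasiIso := hq }
  have hz : Limits.IsZero (((Ext R (ModuleCat R) i).obj
      (Opposite.op (ModuleCat.of R M))).obj (ModuleCat.of R R)) := by
    refine Limits.IsZero.of_iso ?_ (P.isoExt i (ModuleCat.of R R))
    obtain ⟨m, rfl⟩ : ∃ m, i = m + 1 := ⟨i - 1, by omega⟩
    rw [← HomologicalComplex.exactAt_iff_isZero_homology,
      HomologicalComplex.exactAt_iff' _ m (m + 1) (m + 2) (by simp) (by simp),
      ShortComplex.moduleCat_exact_iff]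
    intro g hg
    change (ModuleCat.of R F ⟶ ModuleCat.of R R) at g
    change K.d (m+1+1) (m+1) ≫ g = 0 at hg
    change ∃ h : (ModuleCat.of R F ⟶ ModuleCat.of R R), K.d (m+1) m ≫ h = g
    by_cases hm : Even m
    · rw [perCx_d_odd _ _ _ _ _ (by simpa [Nat.even_add_one] using hm)] at hg
      rw [perCx_d_even _ _ _ _ _ hm]
      obtain ⟨h, hh⟩ := d2 g.hom (congrArg ModuleCat.Hom.hom hg)
      exact ⟨ModuleCat.ofHom h, ModuleCat.hom_ext hh⟩
    · rw [perCx_d_even _ _ _ _ _ (by simpa [Nat.even_add_one] using hm)] at hg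
      rw [perCx_d_odd _ _ _ _ _ hm]
      obtain ⟨h, hh⟩ := d1 g.hom (congrArg ModuleCat.Hom.hom hg)
      exact ⟨ModuleCat.ofHom h, ModuleCat.hom_ext hh⟩
  exact ModuleCat.subsingleton_of_isZero hz
end
section
variable {R : Type} [CommRing R] {n : ℕ} {M : Type} [AddCommGroup M] [Module R M]

lemma exact_mat (A B : Matrix (Fin n) (Fin n) R) (h : A * B = 0)
    (hex : ∀ v, A.mulVec v = 0 → ∃ w, B.mulVec w = v) :
    Function.Exact B.mulVecLin A.mulVecLin := by
  intro v
  constructor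
  · intro hv
    exact hex v hv
  · rintro ⟨w, rfl⟩
    simp [h]

lemma dual_mat (A B : Matrix (Fin n) (Fin n) R)
    (hex : ∀ v, A.transpose.mulVec v = 0 → ∃ w, B.transpose.mulVec w = v)
    (g : (Fin n → R) →ₗ[R] R) (hg : g ∘ₗ A.mulVecLin = 0) :
    ∃ w, (dotProductEquiv R (Fin n) w) ∘ₗ B.mulVecLin = g := by
  obtain ⟨u, rfl⟩ := (dotProductEquiv R (Fin n)).surjective g
  have hu : A.transpose.mulVec u = 0 := by
    rw [Matrix.mulVec_transpose]
    apply (dotProductEquiv R (Fin n)).injective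
    rw [map_zero, ← hg]
    ext i
    simp
    rfl
  obtain ⟨w, rfl⟩ := hex u hu
  refine ⟨w, ?_⟩
  rw [Matrix.mulVec_transpose]
  ext i
  simp
  rfl

lemma gdim_mat (A B : Matrix (Fin n) (Fin n) R) (hAB : A * B = 0) (hBA : B * A = 0)
    (h1 : ∀ v, A.mulVec v = 0 → ∃ w, B.mulVec w = v)
    (h2 : ∀ v, B.mulVec v = 0 → ∃ w, A.mulVec w = v)
    (h3 : ∀ v, A.transpose.mulVec v = 0 → ∃ w, B.transpose.mulVec w = v)
    (h4 : ∀ v, B.transpose.mulVec v = 0 → ∃ w, A.transpose.mulVec w = v)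
    (π : (Fin n → R) →ₗ[R] M) (hπ : Function.Surjective π)
    (hk : Function.Exact A.mulVecLin π) : GDimZero R M := by
  have hAB' : B.transpose * A.transpose = 0 := by rw [← Matrix.transpose_mul, hAB]; simp
  have hBA' : A.transpose * B.transpose = 0 := by rw [← Matrix.transpose_mul, hBA]; simp
  -- descend `B` to `M`
  obtain ⟨Bb, hBb⟩ : ∃ Bb : M →ₗ[R] (Fin n → R), Bb ∘ₗ π = B.mulVecLin := by
    have hle : LinearMap.ker π ≤ LinearMap.ker B.mulVecLin := by
      intro v hv
      obtain ⟨w, rfl⟩ := (hk v).1 hv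
      simp [hBA]
    refine ⟨(LinearMap.ker π).liftQ B.mulVecLin hle ∘ₗ
      (π.quotKerEquivOfSurjective hπ).symm.toLinearMap, ?_⟩
    ext v : 1
    have : (π.quotKerEquivOfSurjective hπ).symm (π (LinearMap.single R (fun _ => R) v 1)) =
      (LinearMap.ker π).mkQ (LinearMap.single R (fun _ => R) v 1) := by
      rw [LinearEquiv.symm_apply_eq]; rfl
    ext
    simp only [LinearMap.comp_apply, LinearEquiv.coe_coe, this]
    simp
  have hBb' : ∀ v, Bb (π v) = B.mulVec v := fun v => LinearMap.congr_fun hBb v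
  let π' : (Fin n → R) →ₗ[R] Module.Dual R M :=
    Bb.dualMap ∘ₗ (dotProductEquiv R (Fin n)).toLinearMap
  have hπ'a : ∀ w v, π' w (π v) = dotProduct w (B.mulVec v) := by
    intro w v
    simp [π', hBb']
  have hπ's : Function.Surjective π' := by
    intro g
    obtain ⟨w, hw⟩ := dual_mat A B h3 (g ∘ₗ π) (by
      rw [LinearMap.comp_assoc, hk.linearMap_comp_eq_zero, LinearMap.comp_zero])
    refine ⟨w, ?_⟩
    ext m
    obtain ⟨v, rfl⟩ := hπ m
    rw [hπ'a]
    exact LinearMap.congr_fun hw v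
  have hk' : Function.Exact A.transpose.mulVecLin π' := by
    intro w
    have : π' w = 0 ↔ B.transpose.mulVec w = 0 := by
      rw [Matrix.mulVec_transpose]
      constructor
      · intro h
        apply (dotProductEquiv R (Fin n)).injective
        ext i
        have := hπ'a w (Pi.single i 1)
        rw [h] at this
        simpa using! this.symm
      · intro h
        ext m
        obtain ⟨v, rfl⟩ := hπ m
        rw [hπ'a, Matrix.dotProduct_mulVec, h]
        simp
    rw [this]
    constructor
    · intro h; exact h4 w h
    · rintro ⟨u, rfl⟩
      rw [Matrix.mulVecLin_apply, Matrix.mulVec_mulVec, hAB', Matrix.zero_mulVec]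
  refine ⟨⟨?_, ?_⟩, ?_, ?_⟩
  · rw [injective_iff_map_eq_zero]
    intro m hm
    obtain ⟨v, rfl⟩ := hπ m
    rw [hk v]
    apply h2
    funext i
    have := hπ'a (Pi.single i 1) v
    have h0 : π' (Pi.single i 1) (π v) = 0 := LinearMap.congr_fun hm (π' (Pi.single i 1))
    rw [h0] at this
    simpa using this.symm
  · intro ξ
    obtain ⟨u, hu⟩ := (dotProductEquiv R (Fin n)).surjective (ξ ∘ₗ π')
    have hu' : ∀ w, ξ (π' w) = dotProduct u w := fun w => (LinearMap.congr_fun hu w).symm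
    have hAu : A.mulVec u = 0 := by
      funext i
      have := hu' (A.transpose.mulVec (Pi.single i 1))
      have h0 : π' (A.transpose.mulVec (Pi.single i 1)) = 0 :=
        (hk' _).2 ⟨_, rfl⟩
      rw [h0, map_zero, Matrix.mulVec_transpose, dotProduct_comm, ← Matrix.dotProduct_mulVec] at this
      simpa using this.symm
    obtain ⟨v, rfl⟩ := h1 u hAu
    refine ⟨π v, ?_⟩
    ext g
    obtain ⟨w, rfl⟩ := hπ's g
    rw [hu', Module.Dual.eval_apply, hπ'a, dotProduct_comm]
  · intro i hi
    exact ext_vanish A.mulVecLin B.mulVecLin (exact_mat B A hBA h2) (exact_mat A B hAB h1) π hπ hk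
      (fun g hg => (dual_mat A B h3 g hg).imp' _ fun _ h => h)
      (fun g hg => (dual_mat B A h4 g hg).imp' _ fun _ h => h) i hi
  · intro i hi
    exact ext_vanish A.transpose.mulVecLin B.transpose.mulVecLin
      (exact_mat B.transpose A.transpose hAB' h4)
      (exact_mat A.transpose B.transpose hBA' h3) π' hπ's hk'
      (fun g hg => (dual_mat A.transpose B.transpose (by simpa using h1) g hg).imp' _ fun _ h => h)
      (fun g hg => (dual_mat B.transpose A.transpose (by simpa using h2) g hg).imp' _ fun _ h => h)
      i hi
end
section
variable {R : Type} [CommRing R] {n : ℕ} {M : Type} [AddCommGroup M] [Module R M]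

/-- the shift matrix -/
def shiftMat (R : Type) [CommRing R] (n : ℕ) : Matrix (Fin n) (Fin n) R :=
  Matrix.of fun i j => if (j : ℕ) = (i : ℕ) + 1 then 1 else 0

/-- the bidiagonal matrix -/
def bidiag (n : ℕ) (x z : R) : Matrix (Fin n) (Fin n) R :=
  Matrix.of fun (i j : Fin n) => if j = i then x else if (j : ℕ) = (i : ℕ) + 1 then z else 0

lemma bidiag_eq (x z : R) : bidiag n x z = x • (1 : Matrix (Fin n) (Fin n) R) + z • shiftMat R n := by
  ext i j
  by_cases h : j = i
  · subst h
    simp [bidiag, shiftMat]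
  · simp [bidiag, shiftMat, h, Matrix.one_apply_ne (Ne.symm h)]

lemma shiftMat_mulVec (v : Fin n → R) (i : Fin n) :
    (shiftMat R n).mulVec v i = if h : (i : ℕ) + 1 < n then v ⟨i + 1, h⟩ else 0 := by
  simp only [shiftMat, Matrix.mulVec, dotProduct, Matrix.of_apply, ite_mul, one_mul, zero_mul]
  split_ifs with h
  · rw [Finset.sum_eq_single ⟨i + 1, h⟩]
    · simp
    · intro b _ hb
      rw [if_neg]
      intro h'
      exact hb (Fin.ext h')
    · simp
  · apply Finset.sum_eq_zero
    intro j _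
    rw [if_neg]
    omega

lemma bidiag_mulVec (x z : R) (v : Fin n → R) (i : Fin n) :
    (bidiag n x z).mulVec v i = x * v i + z * (if h : (i : ℕ) + 1 < n then v ⟨i + 1, h⟩ else 0) := by
  rw [bidiag_eq, Matrix.add_mulVec, Matrix.smul_mulVec, Matrix.smul_mulVec, Matrix.one_mulVec,
    Pi.add_apply, Pi.smul_apply, Pi.smul_apply, shiftMat_mulVec]
  rfl

/-- vectors supported on the first `i` coordinates -/
def firstCoords (R : Type) [CommRing R] (n i : ℕ) : Submodule R (Fin n → R) where
  carrier := {v | ∀ j : Fin n, i ≤ (j : ℕ) → v j = 0}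
  add_mem' := by
    intro a b ha hb j hj
    simp [ha j hj, hb j hj]
  zero_mem' := by intro j _; rfl
  smul_mem' := by
    intro c a ha j hj
    simp [ha j hj]

lemma filtr (x z : R) (m : Ideal R) (hm2 : m ^ 2 ≤ Ideal.span {x}) (hzm : z ∈ m)
    (hstar : ∀ a b : R, a * x + b * z ∈ m ^ 2 → a ∈ m ∧ b ∈ m)
    (π : (Fin n → R) →ₗ[R] M) (hπ : Function.Surjective π)
    (hk : Function.Exact (bidiag n x z).mulVecLin π) :
    ∃ c : Fin (n + 1) → Submodule R M,
          Monotone c ∧ c 0 = ⊥ ∧ c (Fin.last n) = ⊤ ∧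
          ∀ i : Fin n, Nonempty
            ((↥(c i.succ) ⧸ Submodule.comap (c i.succ).subtype (c i.castSucc)) ≃ₗ[R]
              (R ⧸ Ideal.span {x})) := by
  refine ⟨fun i => (firstCoords R n i).map π, ?_, ?_, ?_, ?_⟩
  · intro i j hij
    apply Submodule.map_mono
    intro v hv l hl
    exact hv l (le_trans hij hl)
  · rw [eq_bot_iff]
    rintro _ ⟨v, hv, rfl⟩
    have : v = 0 := funext fun j => hv j (by simp)
    simp [this]
  · rw [eq_top_iff]
    intro y _
    obtain ⟨v, rfl⟩ := hπ y
    exact ⟨v, fun j hj => absurd j.2 (not_lt.2 (by simpa using hj)), rfl⟩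
  · intro i
    set C := (firstCoords R n (i.succ : Fin (n+1))).map π with hC
    set C' := (firstCoords R n (i.castSucc : Fin (n+1))).map π with hC'
    let g : R →ₗ[R] C := LinearMap.codRestrict C (π ∘ₗ LinearMap.single R (fun _ => R) i) (by
      intro r
      refine ⟨Pi.single i r, ?_, rfl⟩
      intro j hj
      rw [Pi.single_eq_of_ne]
      rintro rfl
      simp at hj)
    have hg : ∀ r, (g r : M) = π (Pi.single i r) := fun r => rfl
    let G := (Submodule.comap C.subtype C').mkQ ∘ₗ g
    have hGs : Function.Surjective G := by
      intro q
      obtain ⟨⟨_, v, hv, rfl⟩, rfl⟩ := Submodule.mkQ_surjective _ q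
      refine ⟨v i, ?_⟩
      change (Submodule.comap C.subtype C').mkQ (g (v i)) = _
      rw [← sub_eq_zero, ← map_sub, Submodule.mkQ_apply, Submodule.Quotient.mk_eq_zero,
        Submodule.mem_comap]
      refine ⟨Pi.single i (v i) - v, ?_, ?_⟩
      · intro j hj
        by_cases hji : j = i
        · subst hji; simp
        · have := hv j (by
            have : (j : ℕ) ≠ i := fun h => hji (Fin.ext h)
            simp at hj ⊢
            change i ≤ j at hj
            omega)
          simp [hji, this]
      · rw [map_sub]; rfl
    have hGk : LinearMap.ker G = Ideal.span {x} := by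
      ext r
      have h0 : r ∈ LinearMap.ker G ↔ π (Pi.single i r) ∈ C' := by
        change (Submodule.comap C.subtype C').mkQ (g r) = 0 ↔ _
        rw [Submodule.mkQ_apply, Submodule.Quotient.mk_eq_zero, Submodule.mem_comap]
        rfl
      rw [h0, Ideal.mem_span_singleton']
      constructor
      · rintro ⟨u, hu, hur⟩
        obtain ⟨w, hw⟩ := (hk (Pi.single i r - u)).1 (by rw [map_sub, hur, sub_self])
        have hwj : ∀ j : Fin n, i ≤ j → x * w j + z * (if h : (j : ℕ) + 1 < n then w ⟨j + 1, h⟩ else 0)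
            = (Pi.single i r : Fin n → R) j := by
          intro j hj
          rw [← bidiag_mulVec]
          have := congrFun hw j
          rw [Matrix.mulVecLin_apply] at this
          rw [this, Pi.sub_apply, hu j (by simpa using hj), sub_zero]
        have hr := hwj i le_rfl
        rw [Pi.single_eq_same] at hr
        split_ifs at hr with hi
        · have hmem : w ⟨i + 1, hi⟩ ∈ m := by
            have h1 := hwj ⟨i + 1, hi⟩ (by simp [Fin.le_def])
            rw [Pi.single_eq_of_ne (by simp [Fin.ext_iff])] at h1
            refine (hstar _ (if h : ((⟨i + 1, hi⟩ : Fin n) : ℕ) + 1 < n then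
              w ⟨((⟨i + 1, hi⟩ : Fin n) : ℕ) + 1, h⟩ else 0) ?_).1
            rw [mul_comm, mul_comm _ z, h1]
            exact zero_mem _
          have h2 : z * w ⟨i + 1, hi⟩ ∈ Ideal.span {x} :=
            hm2 (by rw [pow_two]; exact Ideal.mul_mem_mul hzm hmem)
          obtain ⟨t, ht⟩ := Ideal.mem_span_singleton'.1 h2
          exact ⟨w i + t, by rw [← hr, ← ht]; ring⟩
        · exact ⟨w i, by rw [← hr]; ring⟩
      · rintro ⟨s, rfl⟩
        refine ⟨Pi.single i (s * x) - (bidiag n x z).mulVecLin (Pi.single i s), ?_, ?_⟩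
        · intro j hj
          have hj' : (i : ℕ) ≤ j := by simpa using hj
          rw [Pi.sub_apply, Matrix.mulVecLin_apply, bidiag_mulVec]
          have : (if h : (j : ℕ) + 1 < n then (Pi.single i s : Fin n → R) ⟨j + 1, h⟩ else 0) = 0 := by
            split_ifs
            · rw [Pi.single_eq_of_ne]
              intro h
              have := congrArg Fin.val h
              simp at this
              omega
            · rfl
          rw [this]
          by_cases hji : j = i
          · subst hji; simp [mul_comm]
          · simp [hji]
        · rw [map_sub, (hk _).2 ⟨_, rfl⟩, sub_zero]
    exact ⟨(G.quotKerEquivOfSurjective hGs).symm.trans (Submodule.quotEquivOfEq _ _ hGk)⟩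

lemma range_le (x z : R) (m : Ideal R) (hxm : x ∈ m) (hzm : z ∈ m) (w : Fin n → R) (i : Fin n) :
    (bidiag n x z).mulVec w i ∈ m := by
  rw [bidiag_mulVec]
  exact m.add_mem (m.mul_mem_right _ hxm) (m.mul_mem_right _ hzm)

lemma mem_smul_top (m : Ideal R) (π : (Fin n → R) →ₗ[R] M) (v : Fin n → R)
    (hv : ∀ i, v i ∈ m) : π v ∈ m • (⊤ : Submodule R M) := by
  rw [pi_eq_sum_univ' v, map_sum]
  refine Submodule.sum_mem _ fun i _ => ?_
  rw [map_smul]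
  exact Submodule.smul_mem_smul (hv i) trivial

lemma length_eq (x z : R) (m : Ideal R) [hmax : m.IsMaximal] (hxm : x ∈ m) (hzm : z ∈ m)
    (π : (Fin n → R) →ₗ[R] M) (hπ : Function.Surjective π)
    (hk : Function.Exact (bidiag n x z).mulVecLin π) :
    Order.krullDim (Submodule R (M ⧸ (m • (⊤ : Submodule R M)))) = ((n : ℕ∞) : WithBot ℕ∞) := by
  let q : (Fin n → R) →ₗ[R] (Fin n → R ⧸ m) := m.mkQ.compLeft (Fin n)
  have hqs : Function.Surjective q := by
    intro u
    choose v hv using fun i => Submodule.mkQ_surjective m (u i)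
    exact ⟨v, funext hv⟩
  have hq0 : ∀ v, q v = 0 ↔ ∀ i, v i ∈ m := by
    intro v
    rw [funext_iff]
    refine forall_congr' fun i => ?_
    exact Submodule.Quotient.mk_eq_zero m
  let Q : (Fin n → R) →ₗ[R] M ⧸ (m • (⊤ : Submodule R M)) := (m • (⊤ : Submodule R M)).mkQ ∘ₗ π
  have hQs : Function.Surjective Q := (Submodule.mkQ_surjective _).comp hπ
  have hker : LinearMap.ker Q = LinearMap.ker q := by
    ext v
    rw [LinearMap.mem_ker, LinearMap.mem_ker, hq0]
    change (m • (⊤ : Submodule R M)).mkQ (π v) = 0 ↔ _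
    rw [Submodule.mkQ_apply, Submodule.Quotient.mk_eq_zero]
    constructor
    · intro h
      have : (m • (⊤ : Submodule R M)) = (m • (⊤ : Submodule R (Fin n → R))).map π := by
        rw [Submodule.map_smul'', Submodule.map_top, LinearMap.range_eq_top.2 hπ]
      rw [this] at h
      obtain ⟨u, hu, huv⟩ := h
      have hu' : ∀ i, u i ∈ m := by
        have hle : m • (⊤ : Submodule R (Fin n → R)) ≤ LinearMap.ker q := by
          rw [Submodule.smul_le]
          intro r hr w _
          rw [LinearMap.mem_ker, hq0]
          intro i
          exact m.mul_mem_right _ hr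
        exact (hq0 u).1 (hle hu)
      obtain ⟨w, hw⟩ := (hk (v - u)).1 (by rw [map_sub, huv, sub_self])
      intro i
      have h1 := congrFun hw i
      rw [Matrix.mulVecLin_apply] at h1
      have h2 := range_le x z m hxm hzm w i
      rw [h1] at h2
      have := m.add_mem h2 (hu' i)
      simpa using this
    · exact mem_smul_top m π v
  let E : (M ⧸ (m • (⊤ : Submodule R M))) ≃ₗ[R] (Fin n → R ⧸ m) :=
    (Q.quotKerEquivOfSurjective hQs).symm.trans
      ((Submodule.quotEquivOfEq _ _ hker).trans (q.quotKerEquivOfSurjective hqs))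
  rw [← Module.coe_length, E.length_eq]
  have : IsSimpleModule R (R ⧸ m) := isSimpleModule_iff_isCoatom.2 hmax.out
  have : Module.length R (Fin n → R ⧸ m) = n := by
    simp
  rw [this]
end
section
variable {R : Type} [CommRing R] {n : ℕ} {M : Type} [AddCommGroup M] [Module R M]

lemma shift_ker {p : ℕ} (v : Fin (p+1) → R) (hv : (shiftMat R (p+1)).mulVec v = 0) :
    v = v 0 • Pi.single 0 1 := by
  funext i
  refine Fin.cases ?_ (fun j => ?_) i
  · simp
  · have := congrFun hv j.castSucc
    rw [shiftMat_mulVec, dif_pos (by simp)] at this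
    have h2 : v j.succ = 0 := this
    simp [h2]

lemma idem_aux {p : ℕ} (E : Matrix (Fin (p+1)) (Fin (p+1)) R) (hE : E * E = E)
    (hN : E * shiftMat R (p+1) = shiftMat R (p+1) * E)
    (h0 : E.mulVec (Pi.single 0 1) = 0) : E = 0 := by
  have key : ∀ j : Fin (p+1), E.mulVec (Pi.single j 1) = 0 := by
    intro j
    induction j using Fin.induction with
    | zero => exact h0
    | succ j ih =>
      have h1 : (shiftMat R (p+1)).mulVec (Pi.single j.succ 1) = Pi.single j.castSucc 1 := by
        ext i
        rw [shiftMat_mulVec]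
        by_cases hij : i = j.castSucc
        · subst hij
          rw [dif_pos (by simp), Pi.single_eq_same]
          exact Pi.single_eq_same _ _
        · rw [Pi.single_eq_of_ne hij]
          split_ifs with h
          · rw [Pi.single_eq_of_ne]
            intro h'
            apply hij
            have := congrArg Fin.val h'
            ext
            simpa using this
          · rfl
      have h2 : (shiftMat R (p+1)).mulVec (E.mulVec (Pi.single j.succ 1)) = 0 := by
        rw [Matrix.mulVec_mulVec, ← hN, ← Matrix.mulVec_mulVec, h1, ih]
      have h3 := shift_ker _ h2
      rw [← hE, ← Matrix.mulVec_mulVec, h3, Matrix.mulVec_smul, h0, smul_zero]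
  apply Matrix.ext_of_mulVec_single
  intro i
  rw [key, Matrix.zero_mulVec]

lemma idem_zero_one {K : Type} [Field K] {p : ℕ} (E : Matrix (Fin (p+1)) (Fin (p+1)) K)
    (hE : E * E = E) (hN : E * shiftMat K (p+1) = shiftMat K (p+1) * E) : E = 0 ∨ E = 1 := by
  have h1 : (shiftMat K (p+1)).mulVec (Pi.single 0 1) = 0 := by
    ext i
    rw [shiftMat_mulVec]
    split_ifs with h
    · rw [Pi.single_eq_of_ne (Fin.ne_of_val_ne (Nat.succ_ne_zero _))]; rfl
    · rfl
  have h2 : (shiftMat K (p+1)).mulVec (E.mulVec (Pi.single 0 1)) = 0 := by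
    rw [Matrix.mulVec_mulVec, ← hN, ← Matrix.mulVec_mulVec, h1, Matrix.mulVec_zero]
  have h3 := shift_ker _ h2
  set c := E.mulVec (Pi.single 0 1) 0 with hc
  have h4 : c * c = c := by
    have : E.mulVec (E.mulVec (Pi.single 0 1)) = E.mulVec (Pi.single 0 1) := by
      rw [Matrix.mulVec_mulVec, hE]
    rw [h3, Matrix.mulVec_smul, h3] at this
    simpa using congrFun this 0
  rcases (IsIdempotentElem.iff_eq_zero_or_one).1 h4 with h | h
  · left
    exact idem_aux E hE hN (by rw [h3, h, zero_smul])
  · right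
    have := idem_aux (1 - E) (by rw [sub_mul, mul_sub, mul_sub, hE]; simp)
      (by rw [sub_mul, mul_sub, hN]; simp) (by
        rw [Matrix.sub_mulVec, h3, h, one_smul, Matrix.one_mulVec, sub_self])
    exact (sub_eq_zero.1 this).symm

lemma endo_zero (m : Ideal R) (hm3 : m ^ 3 = ⊥) (π : (Fin n → R) →ₗ[R] M)
    (hπ : Function.Surjective π) (e : M →ₗ[R] M) (he : e ∘ₗ e = e)
    (E : (Fin n → R) →ₗ[R] (Fin n → R)) (hE : ∀ v, π (E v) = e (π v))
    (hEm : ∀ v i, E v i ∈ m) : e = 0 := by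
  have h1 : LinearMap.range e ≤ m • ⊤ := by
    rintro _ ⟨y, rfl⟩
    obtain ⟨v, rfl⟩ := hπ y
    rw [← hE]
    exact mem_smul_top m π _ (hEm v)
  have h2 : LinearMap.range e ≤ m • LinearMap.range e := by
    have h := Submodule.map_mono (f := e) h1
    rw [Submodule.map_smul'', Submodule.map_top, ← LinearMap.range_comp, he] at h
    exact h
  have h3 : LinearMap.range e ≤ ⊥ := by
    calc LinearMap.range e ≤ m • LinearMap.range e := h2
      _ ≤ m • (m • LinearMap.range e) := Submodule.smul_mono le_rfl h2
      _ ≤ m • (m • (m • LinearMap.range e)) :=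
        Submodule.smul_mono le_rfl (Submodule.smul_mono le_rfl h2)
      _ = (m ^ 3) • LinearMap.range e := by
        rw [← Submodule.mul_smul, ← Submodule.mul_smul]; congr 1; ring
      _ = ⊥ := by rw [hm3, Submodule.bot_smul]
  rw [← LinearMap.range_eq_bot]
  exact le_bot_iff.1 h3

lemma indec (x z : R) (m : Ideal R) [hmax : m.IsMaximal] (hm3 : m ^ 3 = ⊥)
    (hxm : x ∈ m) (hzm : z ∈ m)
    (hstar : ∀ a b : R, a * x + b * z ∈ m ^ 2 → a ∈ m ∧ b ∈ m) (hn : 1 ≤ n)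
    (π : (Fin n → R) →ₗ[R] M) (hπ : Function.Surjective π)
    (hk : Function.Exact (bidiag n x z).mulVecLin π) : IsIndecomposableModule R M := by
  obtain ⟨p, rfl⟩ : ∃ p, n = p + 1 := ⟨n - 1, by omega⟩
  refine ⟨?_, ?_⟩
  · intro h
    have h0 : π (Pi.single 0 1) = 0 := by
      have : π (Pi.single 0 1) ∈ (⊤ : Submodule R M) := trivial
      rw [← h] at this
      simpa using this
    obtain ⟨w, hw⟩ := (hk _).1 h0
    have h1 := range_le x z m hxm hzm w 0
    rw [← Matrix.mulVecLin_apply, hw, Pi.single_eq_same] at h1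
    exact hmax.ne_top ((Ideal.eq_top_iff_one m).2 h1)
  · intro N₁ N₂ hc
    let e := N₁.projection N₂ hc
    have he : e ∘ₗ e = e := by
      ext y
      exact Submodule.projection_apply_of_mem_left hc (Submodule.projection_apply_mem hc y)
    obtain ⟨h, hh⟩ := Module.projective_lifting_property π (e ∘ₗ π) hπ
    set E := LinearMap.toMatrix' h with hEdef
    have hE : ∀ v, E.mulVec v = h v := fun v => LinearMap.toMatrix'_mulVec h v
    have hEe : ∀ v, π (E.mulVec v) = e (π v) := fun v => by
      rw [hE]; exact LinearMap.congr_fun hh v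
    -- the second matrix
    have hF : ∀ j : Fin (p+1), ∃ w, (bidiag (p+1) x z).mulVec w =
        (E * bidiag (p+1) x z).mulVec (Pi.single j 1) := by
      intro j
      apply (hk _).1
      rw [← Matrix.mulVec_mulVec, hEe, ← Matrix.mulVecLin_apply, (hk _).2 ⟨_, rfl⟩, map_zero]
    choose w hw using hF
    let F : Matrix (Fin (p+1)) (Fin (p+1)) R := Matrix.of fun i j => w j i
    have hEF : E * bidiag (p+1) x z = bidiag (p+1) x z * F := by
      apply Matrix.ext_of_mulVec_single
      intro j
      rw [← hw, ← Matrix.mulVec_mulVec]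
      congr 1
      ext i
      simp [F]
    have hst : ∀ i j, (E - F) i j ∈ m ∧
        (E * shiftMat R (p+1) - shiftMat R (p+1) * F) i j ∈ m := by
      intro i j
      apply hstar
      have h1 : x • (E - F) + z • (E * shiftMat R (p+1) - shiftMat R (p+1) * F) = 0 := by
        rw [bidiag_eq, mul_add, add_mul, Matrix.mul_smul, Matrix.mul_smul, Matrix.smul_mul,
          Matrix.smul_mul, mul_one, one_mul] at hEF
        rw [smul_sub, smul_sub, sub_add_sub_comm, hEF, sub_self]
      have h2 := congrFun (congrFun h1 i) j
      rw [Matrix.add_apply, Matrix.smul_apply, Matrix.smul_apply, smul_eq_mul, smul_eq_mul,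
        mul_comm, mul_comm z] at h2
      rw [h2]
      exact zero_mem _
    let _ : Field (R ⧸ m) := Ideal.Quotient.field m
    let q : R →+* R ⧸ m := Ideal.Quotient.mk m
    have hqz : ∀ A : Matrix (Fin (p+1)) (Fin (p+1)) R, (∀ i j, A i j ∈ m) → q.mapMatrix A = 0 := by
      intro A hA
      ext i j
      exact Ideal.Quotient.eq_zero_iff_mem.2 (hA i j)
    have hqN : q.mapMatrix (shiftMat R (p+1)) = shiftMat (R ⧸ m) (p+1) := by
      ext i j
      simp only [shiftMat, RingHom.mapMatrix_apply, Matrix.map_apply, Matrix.of_apply]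
      split_ifs <;> simp
    have e1 : q.mapMatrix E = q.mapMatrix F := by
      rw [← sub_eq_zero, ← map_sub]
      exact hqz _ fun i j => (hst i j).1
    have e2 : q.mapMatrix E * shiftMat (R ⧸ m) (p+1) = shiftMat (R ⧸ m) (p+1) * q.mapMatrix E := by
      have := hqz _ fun i j => (hst i j).2
      rw [map_sub, map_mul, map_mul, hqN, ← e1, sub_eq_zero] at this
      exact this
    have e3 : q.mapMatrix E * q.mapMatrix E = q.mapMatrix E := by
      rw [← sub_eq_zero, ← map_mul, ← map_sub]
      apply hqz
      intro i j
      obtain ⟨u, hu⟩ := (hk ((E * E - E).mulVec (Pi.single j 1))).1 (by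
        rw [Matrix.sub_mulVec, ← Matrix.mulVec_mulVec, map_sub, hEe, hEe]
        have := LinearMap.congr_fun he (π (Pi.single j 1))
        rw [LinearMap.comp_apply] at this
        rw [this, sub_self])
      have h1 := range_le x z m hxm hzm u i
      rw [← Matrix.mulVecLin_apply, hu] at h1
      simpa using h1
    rcases idem_zero_one _ e3 e2 with h0 | h1
    · left
      have : e = 0 := by
        refine endo_zero m hm3 π hπ e he h (fun v => by rw [← hE, hEe]) ?_
        intro v i
        rw [← hE]
        rw [Matrix.mulVec, dotProduct]
        refine m.sum_mem fun j _ => m.mul_mem_right _ ?_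
        exact Ideal.Quotient.eq_zero_iff_mem.1 (congrFun (congrFun h0 i) j)
      rw [← Submodule.range_projection hc]
      exact LinearMap.range_eq_bot.2 this
    · right
      have : LinearMap.id - e = 0 := by
        refine endo_zero m hm3 π hπ (LinearMap.id - e) ?_ (LinearMap.id - h) ?_ ?_
        · ext y
          have := LinearMap.congr_fun he y
          rw [LinearMap.comp_apply] at this
          simp [this]
        · intro v
          have : π (h v) = e (π v) := by rw [← hE, hEe]
          simp [this]
        · intro v i
          have h2 : q.mapMatrix (1 - E) = 0 := by rw [map_sub, map_one, h1, sub_self]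
          have h3 : (LinearMap.id - h : (Fin (p+1) → R) →ₗ[R] (Fin (p+1) → R)) v = (1 - E).mulVec v := by
            rw [Matrix.sub_mulVec, hE, Matrix.one_mulVec]; rfl
          rw [h3, Matrix.mulVec, dotProduct]
          refine m.sum_mem fun j _ => m.mul_mem_right _ ?_
          exact Ideal.Quotient.eq_zero_iff_mem.1 (congrFun (congrFun h2 i) j)
      rw [eq_bot_iff]
      intro y hy
      have h4 : e y = 0 := (Submodule.projection_apply_eq_zero_iff hc).2 hy
      have h5 := LinearMap.congr_fun this y
      simpa [h4] using h5
end
section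
variable {S : Type} [CommRing S] {n : ℕ}

lemma shiftMat_pow_mulVec (k : ℕ) (v : Fin n → S) (i : Fin n) :
    (shiftMat S n ^ k).mulVec v i = if h : (i : ℕ) + k < n then v ⟨i + k, h⟩ else 0 := by
  induction k generalizing i with
  | zero => simp
  | succ k ih =>
    rw [pow_succ', ← Matrix.mulVec_mulVec, shiftMat_mulVec]
    by_cases h : (i : ℕ) + 1 < n
    · rw [dif_pos h, ih]
      have : (i : ℕ) + 1 + k = i + (k + 1) := by ring
      simp only [this]
    · rw [dif_neg h, dif_neg (by omega)]

lemma shiftMat_pow_self : shiftMat S n ^ n = 0 := by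
  apply Matrix.ext_of_mulVec_single
  intro j
  ext i
  rw [shiftMat_pow_mulVec, dif_neg (by omega)]
  simp

lemma mat_fact (x z f : S) (y : ℕ → S) (h0 : x * y 0 = f) (hy : ∀ i, z * y i = x * y (i+1)) :
    ∃ B : Matrix (Fin n) (Fin n) S, bidiag n x z * B = f • 1 ∧ B * bidiag n x z = f • 1 := by
  let N := shiftMat S n
  let B : Matrix (Fin n) (Fin n) S := ∑ i ∈ Finset.range n, ((-1) ^ i * y i) • N ^ i
  have hAB : bidiag n x z * B = f • 1 := by
    have h1 : bidiag n x z * B = ∑ i ∈ Finset.range n,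
        (((-1) ^ i * (x * y i)) • N ^ i - ((-1) ^ (i + 1) * (x * y (i + 1))) • N ^ (i + 1)) := by
      rw [Finset.mul_sum]
      refine Finset.sum_congr rfl fun i _ => ?_
      rw [bidiag_eq, add_mul, Matrix.smul_mul, Matrix.smul_mul, one_mul, Matrix.mul_smul,
        ← pow_succ', smul_smul, smul_smul, sub_eq_add_neg, ← neg_smul, ← hy]
      congr 2 <;> ring
    rw [h1, Finset.sum_range_sub' (fun i => ((-1) ^ i * (x * y i)) • N ^ i)]
    simp [N, shiftMat_pow_self, h0]
  have hc : Commute (bidiag n x z) B := by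
    refine Commute.sum_right _ _ _ fun i _ => Commute.smul_right ?_ _
    rw [bidiag_eq]
    exact ((Commute.one_left _).smul_left _).add_left
      (((Commute.refl (shiftMat S n)).pow_right i).smul_left _)
  exact ⟨B, hAB, by rw [← hc.eq, hAB]⟩

lemma mat_exact (f : S) (hf : f ∈ nonZeroDivisors S) (A B : Matrix (Fin n) (Fin n) S)
    (hAB : A * B = f • 1) (hBA : B * A = f • 1) (v : Fin n → S ⧸ Ideal.span {f})
    (hv : (A.map (Ideal.Quotient.mk (Ideal.span {f}))).mulVec v = 0) :
    ∃ w, (B.map (Ideal.Quotient.mk (Ideal.span {f}))).mulVec w = v := by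
  choose u hu using fun i => Ideal.Quotient.mk_surjective (v i)
  obtain rfl : (fun i => Ideal.Quotient.mk (Ideal.span {f}) (u i)) = v := funext hu
  have h1 : ∀ i, ∃ t, t * f = A.mulVec u i := by
    intro i
    rw [← Ideal.mem_span_singleton', ← Ideal.Quotient.eq_zero_iff_mem, RingHom.map_mulVec]
    exact congrFun hv i
  choose w hw using h1
  have hw' : A.mulVec u = A.mulVec (B.mulVec w) := by
    rw [Matrix.mulVec_mulVec, hAB]
    ext i
    simp [← hw, Matrix.smul_mulVec, mul_comm]
  have h2 : f • u = f • B.mulVec w := by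
    have := congrArg B.mulVec hw'
    rw [Matrix.mulVec_mulVec, Matrix.mulVec_mulVec, hBA, Matrix.smul_mulVec, Matrix.smul_mulVec,
      Matrix.one_mulVec, Matrix.one_mulVec] at this
    exact this
  refine ⟨fun i => Ideal.Quotient.mk (Ideal.span {f}) (w i), ?_⟩
  ext i
  have h3 : u i = B.mulVec w i := by
    have := congrFun h2 i
    exact (mul_cancel_left_mem_nonZeroDivisors hf).1 this
  rw [h3, RingHom.map_mulVec]
  rfl
end

section
variable {k S : Type} [Field k] [CommRing S] [Algebra k S] [Nontrivial S]
    (𝒮 : ℕ → Submodule k S) [GradedAlgebra 𝒮]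

lemma irr_mem {i : ℕ} (hi : i ≠ 0) {v : S} (hv : v ∈ 𝒮 i) :
    v ∈ (HomogeneousIdeal.irrelevant 𝒮).toIdeal := by
  have : v ∈ HomogeneousIdeal.irrelevant 𝒮 := by
    rw [HomogeneousIdeal.mem_irrelevant_iff, GradedRing.proj_apply]
    exact DirectSum.decompose_of_mem_ne 𝒮 hv hi
  exact this

lemma irr_alg {a : k} (ha : algebraMap k S a ∈ (HomogeneousIdeal.irrelevant 𝒮).toIdeal) : a = 0 := by
  have h : algebraMap k S a ∈ HomogeneousIdeal.irrelevant 𝒮 := ha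
  rw [HomogeneousIdeal.mem_irrelevant_iff, GradedRing.proj_apply,
    DirectSum.decompose_of_mem_same 𝒮 (SetLike.algebraMap_mem_graded 𝒮 a)] at h
  exact (map_eq_zero_iff _ (algebraMap k S).injective).1 h

lemma exists_scalar (hadj : Algebra.adjoin k ((𝒮 1 : Set S)) = ⊤) (s : S) :
    ∃ a : k, s - algebraMap k S a ∈ Ideal.span (𝒮 1 : Set S) := by
  have hs : s ∈ Algebra.adjoin k ((𝒮 1 : Set S)) := by rw [hadj]; trivial
  induction hs using Algebra.adjoin_induction with
  | mem v hv => exact ⟨0, by simpa using Ideal.subset_span hv⟩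
  | algebraMap r => exact ⟨r, by simp⟩
  | add s t _ _ hs ht =>
    obtain ⟨a, ha⟩ := hs
    obtain ⟨b, hb⟩ := ht
    exact ⟨a + b, by rw [map_add, add_sub_add_comm]; exact Ideal.add_mem _ ha hb⟩
  | mul s t _ _ hs ht =>
    obtain ⟨a, ha⟩ := hs
    obtain ⟨b, hb⟩ := ht
    refine ⟨a * b, ?_⟩
    have : s * t - algebraMap k S (a * b) =
        s * (t - algebraMap k S b) + algebraMap k S b * (s - algebraMap k S a) := by
      rw [map_mul]; ring
    rw [this]
    exact Ideal.add_mem _ (Ideal.mul_mem_left _ _ hb) (Ideal.mul_mem_left _ _ ha)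

lemma irr_eq (hadj : Algebra.adjoin k ((𝒮 1 : Set S)) = ⊤) :
    (HomogeneousIdeal.irrelevant 𝒮).toIdeal = Ideal.span (𝒮 1 : Set S) := by
  have hle : Ideal.span (𝒮 1 : Set S) ≤ (HomogeneousIdeal.irrelevant 𝒮).toIdeal :=
    Ideal.span_le.2 fun v hv => irr_mem 𝒮 one_ne_zero hv
  refine le_antisymm ?_ hle
  intro s hs
  obtain ⟨a, ha⟩ := exists_scalar 𝒮 hadj s
  have h0 : a = 0 := by
    apply irr_alg 𝒮
    have := Ideal.sub_mem _ hs (hle ha)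
    simpa using this
  simpa [h0] using ha

lemma deg_two {x : S} (hx1 : x ∈ 𝒮 1)
    (hMM : Ideal.span {x} * (HomogeneousIdeal.irrelevant 𝒮).toIdeal =
      (HomogeneousIdeal.irrelevant 𝒮).toIdeal ^ 2)
    (hadj : Algebra.adjoin k ((𝒮 1 : Set S)) = ⊤) {s : S} (hs : s ∈ 𝒮 2) :
    ∃ t ∈ 𝒮 1, s = x * t := by
  have key : ∀ u ∈ Ideal.span (𝒮 1 : Set S),
      ∃ t ∈ 𝒮 1, (DirectSum.decompose 𝒮 u 2 : S) = x * t := by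
    intro u hu
    induction hu using Submodule.closure_induction with
    | zero => exact ⟨0, zero_mem _, by simp⟩
    | add u v _ _ hu hv =>
      obtain ⟨a, ha, ha'⟩ := hu
      obtain ⟨b, hb, hb'⟩ := hv
      exact ⟨a + b, add_mem ha hb, by simp [ha', hb', mul_add]⟩
    | smul_mem r v hv =>
      have h1 : (DirectSum.decompose 𝒮 (r * v) (1 + 1) : S) = DirectSum.decompose 𝒮 r 1 * v :=
        DirectSum.coe_decompose_mul_add_of_right_mem 𝒮 hv
      have h2 : (DirectSum.decompose 𝒮 r 1 : S) * v ∈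
          (HomogeneousIdeal.irrelevant 𝒮).toIdeal ^ 2 := by
        rw [pow_two]
        exact Ideal.mul_mem_mul (irr_mem 𝒮 one_ne_zero (SetLike.coe_mem _))
          (irr_mem 𝒮 one_ne_zero hv)
      rw [← hMM, Ideal.mem_span_singleton_mul] at h2
      obtain ⟨t, -, ht⟩ := h2
      refine ⟨DirectSum.decompose 𝒮 t 1, SetLike.coe_mem _, ?_⟩
      have h3 : (DirectSum.decompose 𝒮 (x * t) (1 + 1) : S) = x * DirectSum.decompose 𝒮 t 1 :=
        DirectSum.coe_decompose_mul_add_of_left_mem 𝒮 hx1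
      rw [← h3, ht]
      have h4 : (DirectSum.decompose 𝒮 r 1 : S) * v ∈ 𝒮 (1 + 1) :=
        SetLike.mul_mem_graded (SetLike.coe_mem _) hv
      rw [DirectSum.decompose_of_mem_same 𝒮 h4]
      exact h1
  obtain ⟨t, ht, h⟩ := key s (by rw [← irr_eq 𝒮 hadj]; exact irr_mem 𝒮 two_ne_zero hs)
  rw [DirectSum.decompose_of_mem_same 𝒮 hs] at h
  exact ⟨t, ht, h⟩

lemma deg_one_zero {x : S} (hx1 : x ∈ 𝒮 1)
    (hMM : Ideal.span {x} * (HomogeneousIdeal.irrelevant 𝒮).toIdeal =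
      (HomogeneousIdeal.irrelevant 𝒮).toIdeal ^ 2)
    {s : S} (hs : s ∈ 𝒮 1) (hs2 : s ∈ (HomogeneousIdeal.irrelevant 𝒮).toIdeal ^ 2) : s = 0 := by
  rw [← hMM, Ideal.mem_span_singleton_mul] at hs2
  obtain ⟨t, ht, rfl⟩ := hs2
  have h3 : (DirectSum.decompose 𝒮 (x * t) (1 + 0) : S) = x * DirectSum.decompose 𝒮 t 0 :=
    DirectSum.coe_decompose_mul_add_of_left_mem 𝒮 hx1
  have ht' : t ∈ HomogeneousIdeal.irrelevant 𝒮 := ht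
  rw [HomogeneousIdeal.mem_irrelevant_iff, GradedRing.proj_apply] at ht'
  rw [ht', mul_zero] at h3
  rw [← h3]
  exact (DirectSum.decompose_of_mem_same 𝒮 hs).symm

/-- multiplication by `y` is onto in degree two -/
lemma deg_two_surj {x y : S} (hx1 : x ∈ 𝒮 1) (hxnzd : x ∈ nonZeroDivisors S)
    (hMM : Ideal.span {x} * (HomogeneousIdeal.irrelevant 𝒮).toIdeal =
      (HomogeneousIdeal.irrelevant 𝒮).toIdeal ^ 2)
    (hadj : Algebra.adjoin k ((𝒮 1 : Set S)) = ⊤) [FiniteDimensional k (𝒮 1)]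
    [FiniteDimensional k (𝒮 2)]
    (hy1 : y ∈ 𝒮 1) (hynzd : y ∈ nonZeroDivisors S) {s : S} (hs : s ∈ 𝒮 2) :
    ∃ t ∈ 𝒮 1, s = y * t := by
  have hmap : ∀ w ∈ 𝒮 1, ∃ L : 𝒮 1 →ₗ[k] 𝒮 2, ∀ v, (L v : S) = w * v := by
    intro w hw
    refine ⟨LinearMap.codRestrict (𝒮 2) (LinearMap.mulLeft k w ∘ₗ (𝒮 1).subtype) ?_, fun v => rfl⟩
    intro v
    have : w * (v : S) ∈ 𝒮 (1 + 1) := SetLike.mul_mem_graded hw v.2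
    exact this
  have hinj : ∀ w ∈ nonZeroDivisors S, ∀ L : 𝒮 1 →ₗ[k] 𝒮 2, (∀ v, (L v : S) = w * v) →
      Function.Injective L := by
    intro w hw L hL a b hab
    have := congrArg Subtype.val hab
    rw [hL, hL] at this
    exact Subtype.ext ((mul_cancel_left_mem_nonZeroDivisors hw).1 this)
  obtain ⟨X, hX⟩ := hmap x hx1
  obtain ⟨Y, hY⟩ := hmap y hy1
  have hXs : Function.Surjective X := by
    rintro ⟨u, hu⟩
    obtain ⟨t, ht, h⟩ := deg_two 𝒮 hx1 hMM hadj hu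
    exact ⟨⟨t, ht⟩, Subtype.ext (by rw [hX]; exact h.symm)⟩
  have hfr : Module.finrank k (𝒮 1) = Module.finrank k (𝒮 2) :=
    (LinearEquiv.ofBijective X ⟨hinj x hxnzd X hX, hXs⟩).finrank_eq
  have hYs : Function.Surjective Y :=
    (LinearMap.injective_iff_surjective_of_finrank_eq_finrank hfr).1 (hinj y hynzd Y hY)
  obtain ⟨t, ht⟩ := hYs ⟨s, hs⟩
  refine ⟨t, t.2, ?_⟩
  rw [← hY, ht]
end

/-- the module M([x],n) presented over R = S/fS by the n×n upper
bidiagonal matrix with x on the diagonal and z on the superdiagonal is an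
indecomposable module of G-dimension zero, minimally generated by n elements,
and has a filtration with successive quotients isomorphic to R/xR. -/
theorem stmt_18 (k S : Type) [Field k] [IsAlgClosed k] [CommRing S] [Algebra k S]
    (𝒮 : ℕ → Submodule k S) [GradedAlgebra 𝒮] (hSG : IsStandardGraded k S 𝒮)
    (hdim : ringKrullDim S = 1)
    (x : S) (hx1 : x ∈ 𝒮 1) (hxnzd : x ∈ nonZeroDivisors S)
    (hMM : Ideal.span {x} * (HomogeneousIdeal.irrelevant 𝒮).toIdeal =
      (HomogeneousIdeal.irrelevant 𝒮).toIdeal ^ 2)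
    (f : S) (hf2 : f ∈ 𝒮 2) (hfnzd : f ∈ nonZeroDivisors S)
    (n : ℕ) (hn : 1 ≤ n)
    (x' z : S ⧸ Ideal.span {f})
    (hx' : x' = Ideal.Quotient.mk (Ideal.span {f}) x)
    (hz : z ∈ Submodule.map (Ideal.Quotient.mkₐ k (Ideal.span {f})).toLinearMap (𝒮 1))
    (hindep : LinearIndependent k ![x', z]) :
    ∀ (Φ : Matrix (Fin n) (Fin n) (S ⧸ Ideal.span {f})),
      (Φ = Matrix.of fun (i j : Fin n) => if j = i then x' else if (j : ℕ) = (i : ℕ) + 1 then z else 0) →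
      ∀ (M : Type) (_ : AddCommGroup M) (_ : Module (S ⧸ Ideal.span {f}) M),
      ∀ e : M ≃ₗ[S ⧸ Ideal.span {f}]
          ((Fin n → S ⧸ Ideal.span {f}) ⧸ LinearMap.range (Matrix.toLin' Φ)),
        GDimZero (S ⧸ Ideal.span {f}) M ∧
        IsIndecomposableModule (S ⧸ Ideal.span {f}) M ∧
        mlength (S ⧸ Ideal.span {f})
          (M ⧸ ((Ideal.map (Ideal.Quotient.mk (Ideal.span {f}))
              (HomogeneousIdeal.irrelevant 𝒮).toIdeal) •
            (⊤ : Submodule (S ⧸ Ideal.span {f}) M))) = (n : ℕ∞) ∧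
        ∃ c : Fin (n + 1) → Submodule (S ⧸ Ideal.span {f}) M,
          Monotone c ∧ c 0 = ⊥ ∧ c (Fin.last n) = ⊤ ∧
          ∀ i : Fin n, Nonempty
            ((↥(c i.succ) ⧸ Submodule.comap (c i.succ).subtype (c i.castSucc)) ≃ₗ[S ⧸ Ideal.span {f}]
              ((S ⧸ Ideal.span {f}) ⧸ Ideal.span {x'})) := by
  intro Φ hΦ M _ _ e
  obtain ⟨-, hadj, hfin⟩ := hSG
  have : Nontrivial S := by
    by_contra h
    rw [not_nontrivial_iff_subsingleton] at h
    have := ringKrullDim_eq_bot_of_subsingleton (R := S)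
    rw [hdim] at this
    exact absurd this (by decide)
  have := hfin 1
  have := hfin 2
  subst hx'
  obtain ⟨z₀, hz₀, rfl⟩ := hz
  change LinearIndependent k ![_, Ideal.Quotient.mk (Ideal.span {f}) z₀] at hindep
  change Φ = bidiag n (Ideal.Quotient.mk (Ideal.span {f}) x)
    (Ideal.Quotient.mk (Ideal.span {f}) z₀) at hΦ
  set I := (HomogeneousIdeal.irrelevant 𝒮).toIdeal with hI
  set q := Ideal.Quotient.mk (Ideal.span {f}) with hq
  set m := Ideal.map q I with hm
  -- factor `f`
  obtain ⟨y, hy1, hfy⟩ := deg_two 𝒮 hx1 hMM hadj hf2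
  have hynzd : y ∈ nonZeroDivisors S := by
    rw [hfy] at hfnzd
    exact (mul_mem_nonZeroDivisors.1 hfnzd).2
  have hxI : x ∈ I := irr_mem 𝒮 one_ne_zero hx1
  have hyI : y ∈ I := irr_mem 𝒮 one_ne_zero hy1
  have hzI : z₀ ∈ I := irr_mem 𝒮 one_ne_zero hz₀
  have hfI2 : Ideal.span {f} ≤ I ^ 2 := by
    rw [Ideal.span_singleton_le_iff_mem, pow_two, hfy]
    exact Ideal.mul_mem_mul hxI hyI
  have hfI : Ideal.span {f} ≤ I := hfI2.trans (Ideal.pow_le_self two_ne_zero)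
  have hmem : ∀ s, q s ∈ m ↔ s ∈ I := fun s => Ideal.mem_quotient_iff_mem hfI
  have hmem2 : ∀ s, q s ∈ m ^ 2 ↔ s ∈ I ^ 2 := fun s => by
    rw [hm, ← Ideal.map_pow]; exact Ideal.mem_quotient_iff_mem hfI2
  have hscal : ∀ s, ∃ a : k, s - algebraMap k S a ∈ I := fun s => by
    rw [hI, irr_eq 𝒮 hadj]; exact exists_scalar 𝒮 hadj s
  have hmax : m.IsMaximal := by
    rw [Ideal.isMaximal_iff]
    constructor
    · rw [← map_one q, hmem]
      intro h
      rw [← map_one (algebraMap k S)] at h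
      exact one_ne_zero (irr_alg 𝒮 h)
    · intro J r hJ hr hrJ
      obtain ⟨s, rfl⟩ := Ideal.Quotient.mk_surjective r
      obtain ⟨a, ha⟩ := hscal s
      have ha0 : a ≠ 0 := by
        rintro rfl
        rw [map_zero, sub_zero] at ha
        exact hr ((hmem s).2 ha)
      have h1 : q (algebraMap k S a) ∈ J := by
        have := J.sub_mem hrJ (hJ ((hmem _).2 ha))
        rw [map_sub, sub_sub_cancel] at this
        exact this
      have h2 := J.mul_mem_left (q (algebraMap k S a⁻¹)) h1
      rw [← map_mul, ← map_mul, inv_mul_cancel₀ ha0, map_one, map_one] at h2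
      exact h2
  have hm2 : m ^ 2 ≤ Ideal.span {q x} := by
    rw [hm, ← Ideal.map_pow, ← hMM, Ideal.map_mul, Ideal.map_span, Set.image_singleton]
    exact le_trans Ideal.mul_le_inf inf_le_left
  have hm3 : m ^ 3 = ⊥ := by
    rw [hm, ← Ideal.map_pow, Ideal.map_eq_bot_iff_le_ker, Ideal.mk_ker]
    have h1 : Ideal.span {x} * I ≤ Ideal.span {y} := by
      rw [hI, irr_eq 𝒮 hadj, Ideal.span_mul_span', Ideal.span_le]
      rintro _ ⟨a, ha, v, hv, rfl⟩
      rw [Set.mem_singleton_iff] at ha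
      subst ha
      have hxv : a * v ∈ 𝒮 (1 + 1) := SetLike.mul_mem_graded hx1 hv
      obtain ⟨t, -, ht⟩ := deg_two_surj 𝒮 hx1 hxnzd hMM hadj hy1 hynzd hxv
      exact Ideal.mem_span_singleton'.2 ⟨t, by rw [mul_comm]; exact ht.symm⟩
    have h2 : I ^ 3 = Ideal.span {x} * (Ideal.span {x} * I) := by
      rw [hMM, pow_two, ← mul_assoc, hMM]; ring
    rw [h2, hfy, ← Ideal.span_singleton_mul_span_singleton]
    exact Ideal.mul_mono_right h1
  have hstar : ∀ a b, a * q x + b * q z₀ ∈ m ^ 2 → a ∈ m ∧ b ∈ m := by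
    intro a b hab
    obtain ⟨s, rfl⟩ := Ideal.Quotient.mk_surjective a
    obtain ⟨t, rfl⟩ := Ideal.Quotient.mk_surjective b
    obtain ⟨α, hα⟩ := hscal s
    obtain ⟨β, hβ⟩ := hscal t
    have h1 : s * x + t * z₀ ∈ I ^ 2 := by
      rw [← hmem2]
      simpa using hab
    have h2 : α • x + β • z₀ ∈ I ^ 2 := by
      have h3 : (s - algebraMap k S α) * x + (t - algebraMap k S β) * z₀ ∈ I ^ 2 := by
        rw [pow_two]
        exact Ideal.add_mem _ (Ideal.mul_mem_mul hα hxI) (Ideal.mul_mem_mul hβ hzI)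
      have h4 := Ideal.sub_mem _ h1 h3
      rw [Algebra.smul_def, Algebra.smul_def]
      convert h4 using 1
      ring
    have h5 : α • x + β • z₀ = 0 :=
      deg_one_zero 𝒮 hx1 hMM (add_mem (Submodule.smul_mem _ _ hx1) (Submodule.smul_mem _ _ hz₀)) h2
    have h6 : α • q x + β • q z₀ = 0 := by
      have := congrArg (Ideal.Quotient.mkₐ k (Ideal.span {f})) h5
      rw [map_add, map_smul, map_smul, map_zero] at this
      exact this
    obtain ⟨rfl, rfl⟩ := LinearIndependent.pair_iff.1 hindep α β h6
    rw [map_zero, sub_zero] at hα hβ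
    exact ⟨(hmem s).2 hα, (hmem t).2 hβ⟩
  -- the presentation
  let π : (Fin n → S ⧸ Ideal.span {f}) →ₗ[S ⧸ Ideal.span {f}] M :=
    e.symm.toLinearMap ∘ₗ (LinearMap.range (Matrix.toLin' Φ)).mkQ
  have hπ : Function.Surjective π := e.symm.surjective.comp (Submodule.mkQ_surjective _)
  have hk : Function.Exact (bidiag n (q x) (q z₀)).mulVecLin π := by
    intro v
    change e.symm ((LinearMap.range (Matrix.toLin' Φ)).mkQ v) = 0 ↔ _
    rw [LinearEquiv.map_eq_zero_iff, Submodule.mkQ_apply, Submodule.Quotient.mk_eq_zero, hΦ]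
    exact Iff.rfl
  refine ⟨?_, indec (q x) (q z₀) m hm3 ((hmem _).2 hxI) ((hmem _).2 hzI) hstar hn π hπ hk,
    length_eq (q x) (q z₀) m ((hmem _).2 hxI) ((hmem _).2 hzI) π hπ hk,
    filtr (q x) (q z₀) m hm2 ((hmem _).2 hzI) hstar π hπ hk⟩
  -- matrix factorization
  have hstep : ∀ u : 𝒮 1, ∃ t : 𝒮 1, z₀ * (u : S) = x * t := by
    intro u
    have hzu : z₀ * (u : S) ∈ 𝒮 (1 + 1) := SetLike.mul_mem_graded hz₀ u.2
    obtain ⟨t, ht, h⟩ := deg_two 𝒮 hx1 hMM hadj hzu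
    exact ⟨⟨t, ht⟩, h⟩
  choose g hg using hstep
  obtain ⟨B, hAB, hBA⟩ := mat_fact (n := n) x z₀ f
    (fun i => ((g^[i] ⟨y, hy1⟩ : 𝒮 1) : S)) hfy.symm (by
      intro i
      rw [Function.iterate_succ_apply', hg])
  have hmapA : (bidiag n x z₀).map q = bidiag n (q x) (q z₀) := by
    ext i j
    simp only [bidiag, Matrix.map_apply, Matrix.of_apply]
    split_ifs <;> simp
  have hqf : q f = 0 := Ideal.Quotient.eq_zero_iff_mem.2 (Ideal.mem_span_singleton_self f)
  have hmz : (f • (1 : Matrix (Fin n) (Fin n) S)).map q = 0 := by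
    ext i j
    simp [hqf]
  have hABt : (bidiag n x z₀).transpose * B.transpose = f • 1 := by
    rw [← Matrix.transpose_mul, hBA]; simp
  have hBAt : B.transpose * (bidiag n x z₀).transpose = f • 1 := by
    rw [← Matrix.transpose_mul, hAB]; simp
  refine gdim_mat (bidiag n (q x) (q z₀)) (B.map q) ?_ ?_ ?_ ?_ ?_ ?_ π hπ hk
  · rw [← hmapA, ← Matrix.map_mul, hAB, hmz]
  · rw [← hmapA, ← Matrix.map_mul, hBA, hmz]
  · rw [← hmapA]; exact mat_exact f hfnzd _ _ hAB hBA
  · rw [← hmapA]; exact mat_exact f hfnzd _ _ hBA hAB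
  · rw [← hmapA]; exact mat_exact f hfnzd _ _ hABt hBAt
  · rw [← hmapA]; exact mat_exact f hfnzd _ _ hBAt hABt
end
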